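/- arXiv:0909.4760 — 2 statements merged into one kernel-verified Lean document; each statement's English description precedes it below -/
import Mathlib

section
/- (Freiheitssatz for staggered presentations.) Let X be a set, let A ⊆ X, and let w_1, …, w_m be nonempty reduced, cyclically reduced words over X such that each w_j contains at least one occurrence of a letter of X ∖ A. Suppose there is a linear order on X ∖ A such that, writing M_j (respectively m_j) for the largest (respectively smallest) element of X ∖ A occurring in w_j, one has: for all i < j, M_i < M_j and m_i < m_j (so the presentation ⟨X ∣ w_1, …, w_m⟩ is staggered over A with the relators ordered by their indices). Let G = ⟨X ∣ w_1, …, w_m⟩. Then the homomorphism from the free group on A to G induced by the inclusion A ↪ X is injective. -/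
/-- A word over the alphabet `α` (a list of letters with exponents `±1`) is *reduced*
if it contains no adjacent pair of the form `(s, e) (s, ¬e)`. -/
def WordReduced {α : Type*} (w : List (α × Bool)) : Prop :=
  List.Chain' (fun p q => ¬(p.1 = q.1 ∧ p.2 = !q.2)) w

/-- A word is *cyclically reduced* if it is reduced and, in addition, its last letter
is not the inverse of its first letter. -/
def WordCyclicallyReduced {α : Type*} (w : List (α × Bool)) : Prop :=
  WordReduced w ∧
    ∀ x ∈ w.getLast?, ∀ y ∈ w.head?, ¬(x.1 = (y : α × Bool).1 ∧ x.2 = !y.2)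

/-- The letter `x` *occurs* in the word `w` if `w` contains `(x, +1)` or `(x, -1)`. -/
def OccursIn {α : Type*} (x : α) (w : List (α × Bool)) : Prop :=
  ∃ e : Bool, (x, e) ∈ w

universe u

/-- The subgroup of the free group generated by the letters in `S`. -/
def LetterSub {X : Type u} (S : Set X) : Subgroup (FreeGroup X) :=
  Subgroup.closure (FreeGroup.of '' S)

/-- The letters of `S` freely generate a free subgroup modulo the relators `R`. -/
def FreeOn {X : Type u} (S : Set X) (R : Set (FreeGroup X)) : Prop :=
  ∀ g ∈ LetterSub S, g ∈ Subgroup.normalClosure R → g = 1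

theorem LetterSub.mono {X : Type u} {S T : Set X} (h : S ⊆ T) : LetterSub S ≤ LetterSub T :=
  Subgroup.closure_mono (Set.image_mono h)

theorem FreeOn.mono {X : Type u} {S T : Set X} {R : Set (FreeGroup X)} (h : S ⊆ T)
    (hT : FreeOn T R) : FreeOn S R :=
  fun g hg hR => hT g (LetterSub.mono h hg) hR

theorem hom_eq_on_letterSub {X : Type u} {S : Set X} {K : Type*} [Group K]
    (f g : FreeGroup X →* K) (h : ∀ x ∈ S, f (FreeGroup.of x) = g (FreeGroup.of x))
    {y : FreeGroup X} (hy : y ∈ LetterSub S) : f y = g y := by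
  have : LetterSub S ≤ MonoidHom.eqLocus f g := by
    unfold LetterSub
    rw [Subgroup.closure_le]
    rintro _ ⟨x, hx, rfl⟩
    exact h x hx
  exact this hy

theorem mk_mem_letterSub {X : Type u} {S : Set X} (w : List (X × Bool))
    (h : ∀ p ∈ w, p.1 ∈ S) : FreeGroup.mk w ∈ LetterSub S := by
  induction w with
  | nil => exact one_mem _
  | cons p w ih =>
    have : FreeGroup.mk (p :: w) = FreeGroup.mk [p] * FreeGroup.mk w := by
      rw [FreeGroup.mul_mk]; rfl
    rw [this]
    refine mul_mem ?_ (ih fun q hq => h q (List.mem_cons_of_mem _ hq))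
    have hp : FreeGroup.of p.1 ∈ LetterSub S :=
      Subgroup.subset_closure ⟨_, h p List.mem_cons_self, rfl⟩
    obtain ⟨a, e⟩ := p
    cases e
    · exact inv_mem hp
    · exact hp

theorem amalgam {X : Type u} (L R : Set X) (RL RR : Set (FreeGroup X))
    (hRL : ∀ r ∈ RL, r ∈ LetterSub L) (hRR : ∀ r ∈ RR, r ∈ LetterSub R)
    (hL : FreeOn (L ∩ R) RL) (hR : FreeOn (L ∩ R) RR)
    (g : FreeGroup X) (hg : g ∈ LetterSub R) (hgn : g ∈ Subgroup.normalClosure (RL ∪ RR)) :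
    g ∈ Subgroup.normalClosure RR := by
  classical
  let Q : Bool → Set (FreeGroup X) := fun b => cond b RL RR
  let φ : ∀ b : Bool, LetterSub (L ∩ R) →* FreeGroup X ⧸ Subgroup.normalClosure (Q b) :=
    fun b => (QuotientGroup.mk' _).comp (Subgroup.subtype _)
  have hφ : ∀ b, Function.Injective (φ b) := by
    intro b
    rw [injective_iff_map_eq_one]
    rintro ⟨a, ha⟩ h
    have h' : a ∈ Subgroup.normalClosure (Q b) := (QuotientGroup.eq_one_iff a).1 h
    apply Subtype.ext
    cases b
    · exact hR a ha h'
    · exact hL a ha h'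
  let j : ∀ b : Bool, FreeGroup X →* Monoid.PushoutI φ :=
    fun b => (Monoid.PushoutI.of b).comp (QuotientGroup.mk' (Subgroup.normalClosure (Q b)))
  have hj : ∀ (b : Bool) (y : FreeGroup X), y ∈ Subgroup.normalClosure (Q b) → j b y = 1 := by
    intro b y hy
    have : (QuotientGroup.mk' (Subgroup.normalClosure (Q b))) y = 1 :=
      (QuotientGroup.eq_one_iff y).2 hy
    exact (congrArg (Monoid.PushoutI.of b) this).trans (map_one _)
  let f : FreeGroup X →* Monoid.PushoutI φ :=
    FreeGroup.lift fun x => if x ∈ L then j true (FreeGroup.of x) else j false (FreeGroup.of x)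
  have fL : ∀ y ∈ LetterSub L, f y = j true y := fun y hy => by
    refine hom_eq_on_letterSub _ _ (fun x hx => ?_) hy
    simp [f, hx]
  have fR : ∀ y ∈ LetterSub R, f y = j false y := fun y hy => by
    refine hom_eq_on_letterSub _ _ (fun x hx => ?_) hy
    by_cases hxL : x ∈ L
    · have hx' : FreeGroup.of x ∈ LetterSub (L ∩ R) :=
        Subgroup.subset_closure ⟨x, ⟨hxL, hx⟩, rfl⟩
      have h1 := Monoid.PushoutI.of_apply_eq_base φ true ⟨_, hx'⟩
      have h2 := Monoid.PushoutI.of_apply_eq_base φ false ⟨_, hx'⟩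
      have h3 : f (FreeGroup.of x) = j true (FreeGroup.of x) := by simp [f, hxL]
      rw [h3]
      exact h1.trans h2.symm
    · simp [f, hxL]
  have hker : Subgroup.normalClosure (RL ∪ RR) ≤ f.ker := by
    apply Subgroup.normalClosure_le_normal
    rintro r (hr | hr)
    · exact (fL r (hRL r hr)).trans (hj true r (Subgroup.subset_normalClosure hr))
    · exact (fR r (hRR r hr)).trans (hj false r (Subgroup.subset_normalClosure hr))
  have h1 : j false g = 1 := (fR g hg).symm.trans (hker hgn)
  have h2 := Monoid.PushoutI.of_injective hφ false (h1.trans (map_one _).symm)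
  exact (QuotientGroup.eq_one_iff g).1 h2

theorem chain_free {X : Type u} (r : ℕ → FreeGroup X) (lo lo' hi : ℕ → Set X) (m : ℕ)
    (h1 : ∀ i j, i < j → j ≤ m → r i ∈ LetterSub (hi j))
    (h2 : ∀ j ≤ m, r j ∈ LetterSub (lo j))
    (h3 : ∀ j ≤ m, FreeOn (hi j) {r j})
    (h4 : ∀ j ≤ m, FreeOn (lo' j) {r j})
    (h5 : ∀ j ≤ m, lo' j ⊆ lo j) (h6 : ∀ j < m, lo (j + 1) ⊆ lo' j) :
    FreeOn (lo' m) (r '' Set.Iic m) := by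
  induction m with
  | zero =>
    have : r '' Set.Iic 0 = {r 0} := by
      ext; simp [eq_comm]
    rw [this]
    exact h4 0 le_rfl
  | succ m ih =>
    have ih' := ih (fun i j hij hj => h1 i j hij (by omega)) (fun j hj => h2 j (by omega))
      (fun j hj => h3 j (by omega)) (fun j hj => h4 j (by omega)) (fun j hj => h5 j (by omega))
      (fun j hj => h6 j (by omega))
    have hset : r '' Set.Iic (m + 1) = r '' Set.Iic m ∪ {r (m + 1)} := by
      rw [← Set.image_singleton, ← Set.image_union]
      congr 1
      ext i; simp; omega
    intro g hg hgn
    rw [hset] at hgn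
    refine h4 (m + 1) le_rfl g hg ?_
    refine amalgam (hi (m + 1)) (lo (m + 1)) _ _ ?_ ?_ ?_ ?_ g
      (LetterSub.mono (h5 _ le_rfl) hg) hgn
    · rintro _ ⟨i, hi', rfl⟩
      exact h1 i (m + 1) (Nat.lt_succ_of_le hi') le_rfl
    · rintro _ rfl
      exact h2 _ le_rfl
    · exact ih'.mono (Set.inter_subset_right.trans (h6 m (by omega)))
    · exact (h3 _ le_rfl).mono Set.inter_subset_left

theorem syllables {X : Type u} (g : FreeGroup X) :
    ∃ l : List (X × ℤ), l.IsChain (fun p q => p.1 ≠ q.1) ∧ (∀ p ∈ l, p.2 ≠ 0) ∧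
      g = (l.map fun p => FreeGroup.of p.1 ^ p.2).prod := by
  have key : ∀ (a : X) (k : ℤ), k ≠ 0 → ∀ h : FreeGroup X,
      (∃ l : List (X × ℤ), l.IsChain (fun p q => p.1 ≠ q.1) ∧ (∀ p ∈ l, p.2 ≠ 0) ∧
        h = (l.map fun p => FreeGroup.of p.1 ^ p.2).prod) →
      (∃ l : List (X × ℤ), l.IsChain (fun p q => p.1 ≠ q.1) ∧ (∀ p ∈ l, p.2 ≠ 0) ∧
        FreeGroup.of a ^ k * h = (l.map fun p => FreeGroup.of p.1 ^ p.2).prod) := by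
    rintro a k hk _ ⟨l, hc, hn, rfl⟩
    rcases l with _ | ⟨⟨b, e⟩, l⟩
    · exact ⟨[(a, k)], by simp, by simpa using hk, by simp⟩
    · by_cases hab : a = b
      · subst hab
        by_cases hz : k + e = 0
        · refine ⟨l, hc.tail, fun p hp => hn p (List.mem_cons_of_mem _ hp), ?_⟩
          simp only [List.map_cons, List.prod_cons]
          rw [← mul_assoc, ← zpow_add, hz, zpow_zero, one_mul]
        · refine ⟨(a, k + e) :: l, ?_, ?_, ?_⟩
          · rw [List.isChain_cons] at hc ⊢
            exact hc
          · intro p hp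
            rcases List.mem_cons.1 hp with rfl | hp
            · exact hz
            · exact hn p (List.mem_cons_of_mem _ hp)
          · simp only [List.map_cons, List.prod_cons]
            rw [← mul_assoc, ← zpow_add]
      · refine ⟨(a, k) :: (b, e) :: l, ?_, ?_, ?_⟩
        · rw [List.isChain_cons_cons]
          exact ⟨hab, hc⟩
        · intro p hp
          rcases List.mem_cons.1 hp with rfl | hp
          · exact hk
          · exact hn p hp
        · simp
  rcases g with ⟨w⟩
  change ∃ l : List (X × ℤ), _ ∧ _ ∧ FreeGroup.mk w = _
  induction w with
  | nil => exact ⟨[], by simp, by simp, by simp [FreeGroup.one_eq_mk]⟩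
  | cons p w ih =>
    have : FreeGroup.mk (p :: w) = FreeGroup.mk [p] * FreeGroup.mk w := by
      rw [FreeGroup.mul_mk]; rfl
    rw [this]
    obtain ⟨a, e⟩ := p
    cases e
    · have := key a (-1) (by norm_num) _ ih
      rw [zpow_neg_one] at this
      exact this
    · have := key a 1 (by norm_num) _ ih
      rw [zpow_one] at this
      exact this

/-- Strictly upper triangular matrices. -/
def StrictUp {n : ℕ} {R : Type*} [CommRing R] (M : Matrix (Fin n) (Fin n) R) : Prop :=
  ∀ i j, ¬ i < j → M i j = 0

theorem StrictUp.add {n : ℕ} {R : Type*} [CommRing R] {M N : Matrix (Fin n) (Fin n) R}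
    (hM : StrictUp M) (hN : StrictUp N) : StrictUp (M + N) := fun i j h => by
  simp [hM i j h, hN i j h]

theorem StrictUp.mul {n : ℕ} {R : Type*} [CommRing R] {M N : Matrix (Fin n) (Fin n) R}
    (hM : StrictUp M) (hN : StrictUp N) : StrictUp (M * N) := fun i j h => by
  rw [Matrix.mul_apply]
  refine Finset.sum_eq_zero fun k _ => ?_
  by_cases h1 : i < k
  · rw [hN k j (fun h2 => h (h1.trans h2)), mul_zero]
  · rw [hM i k h1, zero_mul]

theorem StrictUp.pow_apply {n : ℕ} {R : Type*} [CommRing R] {M : Matrix (Fin n) (Fin n) R}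
    (hM : StrictUp M) (k : ℕ) : ∀ i j : Fin n, (j : ℕ) < i + k → (M ^ k) i j = 0 := by
  induction k with
  | zero =>
    intro i j h
    have : i ≠ j := by rintro rfl; simp at h
    simp [this]
  | succ k ih =>
    intro i j h
    rw [pow_succ, Matrix.mul_apply]
    refine Finset.sum_eq_zero fun l _ => ?_
    by_cases h1 : l < j
    · rw [ih i l (by have : (l : ℕ) < j := h1; omega), zero_mul]
    · rw [hM l j h1, mul_zero]

theorem StrictUp.pow_eq_zero {n : ℕ} {R : Type*} [CommRing R] {M : Matrix (Fin n) (Fin n) R}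
    (hM : StrictUp M) (k : ℕ) (hk : n ≤ k) : M ^ k = 0 := by
  ext i j
  exact hM.pow_apply k i j (by omega)

/-- The group of upper unitriangular matrices. -/
def UniTri (n : ℕ) (R : Type*) [CommRing R] : Subgroup (Matrix (Fin n) (Fin n) R)ˣ where
  carrier := {u | StrictUp ((u : Matrix (Fin n) (Fin n) R) - 1) ∧
    StrictUp (((u⁻¹ : (Matrix (Fin n) (Fin n) R)ˣ) : Matrix (Fin n) (Fin n) R) - 1)}
  one_mem' := by
    constructor <;> intro i j _ <;> simp
  inv_mem' := by
    rintro u ⟨h1, h2⟩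
    exact ⟨h2, by simpa using h1⟩
  mul_mem' := by
    rintro u v ⟨h1, h2⟩ ⟨h3, h4⟩
    have key : ∀ a b : Matrix (Fin n) (Fin n) R,
        a * b - 1 = (a - 1) * (b - 1) + ((a - 1) + (b - 1)) := by
      intro a b; noncomm_ring
    constructor
    · rw [Units.val_mul, key]
      exact (h1.mul h3).add (h1.add h3)
    · rw [mul_inv_rev, Units.val_mul, key]
      exact (h4.mul h2).add (h4.add h2)

theorem uniTri_isPGroup (n p : ℕ) [Fact p.Prime] : IsPGroup p (UniTri n (ZMod p)) := by
  rintro ⟨u, hu, hu'⟩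
  refine ⟨n, ?_⟩
  apply Subtype.ext
  apply Units.ext
  rcases Nat.eq_zero_or_pos n with rfl | hn
  · exact Subsingleton.elim _ _
  have : Nonempty (Fin n) := ⟨⟨0, hn⟩⟩
  have h := sub_pow_char_pow_of_commute (R := Matrix (Fin n) (Fin n) (ZMod p)) (p := p) (n := n)
    (Commute.one_right (u : Matrix (Fin n) (Fin n) (ZMod p)))
  rw [hu.pow_eq_zero _ (Nat.lt_pow_self (Fact.out : p.Prime).one_lt).le, one_pow] at h
  simpa using (sub_eq_zero.1 h.symm)

theorem residual_p {X : Type u} (g : FreeGroup X) (hg : g ≠ 1) (s : ℤ) (hs : s ≠ 0) :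
    ∃ p : ℕ, p.Prime ∧ ¬ (p : ℤ) ∣ s ∧ ∃ (P : Type) (_ : Group P), IsPGroup p P ∧
      Group.IsNilpotent P ∧ ∃ θ : X → P, FreeGroup.lift θ g ≠ 1 := by
  classical
  obtain ⟨l, hc, hn, hl⟩ := syllables g
  have hN : s * (l.map Prod.snd).prod ≠ 0 := by
    refine mul_ne_zero hs ?_
    rw [Ne, List.prod_eq_zero_iff]
    intro h
    obtain ⟨p, hp, h0⟩ := List.mem_map.1 h
    exact hn p hp h0
  obtain ⟨p, hpN, hp⟩ := Nat.exists_infinite_primes ((s * (l.map Prod.snd).prod).natAbs + 1)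
  have hdiv : ¬ (p : ℤ) ∣ s * (l.map Prod.snd).prod := by
    intro h
    have := Nat.le_of_dvd (Int.natAbs_pos.2 hN) (Int.natCast_dvd.1 h)
    omega
  have : Fact p.Prime := ⟨hp⟩
  refine ⟨p, hp, fun h => hdiv (h.mul_right _), UniTri (l.length + 1) (ZMod p), inferInstance,
    uniTri_isPGroup _ _, (uniTri_isPGroup _ _).isNilpotent, ?_⟩
  let N : X → Matrix (Fin (l.length + 1)) (Fin (l.length + 1)) (ZMod p) := fun a j k =>
    if (k : ℕ) = j + 1 ∧ l[(j : ℕ)]?.map Prod.fst = some a then 1 else 0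
  have hNup : ∀ a, StrictUp (N a) := by
    intro a i j hij
    have : ¬ ((j : ℕ) = i + 1) := fun h => hij (by rw [Fin.lt_def]; omega)
    simp [N, this]
  have hN2 : ∀ a, N a * N a = 0 := by
    intro a
    ext i j
    rw [Matrix.mul_apply]
    refine Finset.sum_eq_zero fun k _ => ?_
    by_cases h1 : (k : ℕ) = i + 1 ∧ l[(i : ℕ)]?.map Prod.fst = some a
    · by_cases h2 : (j : ℕ) = k + 1 ∧ l[(k : ℕ)]?.map Prod.fst = some a
      · exfalso
        obtain ⟨h1, h3⟩ := h1
        obtain ⟨h2, h4⟩ := h2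
        rw [h1] at h4
        obtain ⟨b, hb, hb'⟩ := Option.map_eq_some_iff.1 h3
        obtain ⟨c, hc1, hc'⟩ := Option.map_eq_some_iff.1 h4
        obtain ⟨hlt, rfl⟩ := List.getElem?_eq_some_iff.1 hb
        obtain ⟨hlt', rfl⟩ := List.getElem?_eq_some_iff.1 hc1
        exact (List.isChain_iff_getElem.1 hc i hlt') (hb'.trans hc'.symm)
      · have : N a k j = 0 := if_neg h2
        rw [this, mul_zero]
    · have : N a i k = 0 := if_neg h1
      rw [this, zero_mul]
  let U : X → (Matrix (Fin (l.length + 1)) (Fin (l.length + 1)) (ZMod p))ˣ := fun a =>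
    ⟨1 + N a, 1 - N a, by rw [mul_sub, add_mul, add_mul, hN2]; simp,
      by rw [sub_mul, mul_add, mul_add, hN2]; simp⟩
  have hU : ∀ a, U a ∈ UniTri (l.length + 1) (ZMod p) := by
    intro a
    constructor
    · have : ((U a : Matrix _ _ _) - 1) = N a := by simp [U]
      rw [this]; exact hNup a
    · have : (((U a)⁻¹ : (Matrix (Fin (l.length + 1)) (Fin (l.length + 1)) (ZMod p))ˣ) :
        Matrix _ _ _) - 1 = - N a := by
        change (1 - N a) - 1 = - N a
        abel
      rw [this]
      intro i j h
      simp [hNup a i j h]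
  have hUpow : ∀ a (e : ℤ), ((U a ^ e : (Matrix (Fin (l.length + 1)) (Fin (l.length + 1))
      (ZMod p))ˣ) : Matrix _ _ _) = 1 + (e : ZMod p) • N a := by
    intro a e
    induction e using Int.induction_on with
    | zero => simp
    | succ i ih =>
      rw [zpow_add_one, Units.val_mul, ih]
      change _ * (1 + N a) = _
      simp only [add_mul, mul_add, smul_mul_assoc, hN2]
      push_cast
      rw [add_smul]
      simp
      abel
    | pred i ih =>
      rw [zpow_sub_one, Units.val_mul, ih]
      change _ * (1 - N a) = _
      simp only [add_mul, mul_sub, smul_mul_assoc, hN2]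
      push_cast
      rw [sub_smul]
      simp
      abel
  refine ⟨fun a => ⟨U a, hU a⟩, fun hone => ?_⟩
  have hval : ((FreeGroup.lift (fun a => (⟨U a, hU a⟩ : UniTri (l.length + 1) (ZMod p))) g :
      UniTri (l.length + 1) (ZMod p)) : (Matrix (Fin (l.length + 1)) (Fin (l.length + 1))
      (ZMod p))ˣ) = FreeGroup.lift U g := by
    have : (Subgroup.subtype _).comp
      (FreeGroup.lift (fun a => (⟨U a, hU a⟩ : UniTri (l.length + 1) (ZMod p))))
      = FreeGroup.lift U := by
      ext a; simp
    exact DFunLike.congr_fun this g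
  rw [hone] at hval
  let z : Fin (l.length + 1) → ZMod p := fun j => if (j : ℕ) = l.length then 1 else 0
  have hcol : ∀ (suf pre : List (X × ℤ)), l = pre ++ suf →
      (∀ j : Fin (l.length + 1), (j : ℕ) < pre.length → ((suf.map fun q =>
        (1 + (q.2 : ZMod p) • N q.1)).prod.mulVec z) j = 0) ∧
      (∀ j : Fin (l.length + 1), (j : ℕ) = pre.length → ((suf.map fun q =>
        (1 + (q.2 : ZMod p) • N q.1)).prod.mulVec z) j = ((suf.map Prod.snd).prod : ℤ)) := by
    intro suf
    induction suf with
    | nil =>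
      intro pre h
      have hlen : pre.length = l.length := by rw [h]; simp
      constructor
      · intro j hj
        simp [z]; omega
      · intro j hj
        simp [z]; omega
    | cons q suf ih =>
      intro pre h
      have hlen : l.length = pre.length + (suf.length + 1) := by rw [h]; simp
      obtain ⟨ih1, ih2⟩ := ih (pre ++ [q]) (by simp [h])
      simp only [List.length_append, List.length_singleton] at ih1 ih2
      simp only [List.map_cons, List.prod_cons]
      generalize hv : (suf.map fun q => (1 + (q.2 : ZMod p) • N q.1)).prod.mulVec z = v at ih1 ih2
      simp only [← Matrix.mulVec_mulVec, hv, Matrix.add_mulVec, Matrix.one_mulVec,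
        Matrix.smul_mulVec, Pi.add_apply, Pi.smul_apply]
      constructor
      · intro j hj
        rw [ih1 j (by omega)]
        have : (N q.1).mulVec v j = 0 := by
          rw [Matrix.mulVec, dotProduct]
          refine Finset.sum_eq_zero fun k _ => ?_
          by_cases hk : (k : ℕ) = j + 1
          · rw [ih1 k (by omega), mul_zero]
          · simp [N, hk]
        simp [this]
      · intro j hj
        rw [ih1 j (by omega)]
        have : (N q.1).mulVec v j = ((suf.map Prod.snd).prod : ℤ) := by
          rw [Matrix.mulVec, dotProduct, Finset.sum_eq_single (⟨j + 1, by omega⟩ :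
            Fin (l.length + 1))]
          · rw [ih2 _ (by simp [hj])]
            have : l[(j : ℕ)]?.map Prod.fst = some q.1 := by
              rw [hj, h]; simp
            have hN1 : N q.1 j ⟨j + 1, by omega⟩ = 1 := if_pos ⟨rfl, this⟩
            rw [hN1, one_mul]
          · intro k _ hk
            have : ¬ (k : ℕ) = j + 1 := fun h => hk (Fin.ext h)
            simp [N, this]
          · simp
        rw [this]
        push_cast
        simp
  have hend := (hcol l [] rfl).2 ⟨0, by omega⟩ rfl
  have hprod : (l.map fun q => (1 + (q.2 : ZMod p) • N q.1)).prod = 1 := by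
    have h1 : FreeGroup.lift U g = (l.map fun q => U q.1 ^ q.2).prod := by
      rw [hl, map_list_prod, List.map_map]
      congr 1
      apply List.map_congr_left
      intro q _
      simp
    rw [h1] at hval
    have h2 := congrArg (Units.coeHom (Matrix (Fin (l.length + 1)) (Fin (l.length + 1))
      (ZMod p))) hval
    rw [map_list_prod, List.map_map] at h2
    rw [show (l.map fun q => (1 + (q.2 : ZMod p) • N q.1)) =
      l.map (⇑(Units.coeHom (Matrix (Fin (l.length + 1)) (Fin (l.length + 1)) (ZMod p))) ∘
        fun q => U q.1 ^ q.2) from List.map_congr_left fun q _ => (hUpow q.1 q.2).symm]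
    exact h2.symm
  rw [hprod, Matrix.one_mulVec] at hend
  have hl0 : l ≠ [] := by
    rintro rfl
    exact hg (by simpa using hl)
  have hz0 : z ⟨0, by omega⟩ = 0 := by
    have : ¬ 0 = l.length := fun h => hl0 (List.length_eq_zero_iff.1 h.symm)
    simp only [z]
    rw [if_neg this]
  rw [hz0] at hend
  exact hdiv (((ZMod.intCast_zmod_eq_zero_iff_dvd _ p).1 hend.symm).mul_left s)

open Classical in
/-- Exponent sum homomorphism of the letter `x`. -/
noncomputable def expo {X : Type u} (x : X) : FreeGroup X →* Multiplicative ℤ :=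
  FreeGroup.lift fun y => if y = x then Multiplicative.ofAdd 1 else 1

open Classical in
theorem solve_p {X : Type u} (x : X) (w : FreeGroup X) (p : ℕ) (hp : p.Prime)
    (hw : ¬ (p : ℤ) ∣ Multiplicative.toAdd (expo x w)) (P : Type) [Group P] [Group.IsNilpotent P] :
    IsPGroup p P → ∀ θ : X → P, ∃ c : P, FreeGroup.lift (Function.update θ x c) w = 1 := by
  refine Group.nilpotent_center_quotient_ind (P := fun G _ _ => IsPGroup p G →
    ∀ θ : X → G, ∃ c : G, FreeGroup.lift (Function.update θ x c) w = 1) P ?_ ?_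
  · intro G _ _ _ θ
    exact ⟨1, Subsingleton.elim _ _⟩
  · intro G _ _ ih hG θ
    obtain ⟨c, hc⟩ := ih (hG.to_quotient _) (fun y => (θ y : G ⧸ Subgroup.center G))
    obtain ⟨c, rfl⟩ := QuotientGroup.mk_surjective c
    set z := FreeGroup.lift (Function.update θ x c) w with hz
    have hzc : z ∈ Subgroup.center G := by
      rw [← QuotientGroup.eq_one_iff, ← hc]
      have : (QuotientGroup.mk' (Subgroup.center G)).comp (FreeGroup.lift (Function.update θ x c))
          = FreeGroup.lift (Function.update (fun y => (θ y : G ⧸ Subgroup.center G)) x c) := by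
        ext y
        by_cases h : y = x
        · subst h; simp
        · simp [h]
      exact DFunLike.congr_fun this w
    have key : ∀ d ∈ Subgroup.center G, FreeGroup.lift (Function.update θ x (c * d)) w
        = z * d ^ (Multiplicative.toAdd (expo x w)) := by
      intro d hd
      have hcomm : ∀ g : G, d * g = g * d := fun g => (Subgroup.mem_center_iff.1 hd g).symm
      let f : FreeGroup X →* G :=
        { toFun := fun u => FreeGroup.lift (Function.update θ x c) u *
            d ^ (Multiplicative.toAdd (expo x u))
          map_one' := by simp
          map_mul' := by
            intro u v
            simp only [map_mul, toAdd_mul, zpow_add]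
            have : Commute (d ^ Multiplicative.toAdd (expo x u))
              (FreeGroup.lift (Function.update θ x c) v) :=
              Commute.zpow_left (hcomm _) _
            rw [mul_assoc, mul_assoc, ← mul_assoc (FreeGroup.lift (Function.update θ x c) v),
              ← this.eq]
            simp only [mul_assoc] }
      have : FreeGroup.lift (Function.update θ x (c * d)) = f := by
        ext y
        by_cases h : y = x
        · subst h; simp [f, expo]
        · simp [f, h, expo]
      exact DFunLike.congr_fun this w
    generalize Multiplicative.toAdd (expo x w) = s at hw key
    obtain ⟨k, hk⟩ := hG z
    have hcop : IsCoprime (s : ℤ) ((p ^ k : ℕ) : ℤ) := by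
      push_cast
      refine IsCoprime.pow_right ?_
      exact ((Nat.prime_iff_prime_int.1 hp).coprime_iff_not_dvd.2 hw).symm
    obtain ⟨a, b, hab⟩ := hcop
    refine ⟨c * (z ^ (-a)), ?_⟩
    rw [key _ (Subgroup.zpow_mem _ hzc _), ← zpow_mul]
    have h1 : z * z ^ (-a * s) = z ^ (b * ((p ^ k : ℕ) : ℤ)) := by
      rw [← zpow_one_add]
      congr 1
      linarith
    rw [h1, mul_comm b, zpow_mul, zpow_natCast, hk, one_zpow]

theorem freeOn_of_expo_ne {X : Type u} (x : X) (w : FreeGroup X)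
    (hw : Multiplicative.toAdd (expo x w) ≠ 0) : FreeOn {y | y ≠ x} {w} := by
  classical
  intro g hg hgn
  by_contra hne
  obtain ⟨p, hp, hdiv, P, _, hP, hnil, θ, hθ⟩ := residual_p g hne _ hw
  obtain ⟨c, hc⟩ := solve_p x w p hp hdiv P hP θ
  apply hθ
  have h1 : FreeGroup.lift (Function.update θ x c) g = FreeGroup.lift θ g := by
    refine hom_eq_on_letterSub _ _ (fun y hy => ?_) hg
    have : y ≠ x := hy
    simp [this]
  rw [← h1]
  have hker : Subgroup.normalClosure {w} ≤ (FreeGroup.lift (Function.update θ x c)).ker := by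
    apply Subgroup.normalClosure_le_normal
    rintro _ rfl
    exact hc
  exact MonoidHom.mem_ker.1 (hker hgn)

theorem normalClosure_directed {G : Type*} [Group G] (R : ℕ → Set G) (hR : Monotone R) (g : G)
    (hg : g ∈ Subgroup.normalClosure (⋃ k, R k)) : ∃ k, g ∈ Subgroup.normalClosure (R k) := by
  have hdir : Directed (· ≤ ·) fun k => Subgroup.normalClosure (R k) :=
    Monotone.directed_le fun a b h => Subgroup.normalClosure_mono (hR h)
  have hn : (⨆ k, Subgroup.normalClosure (R k)).Normal := by
    constructor
    intro n hn y
    rw [Subgroup.mem_iSup_of_directed hdir] at hn ⊢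
    obtain ⟨k, hk⟩ := hn
    exact ⟨k, Subgroup.normalClosure_normal.conj_mem _ hk y⟩
  have hle : Subgroup.normalClosure (⋃ k, R k) ≤ ⨆ k, Subgroup.normalClosure (R k) := by
    apply Subgroup.normalClosure_le_normal
    intro y hy
    obtain ⟨k, hk⟩ := Set.mem_iUnion.1 hy
    exact (le_iSup (fun k => Subgroup.normalClosure (R k)) k) (Subgroup.subset_normalClosure hk)
  exact (Subgroup.mem_iSup_of_directed hdir).1 (hle hg)

theorem stag_int {Y : Type u} {Z : Type*} [LinearOrder Z] (key : Y → Z) (r : ℤ → FreeGroup Y)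
    (M μ : ℤ → Z) (hM : StrictMono M) (hμ : StrictMono μ)
    (hr : ∀ j, r j ∈ LetterSub {y | μ j ≤ key y ∧ key y ≤ M j})
    (hup : ∀ j, FreeOn {y | key y < M j} {r j}) (hdn : ∀ j, FreeOn {y | μ j < key y} {r j})
    (j : ℤ) : FreeOn {y | μ j < key y ∧ key y < M (j + 1)} (Set.range r) := by
  have up : ∀ K : ℕ, FreeOn {y | μ j < key y} (r '' Set.Icc (j - K) j) := by
    intro K
    have h := chain_free (fun i : ℕ => r (j - K + i)) (fun i => {y | μ (j - K + i) ≤ key y})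
      (fun i => {y | μ (j - K + i) < key y}) (fun i => {y | key y < M (j - K + i)}) K
      (fun a b hab _ => LetterSub.mono (fun y hy => lt_of_le_of_lt hy.2 (hM (by omega))) (hr _))
      (fun a _ => LetterSub.mono (fun y hy => hy.1) (hr _))
      (fun a _ => hup _) (fun a _ => hdn _) (fun a _ y hy => le_of_lt hy)
      (fun a _ y hy => lt_of_lt_of_le (hμ (by push_cast; omega)) hy)
    have e1 : j - K + (K : ℕ) = j := by omega
    have e2 : (fun i : ℕ => r (j - K + i)) '' Set.Iic K = r '' Set.Icc (j - K) j := by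
      ext g
      constructor
      · rintro ⟨i, hi, rfl⟩
        have : i ≤ K := hi
        exact ⟨_, ⟨by omega, by omega⟩, rfl⟩
      · rintro ⟨i, ⟨h1, h2⟩, rfl⟩
        refine ⟨(i - (j - K)).toNat, ?_, ?_⟩
        · change _ ≤ K
          omega
        · change r _ = r _
          congr 1
          omega
    rw [e2] at h
    simp only [e1] at h
    exact h
  have dn : ∀ K : ℕ, FreeOn {y | key y < M (j + 1)} (r '' Set.Icc (j + 1) (j + 1 + K)) := by
    intro K
    have h := chain_free (fun i : ℕ => r (j + 1 + K - i))
      (fun i => {y | key y ≤ M (j + 1 + K - i)})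
      (fun i => {y | key y < M (j + 1 + K - i)}) (fun i => {y | μ (j + 1 + K - i) < key y}) K
      (fun a b hab _ => LetterSub.mono (fun y hy => lt_of_lt_of_le (hμ (by omega)) hy.1) (hr _))
      (fun a _ => LetterSub.mono (fun y hy => hy.2) (hr _))
      (fun a _ => hdn _) (fun a _ => hup _) (fun a _ y hy => le_of_lt hy)
      (fun a _ y hy => lt_of_le_of_lt hy (hM (by push_cast; omega)))
    have e1 : j + 1 + K - (K : ℕ) = j + 1 := by omega
    have e2 : (fun i : ℕ => r (j + 1 + K - i)) '' Set.Iic K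
        = r '' Set.Icc (j + 1) (j + 1 + K) := by
      ext g
      constructor
      · rintro ⟨i, hi, rfl⟩
        have : i ≤ K := hi
        exact ⟨_, ⟨by omega, by omega⟩, rfl⟩
      · rintro ⟨i, ⟨h1, h2⟩, rfl⟩
        refine ⟨(j + 1 + K - i).toNat, ?_, ?_⟩
        · change _ ≤ K
          omega
        · change r _ = r _
          congr 1
          omega
    rw [e2] at h
    simp only [e1] at h
    exact h
  intro g hg hgn
  have hU : Set.range r = ⋃ K : ℕ, (r '' Set.Icc (j - K) j ∪ r '' Set.Icc (j + 1) (j + 1 + K)) := by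
    ext y
    simp only [Set.mem_iUnion]
    constructor
    · rintro ⟨i, rfl⟩
      refine ⟨(i - j).natAbs, ?_⟩
      by_cases h : i ≤ j
      · exact Or.inl ⟨i, ⟨by omega, h⟩, rfl⟩
      · exact Or.inr ⟨i, ⟨by omega, by omega⟩, rfl⟩
    · rintro ⟨K, ⟨i, _, rfl⟩ | ⟨i, _, rfl⟩⟩ <;> exact ⟨i, rfl⟩
  rw [hU] at hgn
  obtain ⟨K, hK⟩ := normalClosure_directed _ (by
    intro a b hab
    refine Set.union_subset_union (Set.image_mono (Set.Icc_subset_Icc_left (by omega)))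
      (Set.image_mono (Set.Icc_subset_Icc_right (by omega)))) g hgn
  refine dn K g (LetterSub.mono (fun y hy => hy.2) hg) ?_
  refine amalgam {y | key y < M (j + 1)} {y | μ j < key y} _ _ ?_ ?_ ?_ ?_ g
    (LetterSub.mono (fun y hy => hy.1) hg) hK
  · rintro _ ⟨i, hi, rfl⟩
    exact LetterSub.mono (fun y hy => lt_of_le_of_lt hy.2 (hM (by have := hi.2; omega))) (hr i)
  · rintro _ ⟨i, hi, rfl⟩
    exact LetterSub.mono (fun y hy => lt_of_lt_of_le (hμ (by have := hi.1; omega)) hy.1) (hr i)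
  · exact (up K).mono Set.inter_subset_right
  · exact (dn K).mono Set.inter_subset_left

/-- The sign of an exponent. -/
def sg (b : Bool) : ℤ := if b then 1 else -1

open Classical in
/-- The exponent sum of `x` in a word. -/
noncomputable def lsum {X : Type u} (x : X) : List (X × Bool) → ℤ
  | [] => 0
  | p :: w => (if p.1 = x then sg p.2 else 0) + lsum x w

open Classical in
/-- Magnus rewriting with respect to `x`, starting at level `k`. -/
noncomputable def rew {X : Type u} (x : X) : ℤ → List (X × Bool) → List ((ℤ × X) × Bool)
  | _, [] => []
  | k, p :: w => if p.1 = x then rew x (k + sg p.2) w else ((k, p.1), p.2) :: rew x k w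

theorem toAdd_expo_mk {X : Type u} (x : X) (w : List (X × Bool)) :
    Multiplicative.toAdd (expo x (FreeGroup.mk w)) = lsum x w := by
  induction w with
  | nil => simp [lsum, ← FreeGroup.one_eq_mk]
  | cons p w ih =>
    have : FreeGroup.mk (p :: w) = FreeGroup.mk [p] * FreeGroup.mk w := by
      rw [FreeGroup.mul_mk]; rfl
    rw [this, map_mul, toAdd_mul, ih, lsum]
    congr 1
    obtain ⟨a, e⟩ := p
    by_cases h : a = x <;> cases e <;> simp [expo, FreeGroup.lift_mk, h, sg]

theorem rew_append {X : Type u} (x : X) (u v : List (X × Bool)) (k : ℤ) :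
    rew x k (u ++ v) = rew x k u ++ rew x (k + lsum x u) v := by
  induction u generalizing k with
  | nil => simp [rew, lsum]
  | cons p u ih =>
    by_cases h : p.1 = x
    · simp [rew, lsum, h, ih, add_assoc]
    · simp [rew, lsum, h, ih]

theorem lsum_append {X : Type u} (x : X) (u v : List (X × Bool)) :
    lsum x (u ++ v) = lsum x u + lsum x v := by
  induction u with
  | nil => simp [lsum]
  | cons p u ih => simp [lsum, ih, add_assoc]

theorem rew_shift {X : Type u} (x : X) (w : List (X × Bool)) (k j : ℤ) :
    rew x (k + j) w = (rew x k w).map fun q => ((q.1.1 + j, q.1.2), q.2) := by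
  induction w generalizing k with
  | nil => simp [rew]
  | cons p u ih =>
    by_cases h : p.1 = x
    · simp only [rew, h, if_true]
      rw [← ih, add_right_comm]
    · simp [rew, h, ih]

theorem rew_length_le {X : Type u} (x : X) (w : List (X × Bool)) (k : ℤ) :
    (rew x k w).length ≤ w.length := by
  induction w generalizing k with
  | nil => simp [rew]
  | cons p u ih =>
    by_cases h : p.1 = x
    · simp only [rew, h, if_true, List.length_cons]
      exact (ih _).trans (Nat.le_succ _)
    · simpa [rew, h] using ih k

theorem rew_head {X : Type u} (x : X) (w : List (X × Bool)) (hw : FreeGroup.IsReduced w) (k : ℤ)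
    (q : (ℤ × X) × Bool) (hq : q ∈ (rew x k w).head?) :
    (q.1.1 = k ∧ q.1.2 ≠ x ∧ w.head? = some (q.1.2, q.2)) ∨
      ∃ e, w.head? = some (x, e) ∧ 0 < sg e * (q.1.1 - k) := by
  induction w generalizing k with
  | nil => simp [rew] at hq
  | cons p w ih =>
    obtain ⟨a, e⟩ := p
    by_cases h : a = x
    · subst h
      right
      refine ⟨e, rfl, ?_⟩
      simp only [rew, if_true] at hq
      rw [FreeGroup.IsReduced, List.isChain_cons] at hw
      rcases ih hw.2 _ hq with ⟨h1, -⟩ | ⟨e', h1, h2⟩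
      · rw [h1]
        cases e <;> simp [sg]
      · have he : e = e' := hw.1 (a, e') h1 rfl
        subst he
        cases e <;> simp [sg] at h2 ⊢ <;> omega
    · left
      simp only [rew, h, if_false, List.head?_cons, Option.mem_def, Option.some.injEq] at hq
      subst hq
      simp [h]

theorem rew_reduced {X : Type u} (x : X) (w : List (X × Bool)) (hw : FreeGroup.IsReduced w)
    (k : ℤ) : FreeGroup.IsReduced (rew x k w) := by
  induction w generalizing k with
  | nil => simp [rew]
  | cons p w ih =>
    obtain ⟨a, e⟩ := p
    have hw' := hw
    rw [FreeGroup.IsReduced, List.isChain_cons] at hw'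
    by_cases h : a = x
    · simp only [rew, h, if_true]
      exact ih hw'.2 _
    · simp only [rew, h, if_false]
      rw [FreeGroup.IsReduced, List.isChain_cons]
      refine ⟨fun q hq hqe => ?_, ih hw'.2 k⟩
      rcases rew_head x w hw'.2 k q hq with ⟨h1, -, h2⟩ | ⟨e', h1, h2⟩
      · refine hw'.1 _ h2 ?_
        exact congrArg Prod.snd hqe
      · have : k = q.1.1 := congrArg Prod.fst hqe
        simp [← this] at h2

theorem cyc_iff {X : Type u} (w : List (X × Bool)) :
    FreeGroup.IsCyclicallyReduced w ↔ FreeGroup.IsReduced (w ++ w) := by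
  rw [FreeGroup.isCyclicallyReduced_iff, FreeGroup.IsReduced, FreeGroup.IsReduced,
    List.isChain_append]
  tauto

theorem rew_cyc {X : Type u} (x : X) (w : List (X × Bool))
    (hw : FreeGroup.IsCyclicallyReduced w) (hs : lsum x w = 0) (k : ℤ) :
    FreeGroup.IsCyclicallyReduced (rew x k w) := by
  rw [cyc_iff] at hw ⊢
  have := rew_reduced x _ hw k
  rwa [rew_append, hs, add_zero] at this

theorem cyc_rotate {X : Type u} (u v : List (X × Bool))
    (h : FreeGroup.IsCyclicallyReduced (u ++ v)) : FreeGroup.IsCyclicallyReduced (v ++ u) := by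
  have h3 := (h.flatten_replicate 3).isReduced
  rw [cyc_iff]
  refine List.IsChain.infix h3 ⟨u, v, ?_⟩
  simp [List.replicate]

/-- The shift action of the integers on the letters. -/
def shiftEquiv (X : Type u) (k : ℤ) : ℤ × X ≃ ℤ × X :=
  (Equiv.addRight k).prodCongr (Equiv.refl X)

/-- The shift action of the integers on the free group. -/
def shiftHom (X : Type u) : Multiplicative ℤ →* MulAut (FreeGroup (ℤ × X)) where
  toFun k := FreeGroup.freeGroupCongr (shiftEquiv X (Multiplicative.toAdd k))
  map_one' := by
    apply MulEquiv.toMonoidHom_injective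
    ext y
    simp [shiftEquiv]
  map_mul' a b := by
    apply MulEquiv.toMonoidHom_injective
    ext ⟨i, c⟩
    simp [shiftEquiv, add_left_comm, add_comm]

open Classical in
/-- The Magnus homomorphism into the semidirect product. -/
noncomputable def magnusHom {X : Type u} (x : X) :
    FreeGroup X →* FreeGroup (ℤ × X) ⋊[shiftHom X] Multiplicative ℤ :=
  FreeGroup.lift fun y => if y = x then SemidirectProduct.inr (Multiplicative.ofAdd 1)
    else SemidirectProduct.inl (FreeGroup.of (0, y))

theorem shiftHom_of {X : Type u} (k i : ℤ) (a : X) :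
    shiftHom X (Multiplicative.ofAdd k) (FreeGroup.of (i, a)) = FreeGroup.of (i + k, a) := by
  simp [shiftHom, shiftEquiv]

theorem magnusHom_mk {X : Type u} (x : X) (w : List (X × Bool)) (k : ℤ) :
    SemidirectProduct.inr (Multiplicative.ofAdd k) * magnusHom x (FreeGroup.mk w) =
      SemidirectProduct.inl (FreeGroup.mk (rew x k w)) *
        SemidirectProduct.inr (Multiplicative.ofAdd (k + lsum x w)) := by
  induction w generalizing k with
  | nil => simp [rew, lsum, ← FreeGroup.one_eq_mk]
  | cons p w ih =>
    have hmk : ∀ {Y : Type u} (p : Y × Bool) (w : List (Y × Bool)),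
        FreeGroup.mk (p :: w) = FreeGroup.mk [p] * FreeGroup.mk w := by
      intro Y p w
      rw [FreeGroup.mul_mk]; rfl
    rw [hmk, map_mul, ← mul_assoc]
    obtain ⟨a, e⟩ := p
    by_cases h : a = x
    · have h1 : magnusHom x (FreeGroup.mk [(a, e)]) =
          SemidirectProduct.inr (Multiplicative.ofAdd (sg e)) := by
        cases e <;> simp [magnusHom, FreeGroup.lift_mk, h, sg]
      rw [h1, ← map_mul, ← ofAdd_add, ih]
      simp [rew, lsum, h, add_assoc]
    · have h1 : magnusHom x (FreeGroup.mk [(a, e)]) =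
          SemidirectProduct.inl (FreeGroup.mk [((0, a), e)]) := by
        cases e
        · simp only [magnusHom, FreeGroup.lift_mk]
          simp [h]
          rw [← map_inv]
          rfl
        · simp only [magnusHom, FreeGroup.lift_mk]
          simp [h]
          rfl
      have h2 : shiftHom X (Multiplicative.ofAdd k) (FreeGroup.mk [((0, a), e)]) =
          FreeGroup.mk [((k, a), e)] := by
        simp [shiftHom, shiftEquiv]
      have h3 : (SemidirectProduct.inr (Multiplicative.ofAdd k) :
          FreeGroup (ℤ × X) ⋊[shiftHom X] Multiplicative ℤ) *
          SemidirectProduct.inl (FreeGroup.mk [((0, a), e)]) =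
          SemidirectProduct.inl (FreeGroup.mk [((k, a), e)]) *
            SemidirectProduct.inr (Multiplicative.ofAdd k) := by
        rw [← h2, SemidirectProduct.inl_aut]
        simp
      rw [h1, h3, mul_assoc, ih, ← mul_assoc, ← map_mul, ← hmk]
      simp [rew, lsum, h]

theorem magnus_transfer {X : Type u} (x : X) (w : List (X × Bool)) (hs : lsum x w = 0)
    (g : FreeGroup X) (hg : g ∈ LetterSub {y | y ≠ x})
    (hgn : g ∈ Subgroup.normalClosure {FreeGroup.mk w}) :
    FreeGroup.map (fun a => ((0 : ℤ), a)) g ∈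
      Subgroup.normalClosure (Set.range fun j : ℤ => FreeGroup.mk (rew x j w)) := by
  set K := Subgroup.normalClosure (Set.range fun j : ℤ => FreeGroup.mk (rew x j w)) with hK
  have hinv : ∀ (k : ℤ) (y : FreeGroup (ℤ × X)), y ∈ K →
      shiftHom X (Multiplicative.ofAdd k) y ∈ K := by
    intro k
    have : K ≤ K.comap (shiftHom X (Multiplicative.ofAdd k)).toMonoidHom := by
      conv_lhs => rw [hK]
      apply Subgroup.normalClosure_le_normal
      rintro _ ⟨j, rfl⟩
      apply Subgroup.subset_normalClosure
      refine ⟨j + k, ?_⟩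
      simp only [rew_shift x w j k]
      simp [shiftHom, shiftEquiv]
      rfl
    exact fun y hy => this hy
  let K' : Subgroup (FreeGroup (ℤ × X) ⋊[shiftHom X] Multiplicative ℤ) :=
    K.map SemidirectProduct.inl
  have hK' : K'.Normal := by
    constructor
    rintro _ ⟨n, hn, rfl⟩ y
    refine ⟨y.left * shiftHom X y.right n * y.left⁻¹, ?_, ?_⟩
    · exact Subgroup.normalClosure_normal.conj_mem _ (hinv (Multiplicative.toAdd y.right) n hn) _
    · conv_rhs => rw [← SemidirectProduct.inl_left_mul_inr_right y]
      simp only [map_mul, map_inv, SemidirectProduct.inl_aut, mul_inv_rev]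
      group
  have hle : Subgroup.normalClosure {FreeGroup.mk w} ≤ K'.comap (magnusHom x) := by
    apply Subgroup.normalClosure_le_normal
    rintro _ rfl
    refine ⟨FreeGroup.mk (rew x 0 w), Subgroup.subset_normalClosure ⟨0, rfl⟩, ?_⟩
    have := magnusHom_mk x w 0
    rw [hs] at this
    simpa using this.symm
  obtain ⟨y, hy, hy'⟩ := hle hgn
  have h1 : magnusHom x g = (SemidirectProduct.inl.comp
      (FreeGroup.map (fun a => ((0 : ℤ), a)))) g := by
    refine hom_eq_on_letterSub _ _ (fun z hz => ?_) hg
    have : z ≠ x := hz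
    simp [magnusHom, this]
  rw [h1] at hy'
  rw [← SemidirectProduct.inl_injective hy']
  exact hy

theorem magnus_step {X : Type u} (x : X) (w : List (X × Bool))
    (hw : FreeGroup.IsCyclicallyReduced w) (hs : lsum x w = 0)
    (ε : Bool) (v : List (X × Bool)) (a : X) (e : Bool) (ha : a ≠ x)
    (hform : w = ((x, ε) :: v) ++ [(a, e)])
    (IH : ∀ (v : List ((ℤ × X) × Bool)), v.length < w.length → FreeGroup.IsCyclicallyReduced v →
      ∀ y, (∃ e, (y, e) ∈ v) → FreeOn {z | z ≠ y} {FreeGroup.mk v}) :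
    FreeOn {y | y ≠ x} {FreeGroup.mk w} := by
  classical
  letI : LinearOrder X := linearOrderOfSTO WellOrderingRel
  have hlast : ((0, a), e) ∈ rew x 0 w := by
    have h0 : lsum x ((x, ε) :: v) = 0 := by
      rw [hform, lsum_append] at hs
      simpa [lsum, ha] using hs
    rw [hform, rew_append, h0]
    simp [rew, ha]
  have hne : (rew x 0 w) ≠ [] := List.ne_nil_of_mem hlast
  obtain ⟨q, hq, hq0⟩ : ∃ q ∈ rew x 0 w, q.1.1 ≠ 0 := by
    refine ⟨(rew x 0 w).head hne, List.head_mem hne, ?_⟩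
    rcases rew_head x w hw.isReduced 0 _ (List.head_mem_head? hne) with ⟨_, h1, h2⟩ | ⟨e', _, h2⟩
    · have hh : w.head? = some (x, ε) := by rw [hform]; rfl
      rw [hh, Option.some.injEq] at h2
      exact absurd (congrArg Prod.fst h2).symm h1
    · intro h0
      rw [h0] at h2
      simp at h2
  have hfin : (rew x 0 w).toFinset.Nonempty := ⟨q, by simpa using hq⟩
  obtain ⟨qM, hqM, hmax⟩ := (rew x 0 w).toFinset.exists_max_image (fun q => toLex q.1) hfin
  obtain ⟨qm, hqm, hmin⟩ := (rew x 0 w).toFinset.exists_min_image (fun q => toLex q.1) hfin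
  rw [List.mem_toFinset] at hqM hqm
  simp only [List.mem_toFinset] at hmax hmin
  have hspread : qm.1.1 < qM.1.1 := by
    have h1 := hmax _ hlast
    have h2 := hmax _ hq
    have h3 := hmin _ hlast
    have h4 := hmin _ hq
    simp only [Prod.Lex.le_iff, ofLex_toLex] at h1 h2 h3 h4
    omega
  have hlen : ∀ j, (rew x j w).length < w.length := by
    intro j
    rw [hform]
    simp only [List.cons_append, rew, if_true]
    exact Nat.lt_succ_of_le (rew_length_le _ _ _)
  have hrew : ∀ j, rew x j w = (rew x 0 w).map fun q => ((q.1.1 + j, q.1.2), q.2) := by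
    intro j
    rw [← rew_shift, zero_add]
  have hmono : ∀ (n : ℤ) (c : X), StrictMono fun j : ℤ => toLex (n + j, c) := by
    intro n c i j hij
    rw [Prod.Lex.lt_iff]
    left
    simpa using hij
  have hsh : ∀ (y z : ℤ × X) (j : ℤ), toLex y ≤ toLex z →
      toLex (y.1 + j, y.2) ≤ toLex (z.1 + j, z.2) := by
    intro y z j h
    rw [Prod.Lex.le_iff] at h ⊢
    simpa using h
  have hM := fun j => IH (rew x j w) (hlen j) (rew_cyc x w hw hs j) (qM.1.1 + j, qM.1.2)
    ⟨qM.2, by rw [hrew]; exact List.mem_map.2 ⟨qM, hqM, rfl⟩⟩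
  have hm := fun j => IH (rew x j w) (hlen j) (rew_cyc x w hw hs j) (qm.1.1 + j, qm.1.2)
    ⟨qm.2, by rw [hrew]; exact List.mem_map.2 ⟨qm, hqm, rfl⟩⟩
  have hst := stag_int (fun y : ℤ × X => toLex y) (fun j => FreeGroup.mk (rew x j w))
    (fun j => toLex (qM.1.1 + j, qM.1.2)) (fun j => toLex (qm.1.1 + j, qm.1.2))
    (hmono _ _) (hmono _ _)
    (by
      intro j
      apply mk_mem_letterSub
      intro p hp
      rw [hrew] at hp
      obtain ⟨q', hq', rfl⟩ := List.mem_map.1 hp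
      exact ⟨hsh _ _ j (hmin _ hq'), hsh _ _ j (hmax _ hq')⟩)
    (by
      intro j
      refine (hM j).mono ?_
      rintro y hy rfl
      exact lt_irrefl (toLex (qM.1.1 + j, qM.1.2)) hy)
    (by
      intro j
      refine (hm j).mono ?_
      rintro y hy rfl
      exact lt_irrefl (toLex (qm.1.1 + j, qm.1.2)) hy)
    (-1 - qm.1.1)
  intro g hg hgn
  have h1 := magnus_transfer x w hs g hg hgn
  have h2 : FreeGroup.map (fun a => ((0 : ℤ), a)) g ∈
      LetterSub {y : ℤ × X | toLex (qm.1.1 + (-1 - qm.1.1), qm.1.2) < toLex y ∧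
        toLex y < toLex (qM.1.1 + ((-1 - qm.1.1) + 1), qM.1.2)} := by
    have : LetterSub {y : X | y ≠ x} ≤ (LetterSub {y : ℤ × X |
        toLex (qm.1.1 + (-1 - qm.1.1), qm.1.2) < toLex y ∧
        toLex y < toLex (qM.1.1 + ((-1 - qm.1.1) + 1), qM.1.2)}).comap
        (FreeGroup.map (fun a => ((0 : ℤ), a))) := by
      conv_lhs => unfold LetterSub
      rw [Subgroup.closure_le]
      rintro _ ⟨y, hy, rfl⟩
      apply Subgroup.subset_closure
      refine ⟨(0, y), ⟨?_, ?_⟩, by simp⟩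
      · rw [Prod.Lex.lt_iff]; left; simp
      · rw [Prod.Lex.lt_iff]; left; simp; omega
    exact this hg
  have h3 := hst _ h2 h1
  have hinj : Function.Injective (FreeGroup.map (fun a : X => ((0 : ℤ), a))) :=
    FreeGroup.map_injective (fun a b h => congrArg Prod.snd h)
  exact hinj (h3.trans (map_one _).symm)

theorem rotate_form {α : Type*} (P : α → Prop) (l : List α) (h1 : ∃ p ∈ l, P p)
    (h2 : ∃ p ∈ l, ¬ P p) :
    ∃ u v, l = u ++ v ∧ ∃ p t q, v ++ u = (p :: t) ++ [q] ∧ P p ∧ ¬ P q := by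
  by_cases hadj : ∃ u q p v, l = u ++ q :: p :: v ∧ ¬ P q ∧ P p
  · obtain ⟨u, q, p, v, rfl, hq, hp⟩ := hadj
    exact ⟨u ++ [q], p :: v, by simp, p, v ++ u, q, by simp, hp, hq⟩
  · have key : ∀ l : List α, (¬ ∃ u q p v, l = u ++ q :: p :: v ∧ ¬ P q ∧ P p) →
        ∀ q t, l = q :: t → ¬ P q → ∀ p ∈ l, ¬ P p := by
      intro l
      induction l with
      | nil => intro _ q t h; simp at h
      | cons a l ih =>
        intro hn q t h hq p hp
        obtain ⟨rfl, rfl⟩ := List.cons.inj h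
        rcases List.mem_cons.1 hp with rfl | hp
        · exact hq
        · rcases l with _ | ⟨b, l⟩
          · simp at hp
          · refine ih ?_ b l rfl ?_ p hp
            · rintro ⟨u, q, p, v, h, h'⟩
              exact hn ⟨a :: u, q, p, v, by rw [h]; rfl, h'⟩
            · intro hb
              exact hn ⟨[], a, b, l, rfl, hq, hb⟩
    rcases l with _ | ⟨p, t⟩
    · simp at h1
    have hp : P p := by
      by_contra hp
      obtain ⟨p', hp', hP⟩ := h1
      exact key _ hadj p t rfl hp p' hp' hP
    rcases List.eq_nil_or_concat t with rfl | ⟨t, q, rfl⟩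
    · obtain ⟨q, hq, hq'⟩ := h2
      simp at hq
      exact absurd hp (hq ▸ hq')
    · refine ⟨[], _, rfl, p, t, q, by simp, hp, ?_⟩
      intro hq
      obtain ⟨q', hq', hnq⟩ := h2
      obtain ⟨u, v, huv⟩ := List.append_of_mem hq'
      have := key (q' :: v) (by
        rintro ⟨u', q1, p1, v', h, h'⟩
        exact hadj ⟨u ++ u', q1, p1, v', by rw [huv, h]; simp, h'⟩) q' v rfl hnq q ?_
      · exact this hq
      · have h3 : (p :: (t.concat q)).getLast? = (u ++ q' :: v).getLast? := by rw [huv]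
        have h4 : (q' :: v).getLast? = some q := by
          rw [List.getLast?_append] at h3
          cases h5 : (q' :: v).getLast? with
          | none => simp at h5
          | some z =>
            rw [h5] at h3
            have : (p :: t.concat q) = (p :: t) ++ [q] := by simp
            rw [this, List.getLast?_append] at h3
            simpa using h3.symm
        exact List.mem_of_getLast? h4

theorem lsum_ne_of_all {X : Type u} (x : X) (w : List (X × Bool)) :
    ∀ e, FreeGroup.IsReduced ((x, e) :: w) → (∀ p ∈ w, p.1 = x) →
      0 < sg e * lsum x ((x, e) :: w) := by
  induction w with
  | nil => intro e _ _; cases e <;> simp [lsum, sg]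
  | cons p w ih =>
    intro e hr hall
    obtain ⟨b, e'⟩ := p
    have hb : b = x := hall _ List.mem_cons_self
    subst hb
    rw [FreeGroup.IsReduced, List.isChain_cons_cons] at hr
    have he : e = e' := hr.1 rfl
    subst he
    have := ih e hr.2 fun p hp => hall p (List.mem_cons_of_mem _ hp)
    rw [lsum]
    cases e <;> simp [sg] at this ⊢ <;> omega

theorem normalClosure_rotate {X : Type u} (u v : List (X × Bool)) :
    Subgroup.normalClosure {FreeGroup.mk (u ++ v)} ≤
      Subgroup.normalClosure {FreeGroup.mk (v ++ u)} := by
  apply Subgroup.normalClosure_le_normal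
  rw [Set.singleton_subset_iff]
  have h1 : FreeGroup.mk (u ++ v) =
      FreeGroup.mk u * FreeGroup.mk (v ++ u) * (FreeGroup.mk u)⁻¹ := by
    rw [← FreeGroup.mul_mk, ← FreeGroup.mul_mk]
    group
  rw [h1]
  have h2 : FreeGroup.mk (v ++ u) ∈ Subgroup.normalClosure {FreeGroup.mk (v ++ u)} :=
    Subgroup.subset_normalClosure (Set.mem_singleton _)
  exact Subgroup.normalClosure_normal.conj_mem _ h2 _

theorem one_relator (n : ℕ) : ∀ (X : Type u) (w : List (X × Bool)), w.length = n →
    FreeGroup.IsCyclicallyReduced w → ∀ x, (∃ e, (x, e) ∈ w) →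
      FreeOn {z | z ≠ x} {FreeGroup.mk w} := by
  induction n using Nat.strong_induction_on with
  | _ n IH =>
    intro X w hlen hw x ⟨e, he⟩
    by_cases hs : lsum x w = 0
    · have hnon : ∃ p ∈ w, ¬ p.1 = x := by
        by_contra hcon
        push Not at hcon
        rcases w with _ | ⟨⟨b, e'⟩, w⟩
        · simp at he
        · have hb : b = x := hcon _ List.mem_cons_self
          subst hb
          have := lsum_ne_of_all b w e' hw.isReduced
            fun p hp => hcon p (List.mem_cons_of_mem _ hp)
          rw [hs] at this
          simp at this
      obtain ⟨u, v, rfl, ⟨p1, ε⟩, t, ⟨a, e'⟩, hform, hp, hq⟩ :=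
        rotate_form (fun p : X × Bool => p.1 = x) w ⟨_, he, rfl⟩ hnon
      simp only at hp hq
      subst hp
      have hstep := magnus_step p1 (v ++ u) (cyc_rotate u v hw)
        (by rw [lsum_append] at hs ⊢; omega) ε t a e' hq hform
        (fun v' hv' hc y hy => IH v'.length (by simp at hv' hlen; omega) _ v' rfl hc y hy)
      intro g hg hgn
      refine hstep g hg ?_
      exact normalClosure_rotate u v hgn
    · exact freeOn_of_expo_ne x _ (by rwa [toAdd_expo_mk])

/-- **Theorem `thm:staggered` (Freiheitssatz for staggered presentations).**
Let `G = ⟨X ∣ w₁, …, w_m⟩` where the `wⱼ` are nonempty reduced, cyclically reduced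
words, each containing a letter of `X ∖ A`.  Suppose there is a linear order on
`X ∖ A` such that, writing `M j` (resp. `μ j`) for the largest (resp. smallest)
letter of `X ∖ A` occurring in `wⱼ`, one has `M i < M j` and `μ i < μ j` whenever
`i < j` (so the presentation is staggered).  Then the natural homomorphism from the
free group on `A` to `G` is injective. -/
theorem freiheitssatz_staggered {X : Type*} (A : Set X)
    [LinearOrder (↥(Aᶜ : Set X))]
    (m : ℕ) (w : Fin m → List (X × Bool))
    (hwne : ∀ j, w j ≠ []) (hwred : ∀ j, WordReduced (w j))
    (hwcyc : ∀ j, WordCyclicallyReduced (w j))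
    (houtside : ∀ j, ∃ x : X, x ∉ A ∧ OccursIn x (w j))
    (M μ : Fin m → ↥(Aᶜ : Set X))
    (hMocc : ∀ j, OccursIn (M j : X) (w j))
    (hMmax : ∀ j, ∀ y : ↥(Aᶜ : Set X), OccursIn (y : X) (w j) → y ≤ M j)
    (hμocc : ∀ j, OccursIn (μ j : X) (w j))
    (hμmin : ∀ j, ∀ y : ↥(Aᶜ : Set X), OccursIn (y : X) (w j) → μ j ≤ y)
    (hstaggered : ∀ i j : Fin m, i < j → M i < M j ∧ μ i < μ j) :
    Function.Injective
      (FreeGroup.lift (fun a : A =>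
        (PresentedGroup.of (a : X) :
          PresentedGroup (Set.range fun j => FreeGroup.mk (w j)))) :
        FreeGroup A →* PresentedGroup (Set.range fun j => FreeGroup.mk (w j))) := by
  classical
  have hcyc : ∀ j, FreeGroup.IsCyclicallyReduced (w j) := by
    intro j
    have hb : ∀ b c : Bool, ¬ (b = !c) → b = c := by decide
    rw [FreeGroup.isCyclicallyReduced_iff]
    refine ⟨?_, fun a ha b hb' hab => ?_⟩
    · refine List.IsChain.imp ?_ (hwred j)
      intro p q hpq h1
      exact hb _ _ fun h2 => hpq ⟨h1, h2⟩
    · exact hb _ _ fun h2 => (hwcyc j).2 a ha b hb' ⟨hab, h2⟩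
  have hfree : FreeOn A (Set.range fun j => FreeGroup.mk (w j)) := by
    rcases m with _ | k
    · intro g _ hgn
      have : (Set.range fun j : Fin 0 => FreeGroup.mk (w j)) ⊆ ((⊥ : Subgroup (FreeGroup X)) : Set _) := by
        rintro _ ⟨j, _⟩
        exact j.elim0
      exact Subgroup.mem_bot.1 (Subgroup.normalClosure_le_normal this hgn)
    · let idx : ℕ → Fin (k + 1) := fun i => ⟨min i k, by omega⟩
      have hidx : ∀ i j, i < j → j ≤ k → idx i < idx j := by
        intro i j hij hj
        rw [Fin.lt_def]
        simp only [idx]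
        omega
      have h := chain_free (fun i => FreeGroup.mk (w (idx i)))
        (fun i => {y | ∀ h : y ∈ (Aᶜ : Set X), μ (idx i) ≤ ⟨y, h⟩})
        (fun i => {y | ∀ h : y ∈ (Aᶜ : Set X), μ (idx i) < ⟨y, h⟩})
        (fun i => {y | ∀ h : y ∈ (Aᶜ : Set X), ⟨y, h⟩ < M (idx i)}) k
        (by
          intro i j hij hj
          apply mk_mem_letterSub
          intro p hp h
          exact lt_of_le_of_lt (hMmax (idx i) ⟨p.1, h⟩ ⟨p.2, hp⟩)
            (hstaggered _ _ (hidx i j hij hj)).1)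
        (by
          intro j hj
          apply mk_mem_letterSub
          intro p hp h
          exact hμmin (idx j) ⟨p.1, h⟩ ⟨p.2, hp⟩)
        (by
          intro j hj
          refine (one_relator _ X (w (idx j)) rfl (hcyc _) (M (idx j)) (hMocc _)).mono ?_
          rintro y hy rfl
          exact lt_irrefl _ (hy (M (idx j)).2))
        (by
          intro j hj
          refine (one_relator _ X (w (idx j)) rfl (hcyc _) (μ (idx j)) (hμocc _)).mono ?_
          rintro y hy rfl
          exact lt_irrefl _ (hy (μ (idx j)).2))
        (fun j _ y hy h => (hy h).le)
        (fun j hj y hy h => lt_of_lt_of_le (hstaggered _ _ (hidx j (j + 1) (by omega) hj)).2 (hy h))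
      have hset : (fun i => FreeGroup.mk (w (idx i))) '' Set.Iic k =
          Set.range fun j => FreeGroup.mk (w j) := by
        ext g
        constructor
        · rintro ⟨i, _, rfl⟩
          exact ⟨_, rfl⟩
        · rintro ⟨j, rfl⟩
          refine ⟨j, Nat.lt_succ_iff.1 j.2, ?_⟩
          have : idx j = j := Fin.ext (by simp only [idx]; omega)
          simp only [this]
      rw [hset] at h
      refine h.mono ?_
      intro y hy h2
      exact absurd hy h2
  rw [injective_iff_map_eq_one]
  intro g hg
  have hcomp : (FreeGroup.lift (fun a : A =>
        (PresentedGroup.of (a : X) :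
          PresentedGroup (Set.range fun j => FreeGroup.mk (w j))))) =
      (PresentedGroup.mk _).comp (FreeGroup.map (Subtype.val : A → X)) := by
    ext a
    simp [PresentedGroup.of]
  rw [hcomp] at hg
  have h1 : FreeGroup.map (Subtype.val : A → X) g ∈
      Subgroup.normalClosure (Set.range fun j => FreeGroup.mk (w j)) :=
    PresentedGroup.mk_eq_one_iff.1 hg
  have h2 : FreeGroup.map (Subtype.val : A → X) g ∈ LetterSub A := by
    rcases g with ⟨l⟩
    change FreeGroup.map _ (FreeGroup.mk l) ∈ _
    rw [FreeGroup.map.mk]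
    apply mk_mem_letterSub
    intro p hp
    obtain ⟨q, _, rfl⟩ := List.mem_map.1 hp
    exact q.1.2
  exact FreeGroup.map_injective Subtype.val_injective
    ((hfree _ h2 h1).trans (map_one _).symm)
end

section
/- Let X be a set and let R be a set of nonempty reduced, cyclically reduced words over X that is symmetrized, i.e. closed under taking cyclic conjugates and under taking inverse words. Suppose R satisfies the small-cancellation condition C(6): no element of R can be written as the concatenation of fewer than 6 pieces. Let A ⊆ X and suppose there do not exist words Q and S such that S uses only letters of A, the concatenation Q·S belongs to R, and Q is a concatenation of at most 3 pieces. Then the homomorphism from the free group on A to the group G = ⟨X ∣ R⟩ induced by the inclusion A ↪ X is injective. -/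
/-- The inverse of a word: reverse the list and negate each exponent. -/
def wordInv {α : Type*} (w : List (α × Bool)) : List (α × Bool) :=
  (w.map fun p => (p.1, !p.2)).reverse

/-- A set of words is *symmetrized* if it is closed under taking cyclic conjugates
(rotations) and under taking inverse words. -/
def Symmetrized {α : Type*} (R : Set (List (α × Bool))) : Prop :=
  (∀ u ∈ R, ∀ v, u ~r v → v ∈ R) ∧ (∀ u ∈ R, wordInv u ∈ R)

/-- A *piece* relative to a symmetrized set `R` is a nonempty word occurring as a
prefix of two distinct elements of `R`. -/
def IsPiece {α : Type*} (R : Set (List (α × Bool))) (u : List (α × Bool)) : Prop :=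
  u ≠ [] ∧ ∃ v w, v ∈ R ∧ w ∈ R ∧ v ≠ w ∧ u <+: v ∧ u <+: w

/-- A symmetrized set `R` satisfies the small-cancellation condition `C(q)` if no
element of `R` is the concatenation of fewer than `q` pieces. -/
def SmallCancellationC {α : Type*} (q : ℕ) (R : Set (List (α × Bool))) : Prop :=
  ∀ w ∈ R, ∀ L : List (List (α × Bool)),
    (∀ u ∈ L, IsPiece R u) → L.flatten = w → q ≤ L.length

set_option linter.unusedSectionVars false

namespace SCF
open Equiv Equiv.Perm

section perms
variable {D : Type} [Finite D]

lemma app_inv (σ : Perm D) (x : D) : σ (σ⁻¹ x) = x := Equiv.apply_symm_apply σ x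

lemma inv_app (σ : Perm D) (x : D) : σ⁻¹ (σ x) = x := Equiv.symm_apply_apply σ x

def cs (σ : Perm D) : Setoid D := SameCycle.setoid σ

noncomputable def nc (s : Setoid D) : ℕ := Nat.card (Quotient s)

noncomputable def z (σ : Perm D) : ℕ := nc (cs σ)

lemma cs_inv {T : Type*} {σ : Perm D} {g : D → T} (h : ∀ x, g (σ x) = g x) {a b : D}
    (hab : cs σ a b) : g a = g b := by
  obtain ⟨i, rfl⟩ := hab
  have key : ∀ n : ℕ, ∀ x, g ((σ ^ n) x) = g x := by
    intro n
    induction n with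
    | zero => simp
    | succ n ih => intro x; rw [pow_succ', Perm.mul_apply, h, ih]
  cases i with
  | ofNat n => simpa using (key n a).symm
  | negSucc n =>
    have := key (n+1) ((σ ^ (Int.negSucc n)) a)
    rw [← this, zpow_negSucc, app_inv]

lemma cs_le {σ : Perm D} {s : Setoid D} (h : ∀ x, s (σ x) x) : cs σ ≤ s := by
  intro a b hab
  have := cs_inv (g := fun x => (Quotient.mk s x)) (fun x => Quotient.sound (h x)) hab
  exact Quotient.exact this

lemma cs_app (σ : Perm D) (x : D) : cs σ (σ x) x := by
  have : SameCycle σ (σ x) x := ⟨-1, by rw [zpow_neg_one, inv_app]⟩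
  exact this

lemma nc_le_of_le {s t : Setoid D} (h : s ≤ t) : nc t ≤ nc s := by
  apply Nat.card_le_card_of_surjective (Quotient.map' (s₁ := s) (s₂ := t) id (fun a b hab => h hab))
  intro q
  induction q using Quotient.inductionOn with
  | h a => exact ⟨Quotient.mk s a, rfl⟩

lemma nc_lt {s t : Setoid D} (h : s ≤ t) {a b : D} (hab : t a b) (hn : ¬ s a b) :
    nc s ≥ nc t + 1 := by
  let φ : Quotient s → Quotient t := Quotient.map' (s₁ := s) (s₂ := t) id (fun a b hab => h hab)
  have hs : Function.Surjective φ := by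
    intro q
    induction q using Quotient.inductionOn with
    | h a => exact ⟨Quotient.mk s a, rfl⟩
  by_contra hlt
  have hle : nc s ≤ nc t := by omega
  have heq : nc s = nc t := le_antisymm hle (nc_le_of_le h)
  have hb : Function.Bijective φ := (Nat.bijective_iff_surjective_and_card φ).2 ⟨hs, heq⟩
  have : φ (Quotient.mk s a) = φ (Quotient.mk s b) := Quotient.sound hab
  exact hn (Quotient.exact (hb.1 this))

/-- Joining one pair lowers the number of classes by at most one. -/
lemma nc_join {s t : Setoid D} (x y : D)
    (h : ∀ g : D → Quotient s, (∀ a b, s a b → g a = g b) → g x = g y →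
      ∀ a b, t a b → g a = g b) : nc s ≤ nc t + 1 := by
  classical
  let g : D → Quotient s := fun a =>
    if (Quotient.mk s a) = Quotient.mk s y then Quotient.mk s x else Quotient.mk s a
  have h1 : ∀ a b, s a b → g a = g b := by
    intro a b hab
    have : Quotient.mk s a = Quotient.mk s b := Quotient.sound hab
    simp only [g, this]
  have h2 : g x = g y := by simp [g]
  have h3 := h g h1 h2
  let G : Quotient t → Quotient s := Quotient.lift g (fun a b hab => h3 a b hab)
  let G' : Option (Quotient t) → Quotient s := fun o => o.elim (Quotient.mk s y) G
  have hs : Function.Surjective G' := by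
    intro q
    induction q using Quotient.inductionOn with
    | h a =>
      by_cases ha : Quotient.mk s a = Quotient.mk s y
      · exact ⟨none, ha.symm⟩
      · refine ⟨some (Quotient.mk t a), ?_⟩
        change g a = _
        simp only [g, if_neg ha]
  have := Nat.card_le_card_of_surjective G' hs
  rwa [Finite.card_option] at this

lemma nc_join2 {s t : Setoid D} (x y u v : D)
    (h : ∀ r : Setoid D, s ≤ r → r x y → r u v → t ≤ r) : nc s ≤ nc t + 2 := by
  let s1 : Setoid D := sInf {r | s ≤ r ∧ r x y}
  have a1 : nc s ≤ nc s1 + 1 := by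
    apply nc_join x y
    intro g hg hxy a b hab
    have : s1 ≤ Setoid.ker g := sInf_le ⟨fun a b hab => hg a b hab, hxy⟩
    exact this hab
  have hs1 : s ≤ s1 := le_sInf (fun r hr => hr.1)
  have hxy1 : s1 x y := by
    intro r hr
    exact hr.2
  have a2 : nc s1 ≤ nc t + 1 := by
    apply nc_join u v
    intro g hg huv a b hab
    have : t ≤ Setoid.ker g :=
      h _ (fun a b hab => hg a b (hs1 hab)) (hg x y hxy1) huv
    exact this hab
  omega

lemma nc_join1 {s t : Setoid D} (x y : D)
    (h : ∀ r : Setoid D, s ≤ r → r x y → t ≤ r) : nc s ≤ nc t + 1 := by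
  apply nc_join x y
  intro g hg hxy a b hab
  have : t ≤ Setoid.ker g := h _ (fun a b hab => hg a b hab) hxy
  exact this hab

lemma rel_swap [DecidableEq D] {r : Setoid D} {x y : D} (h : r x y) (a : D) :
    r (swap x y a) a := by
  by_cases hx : a = x
  · subst hx; rw [swap_apply_left]; exact r.symm h
  by_cases hy : a = y
  · subst hy; rw [swap_apply_right]; exact h
  rw [swap_apply_of_ne_of_ne hx hy]

lemma z_mul_swap [DecidableEq D] (σ : Perm D) (x y : D) : z σ ≤ z (σ * swap x y) + 1 := by
  apply nc_join1 x y
  intro r hr hxy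
  apply cs_le
  intro a
  exact r.trans (hr (cs_app σ _)) (rel_swap hxy a)

lemma sameCycle_swap [DecidableEq D] {σ : Perm D} {x b : D} (h : ¬ cs σ x b) :
    cs (σ * swap x b) x b := by
  have key : ∀ k : ℕ, cs (σ * swap x b) x ((σ ^ (k+1)) b) := by
    intro k
    induction k with
    | zero =>
      have := cs_app (σ * swap x b) x
      simp only [Perm.mul_apply, swap_apply_left] at this
      simpa using Setoid.symm' _ this
    | succ k ih =>
      by_cases hb : (σ ^ (k+1)) b = b
      · rw [pow_succ', Perm.mul_apply, hb]
        have := cs_app (σ * swap x b) x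
        simp only [Perm.mul_apply, swap_apply_left] at this
        exact Setoid.symm' _ this
      · have hx : (σ ^ (k+1)) b ≠ x := by
          intro hx
          apply h
          have : SameCycle σ b x := ⟨((k+1 : ℕ) : ℤ), by rw [zpow_natCast]; exact hx⟩
          exact this.symm
        have := cs_app (σ * swap x b) ((σ ^ (k+1)) b)
        rw [Perm.mul_apply, swap_apply_of_ne_of_ne hx hb] at this
        rw [pow_succ', Perm.mul_apply]
        exact Setoid.trans' _ ih (Setoid.symm' _ this)
  have hpos := orderOf_pos σ
  have := key (orderOf σ - 1)
  rwa [Nat.sub_add_cancel hpos, pow_orderOf_eq_one] at this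

def skip [DecidableEq D] (d : D) (σ : Perm D) : Perm D := swap d (σ d) * σ

lemma skip_self [DecidableEq D] (d : D) (σ : Perm D) : skip d σ d = d := by simp [skip]

lemma skip_of_fixed [DecidableEq D] {d : D} {σ : Perm D} (h : σ d = d) : skip d σ = σ := by
  rw [skip, h, swap_self]; rfl

lemma skip_pre [DecidableEq D] {d x : D} {σ : Perm D} (h : σ x = d) : skip d σ x = σ d := by
  simp [skip, h]

lemma skip_other [DecidableEq D] {d x : D} {σ : Perm D} (h : σ x ≠ d) (h2 : x ≠ d) :
    skip d σ x = σ x := by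
  simp only [skip, Perm.mul_apply]
  rw [swap_apply_of_ne_of_ne h]
  intro hh
  exact h2 (σ.injective hh)

lemma skip_inv [DecidableEq D] (d : D) (σ : Perm D) : skip d σ⁻¹ = (skip d σ)⁻¹ := by
  rw [skip, skip, mul_inv_rev, swap_inv, Equiv.mul_swap_eq_swap_mul, inv_app, swap_comm]

lemma z_skip [DecidableEq D] {d : D} {σ : Perm D} (h : σ d ≠ d) : z (skip d σ) ≥ z σ + 1 := by
  apply nc_lt (a := d) (b := σ d)
  · apply cs_le
    intro x
    simp only [skip, Perm.mul_apply]
    exact Setoid.trans' _ (rel_swap (Setoid.symm' _ (cs_app σ d)) _) (cs_app σ x)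
  · exact Setoid.symm' _ (cs_app σ d)
  · intro hc
    have : ∀ x, (fun x => decide (x = d)) (skip d σ x) = (fun x => decide (x = d)) x := by
      intro x
      simp only [decide_eq_decide]
      constructor
      · intro hx
        apply (skip d σ).injective
        rw [hx, skip_self]
      · rintro rfl; exact skip_self _ _
    have := cs_inv (g := fun x => decide (x = d)) this hc
    simp at this
    exact h this

def cm (a b : Perm D) : Setoid D := cs a ⊔ cs b

lemma cm_le {a b : Perm D} {s : Setoid D} (h : ∀ x, s (a x) x) (h' : ∀ x, s (b x) x) :
    cm a b ≤ s := sup_le (cs_le h) (cs_le h')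

lemma cm_a (a b : Perm D) (x : D) : cm a b (a x) x :=
  (le_sup_left : cs a ≤ cs a ⊔ cs b) (cs_app a x)

lemma cm_b (a b : Perm D) (x : D) : cm a b (b x) x :=
  (le_sup_right : cs b ≤ cs a ⊔ cs b) (cs_app b x)

/-- Planarity of the hypermap with permutations `a`, `b`, `b * a⁻¹`. -/
def PQ (a b : Perm D) : Prop :=
  Nat.card D + 2 * nc (cm a b) ≤ z a + z b + z (b * a⁻¹)

lemma rel_of_app {r : Setoid D} {a : Perm D} (h : ∀ x, r (a x) x) {x y : D} (hxy : a x = y) :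
    r y x := hxy ▸ h x

/-- Deleting a dart (it becomes an isolated point) preserves planarity. -/
lemma PQ_skip [DecidableEq D] {f n : Perm D} (d : D) (h : PQ f n) :
    PQ (skip d f) (skip d n) := by
  set e : Perm D := n * f⁻¹ with he
  have hn : n = e * f := by rw [he, inv_mul_cancel_right]
  have hnd : ∀ x, n x = e (f x) := by intro x; rw [hn]; rfl
  unfold PQ at *
  rw [← he] at h
  set e' : Perm D := skip d n * (skip d f)⁻¹ with he'
  have hn' : ∀ x, skip d n x = e' (skip d f x) := by
    intro x; simp [he', Perm.mul_apply]
  by_cases hfd : f d = d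
  · rw [skip_of_fixed hfd] at *
    by_cases hnd' : n d = d
    · have : e' = e := by rw [he', skip_of_fixed hnd']
      rw [skip_of_fixed hnd', this]; exact h
    · have hed : e d = n d := by rw [hnd, hfd]
      have h1 : e' = skip d e := by
        rw [he', skip, mul_assoc, ← he, skip, hed]
      have a1 := z_skip hnd'
      have a2 := z_skip (σ := e) (d := d) (by rw [hed]; exact hnd')
      rw [← h1] at a2
      have a3 : nc (cm f (skip d n)) ≤ nc (cm f n) + 1 := by
        apply nc_join1 d (n d)
        intro r hr hd
        have q1 : ∀ x, r (f x) x := fun x => hr (cm_a f (skip d n) x)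
        have q2 : ∀ x, r (skip d n x) x := fun x => hr (cm_b f (skip d n) x)
        refine cm_le q1 ?_
        intro x
        have := q2 x
        simp only [skip, Perm.mul_apply] at this
        exact r.trans (r.symm (rel_swap hd (n x))) this
      omega
  by_cases hnd' : n d = d
  · rw [skip_of_fixed hnd'] at *
    have hed : e (f d) = d := by rw [← hnd, hnd']
    have h1 : e' = skip d e := by
      rw [he', skip, mul_inv_rev, swap_inv, ← mul_assoc, ← he, skip, Equiv.mul_swap_eq_swap_mul,
        hed, swap_comm]
    have hed' : e d ≠ d := by
      intro hh
      exact hfd (e.injective (hed.trans hh.symm))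
    have a1 := z_skip hfd
    have a2 := z_skip hed'
    rw [← h1] at a2
    have a3 : nc (cm (skip d f) n) ≤ nc (cm f n) + 1 := by
      apply nc_join1 d (f d)
      intro r hr hd
      have q1 : ∀ x, r (skip d f x) x := fun x => hr (cm_a (skip d f) n x)
      have q2 : ∀ x, r (n x) x := fun x => hr (cm_b (skip d f) n x)
      refine cm_le ?_ q2
      intro x
      have := q1 x
      simp only [skip, Perm.mul_apply] at this
      exact r.trans (r.symm (rel_swap hd (f x))) this
    omega
  have a1 := z_skip hfd
  have a2 := z_skip hnd'
  have hform : e' = swap d (n d) * (e * swap d (f d)) := by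
    rw [he', skip, skip, mul_inv_rev, swap_inv, he]; group
  by_cases hed : e d = d
  · have h1 : e' = e := by
      rw [hform, Equiv.mul_swap_eq_swap_mul, hed, ← hnd, ← mul_assoc, swap_mul_self, one_mul]
    rw [h1]
    have a3 : nc (cm (skip d f) (skip d n)) ≤ nc (cm f n) + 1 := by
      apply nc_join1 d (f d)
      intro r hr hd
      have q1 : ∀ x, r (skip d f x) x := fun x => hr (cm_a _ _ x)
      have q2 : ∀ x, r (skip d n x) x := fun x => hr (cm_b _ _ x)
      have q3 : ∀ x, r (f x) x := by
        intro x
        have := q1 x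
        simp only [skip, Perm.mul_apply] at this
        exact r.trans (r.symm (rel_swap hd (f x))) this
      have q4 : ∀ x, r (e x) x := by
        intro x
        have t1 := hn' ((skip d f)⁻¹ x)
        rw [app_inv, h1] at t1
        rw [← t1]
        have t2 := q1 ((skip d f)⁻¹ x)
        rw [app_inv] at t2
        exact r.trans (q2 _) (r.symm t2)
      refine cm_le q3 ?_
      intro x
      rw [hnd]
      exact r.trans (q4 _) (q3 x)
    omega
  · set x := e⁻¹ d with hx
    have hex : e x = d := by simp [hx]
    set b := f d with hb
    have hxd : x ≠ d := by intro hh; rw [hh] at hex; exact hed hex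
    have hxb : x ≠ b := by
      intro hh; apply hnd'; rw [hnd, ← hb, ← hh, hex]
    have hebc : e b = n d := (hnd d).symm
    set e0 := skip d e with he0
    have h1 : e' = e0 * swap x b := by
      have hnede : n d ≠ e d := by
        rw [← hebc]; intro hh; exact hfd (e.injective hh)
      ext y
      rw [hform, he0]
      simp only [Perm.mul_apply]
      by_cases y1 : y = d
      · subst y1
        rw [swap_apply_left, hebc, swap_apply_right,
          swap_apply_of_ne_of_ne (Ne.symm hxd) (Ne.symm hfd), skip_self]
      by_cases y2 : y = b
      · subst y2
        rw [swap_apply_right, swap_apply_right, skip_pre hex,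
          swap_apply_of_ne_of_ne hed (Ne.symm hnede)]
      by_cases y3 : y = x
      · subst y3
        rw [swap_apply_left, swap_apply_of_ne_of_ne hxd hxb, hex, swap_apply_left,
          skip_other (by rw [hebc]; exact hnd') hfd, hebc]
      rw [swap_apply_of_ne_of_ne y1 y2, swap_apply_of_ne_of_ne y3 y2]
      have hy : e y ≠ d := by
        intro hh; apply y3; apply e.injective; rw [hh, hex]
      rw [skip_other hy y1, swap_apply_of_ne_of_ne hy]
      rw [← hebc]; intro hh; exact y2 (e.injective hh)
    have a3 := z_skip hed
    rw [← he0] at a3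
    have ep_b : e' b = e d := by
      rw [h1, Perm.mul_apply, swap_apply_right, he0, skip_pre hex]
    have ep_x : e' x = n d := by
      rw [h1, Perm.mul_apply, swap_apply_left, he0, skip_other, hebc]
      · rw [hebc]; exact hnd'
      · exact hfd
    have ep_o : ∀ y, y ≠ x → y ≠ b → y ≠ d → e' y = e y := by
      intro y y1 y2 y3
      rw [h1, Perm.mul_apply, swap_apply_of_ne_of_ne y1 y2, he0, skip_other _ y3]
      intro hh; apply y1; rw [hx, ← hh, inv_app]
    have general : ∀ r : Setoid D, cm (skip d f) (skip d n) ≤ r → r d b → r x b →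
        cm f n ≤ r := by
      intro r hr hd hxb'
      have q1 : ∀ x, r (skip d f x) x := fun x => hr (cm_a _ _ x)
      have q2 : ∀ x, r (skip d n x) x := fun x => hr (cm_b _ _ x)
      have q3 : ∀ x, r (f x) x := by
        intro x
        have := q1 x
        simp only [skip, Perm.mul_apply] at this
        exact r.trans (r.symm (rel_swap hd (f x))) this
      have q4 : ∀ x, r (e' x) x := by
        intro x
        have t1 := hn' ((skip d f)⁻¹ x)
        rw [app_inv] at t1
        rw [← t1]
        have t2 := q1 ((skip d f)⁻¹ x)
        rw [app_inv] at t2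
        exact r.trans (q2 _) (r.symm t2)
      have q5 : ∀ y, r (e y) y := by
        intro y
        by_cases y1 : y = x
        · rw [y1, hex]; exact r.trans hd (r.symm hxb')
        by_cases y2 : y = b
        · rw [y2, hebc, ← ep_x]; exact r.trans (q4 x) hxb'
        by_cases y3 : y = d
        · rw [y3, ← ep_b]; exact r.trans (q4 b) (r.symm hd)
        rw [← ep_o y y1 y2 y3]; exact q4 y
      refine cm_le q3 ?_
      intro x
      rw [hnd]
      exact r.trans (q5 _) (q3 x)
    by_cases hsc : cs e' x b
    · have a4 : nc (cm (skip d f) (skip d n)) ≤ nc (cm f n) + 1 := by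
        apply nc_join1 d b
        intro r hr hd
        refine general r hr hd ?_
        have q1 : ∀ x, r (skip d f x) x := fun x => hr (cm_a _ _ x)
        have q2 : ∀ x, r (skip d n x) x := fun x => hr (cm_b _ _ x)
        have : cs e' ≤ r := by
          apply cs_le
          intro x
          have t1 := hn' ((skip d f)⁻¹ x)
          rw [app_inv] at t1
          rw [← t1]
          have t2 := q1 ((skip d f)⁻¹ x)
          rw [app_inv] at t2
          exact r.trans (q2 _) (r.symm t2)
        exact this hsc
      have a5 := z_mul_swap e0 x b
      rw [← h1] at a5
      omega
    · have hsc0 : cs e0 x b := by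
        by_contra hc
        apply hsc
        rw [h1]
        exact sameCycle_swap hc
      have a5 : z e' ≥ z e0 + 1 := by
        apply nc_lt _ hsc0 hsc
        rw [h1]
        apply cs_le
        intro a
        exact Setoid.trans' _ (cs_app e0 _) (rel_swap hsc0 a)
      have a4 : nc (cm (skip d f) (skip d n)) ≤ nc (cm f n) + 2 :=
        nc_join2 d b x b general
      omega

def Planar (e f : Perm D) : Prop :=
  Nat.card D + 2 * nc (cm e f) ≤ z e + z f + z (e * f)

lemma cs_inv_eq (σ : Perm D) : cs σ⁻¹ = cs σ := by
  ext a b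
  exact sameCycle_inv

lemma z_inv (σ : Perm D) : z σ⁻¹ = z σ := by rw [z, z, cs_inv_eq]

lemma z_conj (σ τ : Perm D) : z (τ * σ * τ⁻¹) = z σ := by
  have key : ∀ σ τ : Perm D, z (τ * σ * τ⁻¹) ≤ z σ := by
    intro σ τ
    apply Nat.card_le_card_of_surjective
      (Quotient.lift (fun a => Quotient.mk (cs (τ * σ * τ⁻¹)) (τ a)) ?_)
    · intro q
      induction q using Quotient.inductionOn with
      | h a => 
        refine ⟨Quotient.mk _ (τ⁻¹ a), ?_⟩
        change Quotient.mk _ (τ (τ⁻¹ a)) = _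
        rw [app_inv]
    · intro a b hab
      refine cs_inv (g := fun a => Quotient.mk (cs (τ * σ * τ⁻¹)) (τ a)) ?_ hab
      intro x
      apply Quotient.sound
      have := cs_app (τ * σ * τ⁻¹) (τ x)
      simpa using this
  apply le_antisymm (key σ τ)
  have := key (τ * σ * τ⁻¹) τ⁻¹
  have h2 : τ⁻¹ * (τ * σ * τ⁻¹) * τ⁻¹⁻¹ = σ := by group
  rwa [h2] at this

lemma planar_iff_fn (e f : Perm D) : Planar e f ↔ PQ f (e * f) := by
  have h : cm e f = cm f (e * f) := by
    apply le_antisymm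
    · refine cm_le ?_ (cm_a _ _)
      intro x
      have h1 := cm_b f (e * f) (f⁻¹ x)
      have h2 := cm_a f (e * f) (f⁻¹ x)
      simp only [Perm.mul_apply, app_inv] at h1 h2
      exact Setoid.trans' _ h1 (Setoid.symm' _ h2)
    · refine cm_le (cm_b _ _) ?_
      intro x
      exact Setoid.trans' _ (cm_a e f (f x)) (cm_b e f x)
  rw [Planar, PQ, h, mul_inv_cancel_right]
  constructor <;> intro h <;> linarith

lemma planar_iff_fe (e f : Perm D) : Planar e f ↔ PQ f⁻¹ e := by
  have h : cm e f = cm f⁻¹ e := by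
    rw [cm, cm, cs_inv_eq, sup_comm]
  rw [Planar, PQ, h, inv_inv, z_inv]
  constructor <;> intro h <;> linarith

lemma planar_iff_en (e f : Perm D) : Planar e f ↔ PQ e (e * f) := by
  have h : cm e f = cm e (e * f) := by
    apply le_antisymm
    · refine cm_le (cm_a _ _) ?_
      intro x
      have h1 := cm_b e (e * f) x
      have h2 := cm_a e (e * f) (f x)
      exact Setoid.trans' _ (Setoid.symm' _ h2) h1
    · refine cm_le (cm_a _ _) ?_
      intro x
      exact Setoid.trans' _ (cm_a e f (f x)) (cm_b e f x)
  rw [Planar, PQ, h, z_conj]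
  constructor <;> intro h <;> linarith

lemma planar_skip_fe [DecidableEq D] {e f : Perm D} (d : D) (h : Planar e f) :
    Planar (skip d e) (skip d f) := by
  rw [planar_iff_fe] at *
  have := PQ_skip d h
  rwa [skip_inv] at this

lemma planar_skip_fn [DecidableEq D] {e f : Perm D} (d : D) (h : Planar e f) :
    Planar (swap d (e (f d)) * e * swap d (f d)) (skip d f) := by
  rw [planar_iff_fn] at *
  have := PQ_skip d h
  convert this using 1
  rw [skip, skip, Perm.mul_apply]
  simp [mul_assoc]

lemma planar_skip_en [DecidableEq D] {e f : Perm D} (d : D) (h : Planar e f) :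
    Planar (skip d e) ((skip d e)⁻¹ * skip d (e * f)) := by
  rw [planar_iff_en] at *
  have := PQ_skip d h
  rwa [mul_inv_cancel_left]

end perms

section cyc
variable {D : Type} [Finite D]

/-- `l` lists, without repetition, a full cycle of `σ` (or is empty). -/
def Cyc (σ : Perm D) (l : List D) : Prop :=
  l.Nodup ∧ l.IsChain (fun x y => σ x = y) ∧ ∀ x ∈ l.getLast?, ∀ y ∈ l.head?, σ x = y

lemma cyc_nil (σ : Perm D) : Cyc σ [] := by simp [Cyc]

lemma Cyc.rot {σ : Perm D} {l1 l2 : List D} (h : Cyc σ (l1 ++ l2)) : Cyc σ (l2 ++ l1) := by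
  cases l1 with
  | nil => simpa using h
  | cons a t1 =>
    cases l2 with
    | nil => simpa using h
    | cons b t2 =>
      obtain ⟨h1, h2, h3⟩ := h
      rw [List.isChain_append] at h2
      refine ⟨List.nodup_append_comm.1 h1, ?_, ?_⟩
      · rw [List.isChain_append]
        refine ⟨h2.2.1, h2.1, ?_⟩
        intro x hx y hy
        apply h3 x _ y
        · simpa using hy
        · rw [List.getLast?_append, hx]; rfl
      · intro x hx y hy
        apply h2.2.2 x _ y
        · simpa using hy
        · rw [List.getLast?_append] at hx
          simpa [List.getLast?_cons] using hx

lemma Cyc.isRotated {σ : Perm D} {l l' : List D} (h : Cyc σ l) (hr : l ~r l') : Cyc σ l' := by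
  obtain ⟨n, rfl⟩ := hr
  rw [List.rotate_eq_drop_append_take_mod]
  apply Cyc.rot
  rwa [List.take_append_drop]

lemma Cyc.head {σ : Perm D} {l : List D} (h : Cyc σ l) {x : D} (hx : x ∈ l) :
    ∃ t, Cyc σ (x :: t) ∧ l ~r (x :: t) := by
  obtain ⟨s, t, rfl⟩ := List.append_of_mem hx
  refine ⟨t ++ s, ?_, ?_⟩
  · have := h.rot
    simpa using this
  · have := List.isRotated_append (l := s) (l' := x :: t)
    simpa using this

lemma Cyc.concat {σ : Perm D} {l : List D} (h : Cyc σ l) {x : D} (hx : x ∈ l) :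
    ∃ t, Cyc σ (t ++ [x]) ∧ l ~r (t ++ [x]) := by
  obtain ⟨t, h1, h2⟩ := h.head hx
  have h3 : (x :: t) ~r (t ++ [x]) := by
    have := List.isRotated_append (l := [x]) (l' := t)
    simpa using this
  exact ⟨t, h1.isRotated h3, h2.trans h3⟩

lemma Cyc.app_mem {σ : Perm D} {l : List D} (h : Cyc σ l) {x : D} (hx : x ∈ l) : σ x ∈ l := by
  obtain ⟨t, h1, h2⟩ := h.head hx
  rw [h2.mem_iff]
  cases t with
  | nil =>
    have := h1.2.2 x (by simp) x (by simp)
    simp [this]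
  | cons b t =>
    have := h1.2.1
    rw [List.isChain_cons_cons] at this
    simp [this.1]

lemma Cyc.of_app_mem {σ : Perm D} {l : List D} (h : Cyc σ l) {x : D} (hx : σ x ∈ l) : x ∈ l := by
  obtain ⟨t, h1, h2⟩ := h.head hx
  have hne : σ x :: t ≠ [] := by simp
  have h3 := h1.2.2 ((σ x :: t).getLast hne) (List.getLast?_eq_getLast_of_ne_nil hne) (σ x) (by simp)
  have h4 := σ.injective h3
  rw [h2.mem_iff]
  have h5 := List.getLast_mem hne
  rw [h4] at h5
  exact h5

lemma Cyc.app_mem_iff {σ : Perm D} {l : List D} (h : Cyc σ l) {x : D} : σ x ∈ l ↔ x ∈ l :=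
  ⟨h.of_app_mem, h.app_mem⟩

lemma Cyc.mem_of_cs {σ : Perm D} {l : List D} (h : Cyc σ l) {x y : D} (hxy : cs σ x y) :
    x ∈ l ↔ y ∈ l := by
  have := cs_inv (σ := σ) (g := fun x => x ∈ l) (fun x => propext h.app_mem_iff) hxy
  simpa using this

lemma chain_cs {σ : Perm D} {x : D} {t : List D} (h : (x :: t).IsChain (fun x y => σ x = y)) :
    ∀ y ∈ x :: t, cs σ x y := by
  induction t generalizing x with
  | nil => intro y hy; simp at hy; subst hy; exact Setoid.refl' _ _
  | cons b t ih =>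
    intro y hy
    rw [List.isChain_cons_cons] at h
    rcases List.mem_cons.1 hy with rfl | hy
    · exact Setoid.refl' _ _
    · have h1 := ih h.2 y hy
      have h2 := cs_app σ x
      rw [h.1] at h2
      exact Setoid.trans' _ (Setoid.symm' _ h2) h1

lemma Cyc.cs {σ : Perm D} {l : List D} (h : Cyc σ l) {x y : D} (hx : x ∈ l) (hy : y ∈ l) :
    cs σ x y := by
  obtain ⟨t, h1, h2⟩ := h.head hx
  exact chain_cs h1.2.1 y (h2.mem_iff.1 hy)

lemma chain_prefix {σ : Perm D} {x : D} {l l' : List D}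
    (h : (x :: l).IsChain (fun x y => σ x = y)) (h' : (x :: l').IsChain (fun x y => σ x = y))
    (hl : l.length ≤ l'.length) : l <+: l' := by
  induction l generalizing x l' with
  | nil => exact List.nil_prefix
  | cons a t ih =>
    cases l' with
    | nil => simp at hl
    | cons b t' =>
      rw [List.isChain_cons_cons] at h h'
      have : a = b := h.1.symm.trans h'.1
      subst this
      rw [List.cons_prefix_cons]
      exact ⟨rfl, ih h.2 h'.2 (by simpa using hl)⟩

/-- A nonrepeating chain is a prefix of the cycle with the same start. -/
lemma Cyc.prefix_of_chain {σ : Perm D} {x : D} {l c : List D} (h : Cyc σ (x :: l))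
    (hc : (x :: c).IsChain (fun x y => σ x = y)) (hn : (x :: c).Nodup) : c <+: l := by
  rcases le_or_gt c.length l.length with hl | hl
  · exact chain_prefix hc h.2.1 hl
  · exfalso
    have h2 : (x :: (l ++ [x])).IsChain (fun x y => σ x = y) := by
      rw [← List.cons_append, List.isChain_append]
      refine ⟨h.2.1, List.isChain_singleton _, ?_⟩
      intro a ha b hb
      exact h.2.2 a ha b (by simpa using hb)
    have h3 := chain_prefix h2 hc (by simpa using hl)
    have : x ∈ c := h3.subset (by simp)
    exact (List.nodup_cons.1 hn).1 this

lemma Cyc.unique {σ : Perm D} {x : D} {l l' : List D} (h : Cyc σ (x :: l)) (h' : Cyc σ (x :: l')) :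
    l = l' := by
  have h1 := h.prefix_of_chain h'.2.1 h'.1
  have h2 := h'.prefix_of_chain h.2.1 h.1
  exact h2.eq_of_length (le_antisymm h2.length_le h1.length_le)

lemma Cyc.isRotated_of_mem {σ : Perm D} {x : D} {l l' : List D} (h : Cyc σ l) (h' : Cyc σ l')
    (hx : x ∈ l) (hx' : x ∈ l') : l ~r l' := by
  obtain ⟨t, h1, h2⟩ := h.head hx
  obtain ⟨t', h1', h2'⟩ := h'.head hx'
  rw [h1.unique h1'] at h2
  exact h2.trans h2'.symm

lemma Cyc.congr {σ τ : Perm D} {l : List D} (h : Cyc σ l) (hh : ∀ x ∈ l, τ x = σ x) : Cyc τ l := by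
  refine ⟨h.1, ?_, ?_⟩
  · refine List.IsChain.imp_of_mem_imp ?_ h.2.1
    intro a b ha _ hab
    rw [hh a ha, hab]
  · intro x hx y hy
    rw [hh x (List.mem_of_mem_getLast? hx)]
    exact h.2.2 x hx y hy

lemma exists_cyc (σ : Perm D) (x : D) : ∃ t, Cyc σ (x :: t) := by
  set k := Function.minimalPeriod σ x with hk
  have hkpos : 0 < k := by
    apply Function.minimalPeriod_pos_of_mem_periodicPts
    exact Function.Injective.mem_periodicPts σ.injective x
  set l := (List.range k).map (fun i => (σ^[i]) x) with hl
  have hc : Cyc σ l := by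
    refine ⟨?_, ?_, ?_⟩
    · rw [hl]
      refine List.Nodup.map_on ?_ List.nodup_range
      intro a ha b hb hab
      rw [List.mem_range] at ha hb
      exact Function.iterate_injOn_Iio_minimalPeriod ha hb hab
    · rw [hl, List.isChain_map, List.isChain_range]
      intro m _
      exact (Function.iterate_succ_apply' σ m x).symm
    · intro a ha b hb
      rw [hl, List.getLast?_map, List.getLast?_range] at ha
      rw [hl, List.head?_map, List.head?_range] at hb
      simp only [hkpos.ne', if_false, Option.map_some, Option.mem_some_iff] at ha hb
      subst ha hb
      rw [← Function.iterate_succ_apply' σ, Nat.succ_eq_add_one, Nat.sub_add_cancel hkpos]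
      exact Function.iterate_minimalPeriod
  have hx : x ∈ l := by
    rw [hl, List.mem_map]
    exact ⟨0, by simpa using hkpos, rfl⟩
  obtain ⟨t, ht, _⟩ := hc.head hx
  exact ⟨t, ht⟩

lemma Cyc.skip_cons [DecidableEq D] {σ : Perm D} {a : D} {t : List D} (h : Cyc σ (a :: t)) :
    Cyc (skip a σ) t := by
  obtain ⟨h1, h2, h3⟩ := h
  rw [List.nodup_cons] at h1
  refine ⟨h1.2, ?_, ?_⟩
  · refine List.IsChain.imp_of_mem_imp ?_ (List.isChain_of_isChain_cons h2)
    intro x y hx hy hxy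
    rw [skip_other, hxy]
    · rw [hxy]; rintro rfl; exact h1.1 hy
    · rintro rfl; exact h1.1 hx
  · intro x hx y hy
    cases t with
    | nil => simp at hx
    | cons b t =>
      rw [List.isChain_cons_cons] at h2
      have hy' : b = y := by simpa using hy
      have := h3 x (by simpa [List.getLast?_cons] using hx) a (by simp)
      rw [skip_pre this, h2.1, hy']

lemma Cyc.skip_not_mem [DecidableEq D] {σ : Perm D} {a : D} {l : List D} (h : Cyc σ l)
    (ha : a ∉ l) : Cyc (skip a σ) l := by
  apply h.congr
  intro x hx
  rw [skip_other]
  · intro hh; exact ha (hh ▸ h.app_mem hx)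
  · rintro rfl; exact ha hx

end cyc

section base
variable {D : Type} [Finite D] {X : Type*}

/-- The inverse letter. -/
def ix (p : X × Bool) : X × Bool := (p.1, !p.2)

@[simp] lemma ix_ix (p : X × Bool) : ix (ix p) = p := by simp [ix]

@[simp] lemma ix_fst (p : X × Bool) : (ix p).1 = p.1 := rfl

lemma ix_ne (p : X × Bool) : ix p ≠ p := by
  intro h
  have := congrArg Prod.snd h
  simp [ix] at this

/-- A labelled planar map; darts fixed by `e` are the deleted ones. -/
structure Base (e f : Perm D) (ℓ : D → X × Bool) : Prop where
  inv : ∀ d, e (e d) = d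
  iso : ∀ d, e d = d → f d = d
  lab : ∀ d, e d ≠ d → ℓ (e d) = ix (ℓ d)
  pl : Planar e f

lemma fold {e f : Perm D} {ℓ : D → X × Bool} (h : Base e f ℓ) {a b : D} {t : List D}
    (hc : Cyc f (a :: b :: t)) (ha : e a ≠ a) (hb : e b ≠ b) (hl : ℓ b = ix (ℓ a)) :
    ∃ e' f' : Perm D, Base e' f' ℓ ∧ Cyc f' t ∧
      (∀ l, Cyc f l → a ∉ l → b ∉ l → Cyc f' l) ∧
      (∀ d, e' d ≠ d ↔ e d ≠ d ∧ d ≠ a ∧ d ≠ b) := by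
  classical
  have hab : a ≠ b := by
    have := hc.1; rintro rfl; simp at this
  have hfa : f a = b := by
    have := hc.2.1
    rw [List.isChain_cons_cons] at this
    exact this.1
  set e1 : Perm D := swap a (e b) * e * swap a b with he1
  set f1 : Perm D := skip a f with hf1
  have hp1 : Planar e1 f1 := by
    have := planar_skip_fn a h.pl
    rwa [hfa] at this
  have hp2 := planar_skip_fe b hp1
  have hinv := h.inv
  have hinj : ∀ x y, e x = e y → x = y := fun x y hxy => e.injective hxy
  have e1a : e1 a = a := by simp [he1]
  have e1b : e1 b = e a := by
    by_cases hpb : e a = b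
    · have : e b = a := by rw [← hpb, hinv]
      simp [he1, this]
    · have : e a ≠ e b := fun hh => hab (hinj _ _ hh)
      simp [he1, swap_apply_of_ne_of_ne ha this]
  have e1x : ∀ x, x ≠ a → x ≠ b → e1 x = if x = e a then e b else e x := by
    intro x hxa hxb
    simp only [he1, Perm.mul_apply, swap_apply_of_ne_of_ne hxa hxb]
    split_ifs with hx
    · subst hx; rw [hinv]; simp
    · apply swap_apply_of_ne_of_ne
      · intro hh; apply hx; rw [← hh, hinv]
      · intro hh; exact hxb (hinj _ _ hh)
  set e' : Perm D := skip b e1 with he'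
  have ea : e' a = a := by
    rw [he', skip_other, e1a]
    · rw [e1a]; exact hab
    · exact hab
  have eb : e' b = b := skip_self _ _
  have ex : ∀ x, x ≠ a → x ≠ b → e' x = if x = e a then e b else if x = e b then e a else e x := by
    intro x hxa hxb
    have h1 := e1x x hxa hxb
    by_cases hx : x = e a
    · rw [if_pos hx] at h1 ⊢
      rw [he', skip_other (by rw [h1]; exact hb) hxb, h1]
    · rw [if_neg hx] at h1 ⊢
      by_cases hx2 : x = e b
      · rw [if_pos hx2]
        rw [he', skip_pre (by rw [h1, hx2, hinv]), e1b]
      · rw [if_neg hx2]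
        rw [he', skip_other _ hxb, h1]
        rw [h1]; intro hh; apply hx2; rw [← hh, hinv]
  have fa : skip b f1 a = a := by
    rw [skip_other, hf1, skip_self]
    · rw [hf1, skip_self]; exact hab
    · exact hab
  have hne : e a ≠ e b := fun hh => hab (hinj _ _ hh)
  refine ⟨e', skip b f1, ⟨?_, ?_, ?_, hp2⟩, hc.skip_cons.skip_cons, ?_, ?_⟩
  · intro d
    by_cases hda : d = a
    · rw [hda, ea, ea]
    by_cases hdb : d = b
    · rw [hdb, eb, eb]
    have h1 := ex d hda hdb
    grind
  · intro d hd
    by_cases hda : d = a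
    · rw [hda, fa]
    by_cases hdb : d = b
    · rw [hdb, skip_self]
    have h1 := ex d hda hdb
    have h2 : e d = d := by grind
    have h3 := h.iso d h2
    have h4 : f1 d = d := by rw [hf1, skip_other _ hda, h3]; rw [h3]; exact hda
    rw [skip_other _ hdb, h4]; rw [h4]; exact hdb
  · intro d hd
    by_cases hda : d = a
    · exact absurd (hda ▸ ea) hd
    by_cases hdb : d = b
    · exact absurd (hdb ▸ eb) hd
    have h1 := ex d hda hdb
    have h2 := h.lab a ha
    have h3 := h.lab b hb
    rw [hl, ix_ix] at h3
    by_cases c1 : d = e a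
    · rw [if_pos c1] at h1
      rw [h1, h3, c1, h2, ix_ix]
    · rw [if_neg c1] at h1
      by_cases c2 : d = e b
      · rw [if_pos c2] at h1
        rw [h1, c2, h2, h3]
      · rw [if_neg c2] at h1
        rw [h1]; exact h.lab d (h1 ▸ hd)
  · intro l hl hal hbl
    exact (hl.skip_not_mem hal).skip_not_mem hbl
  · intro d
    by_cases hda : d = a
    · simp [hda, ea]
    by_cases hdb : d = b
    · simp [hdb, eb]
    have h1 := ex d hda hdb
    grind

lemma merge {e f : Perm D} {ℓ : D → X × Bool} (h : Base e f ℓ) {d : D} {l1 l2 : List D}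
    (hd : e d ≠ d) (hc1 : Cyc f (d :: l1)) (hc2 : Cyc f (e d :: l2)) (hn : e d ∉ d :: l1) :
    ∃ e' f' : Perm D, Base e' f' ℓ ∧ Cyc f' (l2 ++ l1) ∧
      (∀ l, Cyc f l → d ∉ l → e d ∉ l → Cyc f' l) ∧
      (∀ x, e' x ≠ x ↔ e x ≠ x ∧ x ≠ d ∧ x ≠ e d) := by
  classical
  have hinv := h.inv
  set p := e d with hp
  have hep : e p = d := hinv d
  have hn2 : d ∉ p :: l2 := by
    intro hh
    have : p ∈ d :: l1 := by
      have := hc2.cs hh (List.mem_cons_self)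
      exact (hc1.mem_of_cs this).1 (List.mem_cons_self)
    exact hn this
  set e1 := skip d e with he1
  have e1d : e1 d = d := skip_self _ _
  have e1p : e1 p = p := skip_pre hep
  have e1x : ∀ x, x ≠ d → x ≠ p → e1 x = e x := by
    intro x h1 h2
    apply skip_other _ h1
    intro hh; apply h2; rw [hp, ← hh, hinv]
  set f1 := e1⁻¹ * skip d (e * f) with hf1
  have hpl1 : Planar e1 f1 := planar_skip_en d h.pl
  have hpl2 := planar_skip_fe p hpl1
  rw [skip_of_fixed e1p] at hpl2
  have f1d : f1 d = d := by
    apply e1.injective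
    simp only [hf1, Perm.mul_apply, app_inv, skip_self, e1d]
  have hdl : ∀ x ∈ d :: l1, f x ≠ p := fun x hx hh => hn (hh ▸ hc1.app_mem hx)
  have f1p : ∀ x, x ≠ d → f x = p → f1 x = if f d = d then p else f d := by
    intro x hx hfx
    apply e1.injective
    have : (e * f) x = d := by simp [hfx, hep]
    simp only [hf1, Perm.mul_apply, app_inv, skip_pre this]
    split_ifs with hh
    · rw [hh, e1p]
    · rw [e1x _ hh]
      exact hdl d List.mem_cons_self
  have f1x : ∀ x, x ≠ d → f x ≠ p → f1 x = if f x = d then p else f x := by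
    intro x hx hfx
    apply e1.injective
    have : (e * f) x ≠ d := by
      rw [Perm.mul_apply]; intro hh; apply hfx; rw [hp, ← hh, hinv]
    simp only [hf1, Perm.mul_apply, app_inv]
    rw [skip_other this hx, Perm.mul_apply]
    split_ifs with hh
    · rw [hh, e1p]
    · rw [e1x _ hh hfx]
  have hpd : p ≠ d := hd
  -- the new face
  have hcyc : Cyc f1 (p :: (l2 ++ l1)) := by
    have n1 := List.nodup_cons.1 hc1.1
    have dis : List.Disjoint (p :: l2) l1 := by
      intro x hx hx1
      have := hc2.cs hx (List.mem_cons_self)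
      exact hn ((hc1.mem_of_cs this).1 (List.mem_cons_of_mem _ hx1))
    have lastx : ∀ x ∈ (p :: l2).getLast?, x ≠ d ∧ f x = p := by
      intro x hx
      refine ⟨?_, hc2.2.2 x hx p (by simp)⟩
      rintro rfl
      exact hn2 (List.mem_of_mem_getLast? hx)
    have ch2 : (p :: l2).IsChain (fun x y => f1 x = y) := by
      have hnd := hc2.1
      refine List.isChain_iff_getElem.2 ?_
      intro i hi
      have h1 := List.isChain_iff_getElem.1 hc2.2.1 i hi
      have hm : (p :: l2)[i] ∈ p :: l2 := List.getElem_mem _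
      have hm' : (p :: l2)[i+1] ∈ p :: l2 := List.getElem_mem _
      rw [f1x, h1, if_neg]
      · intro hh; rw [hh] at hm'; exact hn2 hm'
      · intro hh; rw [hh] at hm; exact hn2 hm
      · rw [h1]
        intro hh
        have := (List.Nodup.getElem_inj_iff hnd (i := i+1) (j := 0) (hi := hi) (hj := by simp)).1 (by simpa using hh)
        omega
    have ch1 : l1.IsChain (fun x y => f1 x = y) := by
      refine List.IsChain.imp_of_mem_imp ?_ (List.isChain_of_isChain_cons hc1.2.1)
      intro x y hx hy hxy
      rw [f1x, hxy, if_neg]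
      · rintro rfl; exact n1.1 hy
      · rintro rfl; exact n1.1 hx
      · exact hdl x (List.mem_cons_of_mem _ hx)
    rw [← List.cons_append]
    refine ⟨List.Nodup.append hc2.1 n1.2 dis, ?_, ?_⟩
    · rw [List.isChain_append]
      refine ⟨ch2, ch1, ?_⟩
      intro x hx y hy
      obtain ⟨h1, h2⟩ := lastx x hx
      cases l1 with
      | nil => simp at hy
      | cons b t =>
        have hy' : b = y := by simpa using hy
        have h3 := hc1.2.1
        rw [List.isChain_cons_cons] at h3
        rw [f1p x h1 h2, if_neg, h3.1, hy']
        rw [h3.1]; rintro rfl; exact n1.1 List.mem_cons_self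
    · intro x hx y hy
      have hy' : p = y := by simpa using hy
      subst hy'
      cases l1 with
      | nil =>
        rw [List.append_nil] at hx
        obtain ⟨h1, h2⟩ := lastx x hx
        rw [f1p x h1 h2, if_pos]
        exact hc1.2.2 d (by simp) d (by simp)
      | cons b t =>
        have hx' : x ∈ (b :: t).getLast? := by
          rw [List.getLast?_append] at hx
          simpa [List.getLast?_cons] using hx
        have hm := List.mem_of_mem_getLast? hx'
        have h1 := hc1.2.2 x (by simpa [List.getLast?_cons] using hx') d (by simp)
        rw [f1x, if_pos h1]
        · rintro rfl; exact n1.1 hm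
        · rw [h1]; exact hpd.symm
  refine ⟨e1, skip p f1, ⟨?_, ?_, ?_, hpl2⟩, hcyc.skip_cons, ?_, ?_⟩
  · intro x
    by_cases h1 : x = d
    · rw [h1, e1d, e1d]
    by_cases h2 : x = p
    · rw [h2, e1p, e1p]
    have h3 := e1x x h1 h2
    have h4 := e1x (e x) (by grind) (by grind)
    rw [h3, h4, hinv]
  · intro x hx
    by_cases h2 : x = p
    · rw [h2, skip_self]
    have h5 : f1 x = x := by
      by_cases h1 : x = d
      · rw [h1, f1d]
      have h3 := e1x x h1 h2
      have h4 := h.iso x (h3 ▸ hx)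
      rw [f1x x h1 (by rw [h4]; exact h2), h4, if_neg h1]
    rw [skip_other _ h2, h5]
    rw [h5]; exact h2
  · intro x hx
    by_cases h1 : x = d
    · exact absurd (h1 ▸ e1d) hx
    by_cases h2 : x = p
    · exact absurd (h2 ▸ e1p) hx
    have h3 := e1x x h1 h2
    rw [h3]
    exact h.lab x (h3 ▸ hx)
  · intro l hl h1 h2
    refine Cyc.skip_not_mem (hl.congr ?_) h2
    intro x hx
    have := hl.app_mem hx
    rw [f1x, if_neg]
    · rintro rfl; exact h1 this
    · rintro rfl; exact h1 hx
    · rintro hh; exact h2 (hh ▸ this)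
  · intro x
    by_cases h1 : x = d
    · simp [h1, e1d]
    by_cases h2 : x = p
    · simp [h2, e1p]
    rw [e1x x h1 h2]
    simp [h1, h2]

end base

section words
variable {X : Type*}

lemma mk_append (u v : List (X × Bool)) :
    FreeGroup.mk (u ++ v) = FreeGroup.mk u * FreeGroup.mk v := FreeGroup.mul_mk.symm

lemma mk_rot {u v : List (X × Bool)} (h : u ~r v) : FreeGroup.mk u = 1 → FreeGroup.mk v = 1 := by
  obtain ⟨n, rfl⟩ := h
  intro h
  rw [List.rotate_eq_drop_append_take_mod, mk_append]
  have h2 : FreeGroup.mk (u.take (n % u.length)) * FreeGroup.mk (u.drop (n % u.length)) = 1 := by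
    rw [← mk_append, List.take_append_drop, h]
  exact mul_eq_one_comm.1 h2

lemma mk_wordInv (u : List (X × Bool)) : FreeGroup.mk (wordInv u) = (FreeGroup.mk u)⁻¹ := by
  rw [FreeGroup.inv_mk]; rfl

lemma wordInv_append (u v : List (X × Bool)) : wordInv (u ++ v) = wordInv v ++ wordInv u := by
  simp [wordInv]

lemma wordInv_cons (x : X × Bool) (v : List (X × Bool)) : wordInv (x :: v) = wordInv v ++ [ix x] := by
  simp [wordInv, ix]

lemma wordInv_length (u : List (X × Bool)) : (wordInv u).length = u.length := by
  simp [wordInv]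

lemma exists_pair {w : List (X × Bool)} (h : FreeGroup.mk w = 1) (hw : w ≠ []) :
    ∃ u p v, w = u ++ p :: ix p :: v := by
  have h1 : FreeGroup.mk w = FreeGroup.mk [] := h
  obtain ⟨c, h2, h3⟩ := FreeGroup.Red.exact.1 h1
  have h4 : c = [] := by
    rcases Relation.ReflTransGen.cases_head h3 with h | ⟨c', h, _⟩
    · exact h.symm
    · exact absurd h FreeGroup.Red.not_step_nil
  subst h4
  rcases Relation.ReflTransGen.cases_head h2 with h | ⟨c', h, _⟩
  · exact absurd h hw
  · cases h with
    | @not L1 L2 x b => exact ⟨L1, (x, b), L2, rfl⟩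

lemma not_reduced {u v : List (X × Bool)} {p : X × Bool} : ¬ WordReduced (u ++ p :: ix p :: v) := by
  intro h
  have h : List.IsChain _ _ := h
  rw [List.isChain_append] at h
  have := h.2.1
  rw [List.isChain_cons_cons] at this
  apply this.1
  simp [ix]

lemma mk_cancel (p : X × Bool) (v : List (X × Bool)) :
    FreeGroup.mk (p :: ix p :: v) = FreeGroup.mk v := by
  apply Quot.sound
  exact FreeGroup.Red.Step.not (L₁ := [])

end words

section state
variable {D : Type} [Finite D] {X : Type*}

structure St (R : Set (List (X × Bool))) (A : Set X) (ℓ : D → X × Bool) (e f : Perm D)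
    (lo : List D) : Prop where
  base : Base e f ℓ
  cyc : Cyc f lo
  act : ∀ d ∈ lo, e d ≠ d
  labA : ∀ d ∈ lo, (ℓ d).1 ∈ A
  ne : FreeGroup.mk (lo.map ℓ) ≠ 1
  faces : ∀ d, e d ≠ d → d ∈ lo ∨ ∃ l, d ∈ l ∧ Cyc f l ∧ (l.map ℓ ∈ R ∨ FreeGroup.mk (l.map ℓ) = 1)

structure MSt (R : Set (List (X × Bool))) (A : Set X) (ℓ : D → X × Bool) (e f : Perm D)
    (lo : List D) : Prop extends St R A ℓ e f lo where
  min : ∀ e' f' lo', St R A ℓ e' f' lo' → {d | e d ≠ d}.ncard ≤ {d | e' d ≠ d}.ncard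

lemma exists_min {R : Set (List (X × Bool))} {A : Set X} {ℓ : D → X × Bool} {e f : Perm D}
    {lo : List D} (h : St R A ℓ e f lo) : ∃ e f lo, MSt R A ℓ e f lo := by
  classical
  have hex : ∃ n, ∃ e f : Perm D, ∃ lo, St R A ℓ e f lo ∧ {d | e d ≠ d}.ncard = n :=
    ⟨_, e, f, lo, h, rfl⟩
  obtain ⟨e0, f0, lo0, h0, hn⟩ := Nat.find_spec hex
  refine ⟨e0, f0, lo0, h0, ?_⟩
  intro e' f' lo' h'
  rw [hn]
  exact Nat.find_min' hex ⟨e', f', lo', h', rfl⟩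

variable {R : Set (List (X × Bool))} {A : Set X} {ℓ : D → X × Bool} {e f : Perm D} {lo : List D}

lemma MSt.no_smaller (h : MSt R A ℓ e f lo) {e' f' : Perm D} {lo' : List D} {a b : D}
    (ha : e a ≠ a) (hact : ∀ d, e' d ≠ d ↔ e d ≠ d ∧ d ≠ a ∧ d ≠ b)
    (h' : St R A ℓ e' f' lo') : False := by
  have h1 := h.min _ _ _ h'
  have h2 : {d | e' d ≠ d} ⊂ {d | e d ≠ d} := by
    rw [Set.ssubset_iff_of_subset]
    · refine ⟨a, ha, ?_⟩
      intro hh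
      exact ((hact a).1 hh).2.1 rfl
    · intro d hd
      exact ((hact d).1 hd).1
  have := Set.ncard_lt_ncard h2 (Set.toFinite _)
  omega

lemma MSt.no_fold (h : MSt R A ℓ e f lo) (hRred : ∀ w ∈ R, WordReduced w) (hRsym : Symmetrized R)
    {a b : D} {t : List D}
    (hc : Cyc f (a :: b :: t)) (ha : e a ≠ a) (hb : e b ≠ b) (hl : ℓ b = ix (ℓ a)) : False := by
  obtain ⟨e', f', hB, hct, hoth, hact⟩ := fold h.base hc ha hb hl
  have hnd := hc.1
  simp only [List.nodup_cons, List.mem_cons, not_or] at hnd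
  have hiff : ∀ l, Cyc f l → (b ∈ l ↔ a ∈ l) := fun l hcl =>
    hcl.mem_of_cs (hc.cs (by simp) (by simp))
  by_cases hal : a ∈ lo
  · have hr := h.cyc.isRotated_of_mem hc hal List.mem_cons_self
    have hmem : ∀ d ∈ t, d ∈ lo := fun d hd => hr.mem_iff.2 (by simp [hd])
    refine h.no_smaller (e' := e') (f' := f') (lo' := t) ha hact ⟨hB, hct, ?_, ?_, ?_, ?_⟩
    · intro d hd
      refine (hact d).2 ⟨h.act d (hmem d hd), ?_, ?_⟩
      · rintro rfl; exact hnd.1.2 hd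
      · rintro rfl; exact hnd.2.1 hd
    · intro d hd; exact h.labA d (hmem d hd)
    · intro hh
      apply h.ne
      refine mk_rot (hr.map ℓ).symm ?_
      simp only [List.map_cons]
      rw [hl, mk_cancel, hh]
    · intro d hd
      obtain ⟨h1, h2, h3⟩ := (hact d).1 hd
      rcases h.faces d h1 with h4 | ⟨l, h4, h5, h6⟩
      · left
        have := hr.mem_iff.1 h4
        simpa [h2, h3] using this
      · by_cases hal' : a ∈ l
        · left
          have := (h5.isRotated_of_mem hc hal' List.mem_cons_self).mem_iff.1 h4
          simpa [h2, h3] using this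
        · right
          exact ⟨l, h4, hoth l h5 hal' (by rw [hiff l h5]; exact hal'), h6⟩
  · refine h.no_smaller (e' := e') (f' := f') (lo' := lo) ha hact
      ⟨hB, hoth lo h.cyc hal (by rw [hiff lo h.cyc]; exact hal), ?_, h.labA, h.ne, ?_⟩
    · intro d hd
      refine (hact d).2 ⟨h.act d hd, ?_, ?_⟩
      · rintro rfl; exact hal hd
      · rintro rfl; exact hal ((hiff lo h.cyc).1 hd)
    · intro d hd
      obtain ⟨h1, h2, h3⟩ := (hact d).1 hd
      rcases h.faces d h1 with h4 | ⟨l, h4, h5, h6⟩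
      · exact Or.inl h4
      · right
        by_cases hal' : a ∈ l
        · have hr := h5.isRotated_of_mem hc hal' List.mem_cons_self
          have h7 := hr.mem_iff.1 h4
          refine ⟨t, by simpa [h2, h3] using h7, hct, Or.inr ?_⟩
          rcases h6 with h6 | h6
          · exfalso
            have h8 := hRred _ (hRsym.1 _ h6 _ (hr.map ℓ))
            simp only [List.map_cons] at h8
            rw [hl] at h8
            exact not_reduced (u := []) h8
          · have h8 := mk_rot (hr.map ℓ) h6
            simp only [List.map_cons] at h8
            rwa [hl, mk_cancel] at h8
        · exact ⟨l, h4, hoth l h5 hal' (by rw [hiff l h5]; exact hal'), h6⟩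

lemma MSt.no_pair (h : MSt R A ℓ e f lo) (hRred : ∀ w ∈ R, WordReduced w) (hRsym : Symmetrized R)
    {l : List D} (hc : Cyc f l) {u v : List (X × Bool)} {p : X × Bool}
    (hl : l.map ℓ = u ++ p :: ix p :: v) : False := by
  rw [List.map_eq_append_iff] at hl
  obtain ⟨l1, l2, rfl, h1, h2⟩ := hl
  rw [List.map_eq_cons_iff] at h2
  obtain ⟨a, l3, rfl, h3, h4⟩ := h2
  rw [List.map_eq_cons_iff] at h4
  obtain ⟨b, l4, rfl, h5, h6⟩ := h4
  have hc' := hc.rot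
  simp only [List.cons_append] at hc'
  have hab : a ≠ b := by
    have := hc'.1; rintro rfl; simp at this
  have hfa : f a = b := by
    have := hc'.2.1
    rw [List.isChain_cons_cons] at this
    exact this.1
  refine h.no_fold hRred hRsym hc' ?_ ?_ ?_
  · intro hh
    have := h.base.iso a hh
    exact hab (this.symm.trans hfa)
  · intro hh
    have := h.base.iso b hh
    exact hab (f.injective (hfa.trans this.symm))
  · rw [h5, h3]

lemma MSt.no_triv (h : MSt R A ℓ e f lo) (hRred : ∀ w ∈ R, WordReduced w) (hRsym : Symmetrized R)
    {l : List D} (hc : Cyc f l) {u w v : List (X × Bool)} (hw : w ≠ [])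
    (hl : l.map ℓ = u ++ w ++ v) : FreeGroup.mk w ≠ 1 := by
  intro hh
  obtain ⟨u1, p, v1, rfl⟩ := exists_pair hh hw
  refine h.no_pair hRred hRsym hc (u := u ++ u1) (p := p) (v := v1 ++ v) ?_
  rw [hl]; simp

lemma MSt.face (h : MSt R A ℓ e f lo) (hRred : ∀ w ∈ R, WordReduced w) (hRsym : Symmetrized R)
    {d : D} (hd : e d ≠ d) (hlo : d ∉ lo) {t : List D} (hc : Cyc f (d :: t)) :
    (d :: t).map ℓ ∈ R := by
  rcases h.faces d hd with h1 | ⟨l, h1, h2, h3⟩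
  · exact absurd h1 hlo
  · have hr := h2.isRotated_of_mem hc h1 List.mem_cons_self
    rcases h3 with h3 | h3
    · exact hRsym.1 _ h3 _ (hr.map ℓ)
    · exfalso
      refine h.no_triv hRred hRsym h2 (u := []) (v := []) ?_ (by simp) h3
      intro hh
      rw [List.map_eq_nil_iff] at hh
      subst hh
      simp at h1

lemma MSt.fe (h : MSt R A ℓ e f lo) (hRred : ∀ w ∈ R, WordReduced w) (hRsym : Symmetrized R)
    {d : D} (hd : e d ≠ d) : f d ≠ e d := by
  intro hf
  obtain ⟨t, ht⟩ := exists_cyc f d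
  cases t with
  | nil =>
    have := ht.2.2 d (by simp) d (by simp)
    exact hd (hf ▸ this)
  | cons b t =>
    have h1 := ht.2.1
    rw [List.isChain_cons_cons] at h1
    have hb : e d = b := hf.symm.trans h1.1
    subst hb
    exact h.no_fold hRred hRsym ht hd (fun hh => hd (e.injective hh)) (h.base.lab d hd)

lemma MSt.no_mirror (h : MSt R A ℓ e f lo) (hRred : ∀ w ∈ R, WordReduced w)
    (hRsym : Symmetrized R) {d : D} {l1 l2 : List D} (hd : e d ≠ d) (hlo : d ∉ lo) (hlo' : e d ∉ lo)
    (hc1 : Cyc f (d :: l1)) (hc2 : Cyc f (e d :: l2)) : l1.map ℓ ≠ wordInv (l2.map ℓ) := by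
  intro heq
  by_cases hn : e d ∈ d :: l1
  · have hn' : e d ∈ l1 := by simpa [hd] using hn
    obtain ⟨u, v, rfl⟩ := List.append_of_mem hn'
    have hc3 : Cyc f (e d :: (v ++ d :: u)) := by
      rw [← List.cons_append] at hc1
      simpa using hc1.rot
    have h2 := hc2.unique hc3
    subst h2
    simp only [List.map_append, List.map_cons, wordInv_append, wordInv_cons] at heq
    rw [List.append_assoc] at heq
    have h3 := (List.append_inj heq (by rw [wordInv_length])).1
    by_cases hu : u = []
    · subst hu
      have h4 := hc1.2.1
      rw [List.nil_append, List.isChain_cons_cons] at h4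
      exact h.fe hRred hRsym hd h4.1
    · have h4 : FreeGroup.mk (u.map ℓ) = 1 := by
        have h5 : FreeGroup.mk (u.map ℓ) = (FreeGroup.mk (u.map ℓ))⁻¹ := by
          rw [← mk_wordInv, ← h3]
        have h6 : (FreeGroup.mk (u.map ℓ)) ^ 2 = 1 := by
          rw [pow_two]; nth_rewrite 1 [h5]; exact inv_mul_cancel _
        have h7 := (pow_eq_one_iff_left (M := FreeGroup X) two_ne_zero).1 h6
        exact h7
      refine h.no_triv hRred hRsym hc1 (u := [ℓ d]) (w := u.map ℓ) (v := (e d :: v).map ℓ)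
        (by simpa using hu) (by simp) h4
  · obtain ⟨e', f', hB, hct, hoth, hact⟩ := merge h.base hd hc1 hc2 hn
    refine h.no_smaller (e' := e') (f' := f') (lo' := lo) hd hact
      ⟨hB, hoth lo h.cyc hlo hlo', ?_, h.labA, h.ne, ?_⟩
    · intro x hx
      refine (hact x).2 ⟨h.act x hx, ?_, ?_⟩
      · rintro rfl; exact hlo hx
      · rintro rfl; exact hlo' hx
    · intro x hx
      obtain ⟨h1, h2, h3⟩ := (hact x).1 hx
      have htriv : FreeGroup.mk ((l2 ++ l1).map ℓ) = 1 := by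
        rw [List.map_append, mk_append, heq, mk_wordInv, mul_inv_cancel]
      rcases h.faces x h1 with h4 | ⟨l, h4, h5, h6⟩
      · exact Or.inl h4
      · right
        by_cases hdl : d ∈ l
        · have := (h5.isRotated_of_mem hc1 hdl List.mem_cons_self).mem_iff.1 h4
          have h7 : x ∈ l1 := by simpa [h2] using this
          exact ⟨_, by simp [h7], hct, Or.inr htriv⟩
        by_cases hpl : e d ∈ l
        · have := (h5.isRotated_of_mem hc2 hpl List.mem_cons_self).mem_iff.1 h4
          have h7 : x ∈ l2 := by simpa [h3] using this
          exact ⟨_, by simp [h7], hct, Or.inr htriv⟩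
        exact ⟨l, h4, hoth l h5 hdl hpl, h6⟩

end state

section comb
variable {X : Type*}

open Classical in
/-- The weight of an arc: `1` for a piece and `2` otherwise. -/
noncomputable def wtw (R : Set (List (X × Bool))) (u : List (X × Bool)) : ℕ :=
  if IsPiece R u then 1 else 2

lemma wtw_len (R : Set (List (X × Bool))) (L : List (List (X × Bool))) :
    L.length ≤ (L.map (wtw R)).sum := by
  induction L with
  | nil => simp
  | cons a t ih =>
    have : 1 ≤ wtw R a := by unfold wtw; split_ifs <;> omega
    simp only [List.length_cons, List.map_cons, List.sum_cons]
    omega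

lemma wtw_one {R : Set (List (X × Bool))} {L : List (List (X × Bool))}
    (h : (L.map (wtw R)).sum ≤ 1) : ∀ u ∈ L, IsPiece R u := by
  intro u hu
  by_contra hh
  have h1 : wtw R u = 2 := by simp [wtw, hh]
  have h2 : wtw R u ≤ (L.map (wtw R)).sum := List.le_sum_of_mem (List.mem_map_of_mem hu)
  omega

lemma comb {R : Set (List (X × Bool))} {A : Set X} (hRsym : Symmetrized R)
    (hC6 : SmallCancellationC 6 R)
    (hno : ¬ ∃ Q S : List (X × Bool),
      (∀ p ∈ S, p.1 ∈ A) ∧ Q ++ S ∈ R ∧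
        ∃ L : List (List (X × Bool)),
          (∀ u ∈ L, IsPiece R u) ∧ L.length ≤ 3 ∧ L.flatten = Q)
    (L : List (List (X × Bool))) (hL : ∀ u ∈ L, IsPiece R u ∨ ∀ p ∈ u, p.1 ∈ A)
    (hR : L.flatten ∈ R) : 6 ≤ (L.map (wtw R)).sum := by
  by_cases hall : ∀ u ∈ L, IsPiece R u
  · exact (hC6 _ hR L hall rfl).trans (wtw_len R L)
  push Not at hall
  obtain ⟨b, hb, hbp⟩ := hall
  have hbA := (hL b hb).resolve_left hbp
  obtain ⟨L1, L2, rfl⟩ := List.append_of_mem hb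
  have hwb : wtw R b = 2 := by simp [wtw, hbp]
  have hsum : ((L1 ++ b :: L2).map (wtw R)).sum = ((L2 ++ L1).map (wtw R)).sum + 2 := by
    simp [hwb]; omega
  have hR2 : (L2 ++ L1).flatten ++ b ∈ R := by
    apply hRsym.1 _ hR
    have h1 := List.isRotated_append (l := (L1 ++ [b]).flatten) (l' := L2.flatten)
    have h2 := List.isRotated_append (l := b) (l' := L2.flatten ++ L1.flatten)
    have h3 := List.isRotated_append (l := L1.flatten) (l' := b ++ L2.flatten)
    simp only [List.flatten_append, List.flatten_cons] at h1 h2 h3 ⊢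
    refine h3.trans ?_
    simpa using h2
  have hLM : ∀ u ∈ L2 ++ L1, IsPiece R u ∨ ∀ p ∈ u, p.1 ∈ A := by
    intro u hu
    apply hL
    simp only [List.mem_append, List.mem_cons] at hu ⊢
    tauto
  rw [hsum]
  generalize L2 ++ L1 = M at *
  by_cases hall : ∀ u ∈ M, IsPiece R u
  · by_contra hlt
    apply hno
    refine ⟨M.flatten, b, hbA, hR2, M, hall, ?_, rfl⟩
    have := wtw_len R M
    omega
  push Not at hall
  obtain ⟨b', hb', hbp'⟩ := hall
  have hbA' := (hLM b' hb').resolve_left hbp'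
  obtain ⟨M1, M2, rfl⟩ := List.append_of_mem hb'
  have hwb' : wtw R b' = 2 := by simp [wtw, hbp']
  have hsum' : ((M1 ++ b' :: M2).map (wtw R)).sum
      = (M1.map (wtw R)).sum + (M2.map (wtw R)).sum + 2 := by
    simp [hwb']; omega
  rw [hsum']
  by_contra hlt
  have h1 := wtw_len R M1
  have h2 := wtw_len R M2
  apply hno
  by_cases hM1 : M1 = []
  · subst hM1
    refine ⟨M2.flatten, b ++ b', ?_, ?_, M2, wtw_one (by omega), by omega, rfl⟩
    · intro p hp
      rcases List.mem_append.1 hp with hp | hp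
      · exact hbA p hp
      · exact hbA' p hp
    · apply hRsym.1 _ hR2
      have h2 := List.isRotated_append (l := b') (l' := M2.flatten ++ b)
      simpa using h2
  · have : 0 < M1.length := List.length_pos_iff.2 hM1
    have hM2 : M2 = [] := List.length_eq_zero_iff.1 (by omega)
    subst hM2
    refine ⟨M1.flatten, b' ++ b, ?_, ?_, M1, wtw_one (by omega), by omega, rfl⟩
    · intro p hp
      rcases List.mem_append.1 hp with hp | hp
      · exact hbA' p hp
      · exact hbA p hp
    · simpa using hR2

end comb

section arcs
variable {D : Type} [Finite D]

lemma Cyc.inv {σ : Perm D} {l : List D} (h : Cyc σ l) : Cyc σ⁻¹ l.reverse := by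
  refine ⟨List.nodup_reverse.2 h.1, ?_, ?_⟩
  · rw [List.isChain_reverse]
    refine List.IsChain.imp ?_ h.2.1
    intro a b hab
    rw [← hab]
    exact inv_app σ a
  · intro x hx y hy
    rw [List.getLast?_reverse] at hx
    rw [List.head?_reverse] at hy
    rw [← h.2.2 y hy x hx, inv_app]

lemma Cyc.inv_cons {σ : Perm D} {x : D} {l : List D} (h : Cyc σ (x :: l)) :
    Cyc σ⁻¹ (x :: l.reverse) := by
  have := h.inv
  rw [List.reverse_cons] at this
  simpa using this.rot

/-- Split a list whose last element satisfies `P` after each element satisfying `P`. -/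
lemma split_arcs (P : D → Prop) (l : List D) (hl : ∀ x ∈ l.getLast?, P x) :
    ∃ L : List (List D), L.flatten = l ∧ ∀ a ∈ L, ∃ c x, a = c ++ [x] ∧ (∀ y ∈ c, ¬ P y) ∧ P x := by
  induction l with
  | nil => exact ⟨[], by simp⟩
  | cons y t ih =>
    cases t with
    | nil =>
      refine ⟨[[y]], by simp, ?_⟩
      intro a ha
      simp only [List.mem_singleton] at ha
      exact ⟨[], y, by simp [ha], by simp, hl y (by simp)⟩
    | cons b t =>
      obtain ⟨L, h1, h2⟩ := ih (by
        intro x hx; apply hl; simpa [List.getLast?_cons] using hx)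
      by_cases hy : P y
      · refine ⟨[y] :: L, by simp [h1], ?_⟩
        intro a ha
        rcases List.mem_cons.1 ha with rfl | ha
        · exact ⟨[], y, by simp, by simp, hy⟩
        · exact h2 a ha
      · cases L with
        | nil => simp at h1
        | cons a L =>
          refine ⟨(y :: a) :: L, by simpa using h1, ?_⟩
          intro a' ha'
          rcases List.mem_cons.1 ha' with rfl | ha'
          · obtain ⟨c, x, rfl, h3, h4⟩ := h2 a List.mem_cons_self
            refine ⟨y :: c, x, by simp, ?_, h4⟩
            intro z hz
            rcases List.mem_cons.1 hz with rfl | hz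
            · exact hy
            · exact h3 z hz
          · exact h2 a' (List.mem_cons_of_mem _ ha')

lemma sum_flatten_map (L : List (List D)) (w : D → ℕ) :
    (L.flatten.map w).sum = (L.map (fun a => (a.map w).sum)).sum := by
  induction L with
  | nil => simp
  | cons a t ih => rw [List.flatten_cons, List.map_append, List.sum_append, ih, List.map_cons, List.sum_cons]

variable {X : Type*} {R : Set (List (X × Bool))} {A : Set X} {ℓ : D → X × Bool} {e f : Perm D}
  {lo : List D}

/-- branching darts -/
def br (e f : Perm D) (d : D) : Prop := e (f (e (f d))) ≠ d

lemma arc_rev (h : Base e f ℓ) {a : List D} (ha : a.IsChain (fun x y => f x = y ∧ ¬ br e f x)) :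
    (a.map e).IsChain (fun x y => f⁻¹ x = y) := by
  rw [List.isChain_map]
  refine List.IsChain.imp ?_ ha
  rintro x y ⟨h1, h2⟩
  have h3 : e (f (e (f x))) = x := not_not.1 h2
  have h4 : f (e y) = e x := by
    rw [← h.inv (f (e y)), ← h1, h3]
  rw [← h4, inv_app]

lemma arc_lo (h : Base e f ℓ) (hlo : Cyc f lo) {x : D} {c : List D}
    (ha : (x :: c).IsChain (fun x y => f x = y ∧ ¬ br e f x)) :
    ∀ y ∈ x :: c, (e y ∈ lo ↔ e x ∈ lo) := by
  intro y hy
  have h1 := arc_rev h ha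
  rw [List.map_cons] at h1
  have h2 := chain_cs h1 (e y) (by
    rw [← List.map_cons]; exact List.mem_map_of_mem hy)
  rw [cs_inv_eq] at h2
  exact (hlo.mem_of_cs h2).symm

lemma MSt.act_f (h : MSt R A ℓ e f lo) {d : D} : e (f d) ≠ f d ↔ e d ≠ d := by
  constructor
  · intro h1 h2
    rw [h.base.iso d h2] at h1
    exact h1 h2
  · intro h1 h2
    have := f.injective (h.base.iso _ h2)
    rw [this] at h2
    exact h1 h2

lemma MSt.piece (h : MSt R A ℓ e f lo) (hRred : ∀ w ∈ R, WordReduced w)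
    (hRsym : Symmetrized R) {x : D} {c : List D}
    (ha : (x :: c).IsChain (fun x y => f x = y ∧ ¬ br e f x)) (hnd : (x :: c).Nodup)
    (hact : ∀ y ∈ x :: c, e y ≠ y) (hlo : x ∉ lo) (hlo' : e x ∉ lo) :
    IsPiece R ((x :: c).map ℓ) := by
  have hx : e x ≠ x := hact x List.mem_cons_self
  obtain ⟨l1, hc1⟩ := exists_cyc f x
  obtain ⟨l2, hc2⟩ := exists_cyc f (e x)
  have hne := h.no_mirror hRred hRsym hx hlo hlo' hc1 hc2
  have hR1 := h.face hRred hRsym hx hlo hc1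
  have hR2 := h.face hRred hRsym (fun hh => hx (e.injective hh)) hlo' hc2
  have hR3 : ℓ x :: wordInv (l2.map ℓ) ∈ R := by
    have h1 := hRsym.2 _ hR2
    rw [List.map_cons, wordInv_cons, h.base.lab x hx, ix_ix] at h1
    apply hRsym.1 _ h1
    have := List.isRotated_append (l := wordInv (l2.map ℓ)) (l' := [ℓ x])
    simpa using this
  refine ⟨by simp, _, _, hR1, hR3, ?_, ?_, ?_⟩
  · intro hh
    rw [List.map_cons] at hh
    exact hne (List.cons_inj_right _ |>.1 hh)
  · rw [List.map_cons, List.map_cons, List.cons_prefix_cons]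
    refine ⟨rfl, List.IsPrefix.map ℓ ?_⟩
    refine hc1.prefix_of_chain (List.IsChain.imp ?_ ha) hnd
    exact fun a b hab => hab.1
  · rw [List.map_cons, List.cons_prefix_cons]
    refine ⟨rfl, ?_⟩
    have h1 := arc_rev h.base ha
    rw [List.map_cons] at h1
    have h2 : (e x :: c.map e).Nodup := by
      rw [← List.map_cons]; exact hnd.map e.injective
    have h3 := (hc2.inv_cons.prefix_of_chain h1 h2).map (fun d => ix (ℓ d))
    have h4 : c.map ℓ = (c.map e).map (fun d => ix (ℓ d)) := by
      rw [List.map_map]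
      apply List.map_congr_left
      intro y hy
      simp [h.base.lab y (hact y (List.mem_cons_of_mem _ hy))]
    have h5 : wordInv (l2.map ℓ) = l2.reverse.map (fun d => ix (ℓ d)) := by
      simp [wordInv, ix, Function.comp_def]
    rw [h4, h5]
    exact h3

open Classical in
noncomputable def wti (e f : Perm D) (lo : List D) (d : D) : ℕ :=
  (if br e f d then 1 else 0) + (if br e f d ∧ e d ∈ lo then 1 else 0)

lemma MSt.inner (h : MSt R A ℓ e f lo) (hRred : ∀ w ∈ R, WordReduced w)
    (hRsym : Symmetrized R) (hC6 : SmallCancellationC 6 R)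
    (hno : ¬ ∃ Q S : List (X × Bool),
      (∀ p ∈ S, p.1 ∈ A) ∧ Q ++ S ∈ R ∧
        ∃ L : List (List (X × Bool)),
          (∀ u ∈ L, IsPiece R u) ∧ L.length ≤ 3 ∧ L.flatten = Q)
    {d : D} (hd : e d ≠ d) (hlo : d ∉ lo) :
    ∃ l, Cyc f l ∧ d ∈ l ∧ 6 ≤ (l.map (wti e f lo)).sum := by
  classical
  obtain ⟨t, ht⟩ := exists_cyc f d
  have hactl : ∀ l, Cyc f l → d ∈ l → ∀ y ∈ l, e y ≠ y := by
    intro l hl hdl y hy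
    have := cs_inv (σ := f) (g := fun x => e x ≠ x) (fun x => propext h.act_f) (hl.cs hy hdl)
    simp only [eq_iff_iff] at this
    exact this.2 hd
  have hlol : ∀ l, Cyc f l → d ∈ l → ∀ y ∈ l, y ∉ lo := by
    intro l hl hdl y hy hh
    exact hlo ((h.cyc.mem_of_cs (hl.cs hy hdl)).1 hh)
  have hRl : ∀ l, Cyc f l → d ∈ l → l.map ℓ ∈ R := by
    intro l hl hdl
    obtain ⟨t, ht, hr⟩ := hl.head hdl
    exact hRsym.1 _ (h.face hRred hRsym hd hlo ht) _ (hr.symm.map ℓ)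
  -- a word of an arc is a piece or has letters in A
  have harc : ∀ a : List D, a ≠ [] → a.IsChain (fun x y => f x = y ∧ ¬ br e f x) → a.Nodup →
      (∀ y ∈ a, e y ≠ y) → (∀ y ∈ a, y ∉ lo) →
      (IsPiece R (a.map ℓ) ∨ ((∀ p ∈ a.map ℓ, p.1 ∈ A) ∧ ∀ y ∈ a, e y ∈ lo)) := by
    intro a hne hch hnd hac hlo
    cases a with
    | nil => exact absurd rfl hne
    | cons x c =>
      have h2 := arc_lo h.base h.cyc hch
      by_cases hx : e x ∈ lo
      · right
        refine ⟨?_, fun y hy => (h2 y hy).2 hx⟩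
        intro p hp
        obtain ⟨y, hy, rfl⟩ := List.mem_map.1 hp
        have := h.labA _ ((h2 y hy).2 hx)
        rwa [h.base.lab y (hac y hy), ix_fst] at this
      · left
        exact h.piece hRred hRsym hch hnd hac (hlo x List.mem_cons_self) hx
  have hmem : d ∈ d :: t := List.mem_cons_self
  by_cases hbr : ∃ x ∈ d :: t, br e f x
  · obtain ⟨x, hx, hxb⟩ := hbr
    obtain ⟨s, hs, hr⟩ := ht.concat hx
    have hds := hr.mem_iff.1 hmem
    refine ⟨s ++ [x], hs, hds, ?_⟩
    obtain ⟨L, hL1, hL2⟩ := split_arcs (br e f) (s ++ [x]) (by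
      intro y hy
      have : x = y := by simpa using hy
      exact this ▸ hxb)
    have hsub : ∀ a ∈ L, a <:+: s ++ [x] := by
      intro a ha
      rw [← hL1]
      obtain ⟨L1, L2, rfl⟩ := List.append_of_mem ha
      exact ⟨L1.flatten, L2.flatten, by simp⟩
    have hLA : ∀ a ∈ L, (IsPiece R (a.map ℓ) ∨ ((∀ p ∈ a.map ℓ, p.1 ∈ A) ∧ ∀ y ∈ a, e y ∈ lo)) := by
      intro a ha
      have hsa := hsub a ha
      obtain ⟨c, y, rfl, h3, h4⟩ := hL2 a ha
      apply harc
      · simp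
      · have h5 : (c ++ [y]).IsChain (fun x y => f x = y) := hs.2.1.infix hsa
        rw [List.isChain_append] at h5 ⊢
        refine ⟨?_, List.isChain_singleton _, ?_⟩
        · refine List.IsChain.imp_of_mem_imp ?_ h5.1
          intro a b ha hb hab
          exact ⟨hab, h3 a ha⟩
        · intro a ha b hb
          exact ⟨h5.2.2 a ha b hb, h3 a (List.mem_of_mem_getLast? ha)⟩
      · exact hs.1.sublist hsa.sublist
      · exact fun z hz => hactl _ hs hds z (hsa.subset hz)
      · exact fun z hz => hlol _ hs hds z (hsa.subset hz)
    have h6 := comb hRsym hC6 hno (L.map (List.map ℓ)) (by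
      intro u hu
      obtain ⟨a, ha, rfl⟩ := List.mem_map.1 hu
      rcases hLA a ha with h | h
      · exact Or.inl h
      · exact Or.inr h.1) (by
      rw [← List.map_flatten, hL1]
      exact hRl _ hs hds)
    refine h6.trans ?_
    rw [← hL1, sum_flatten_map, List.map_map]
    apply List.sum_le_sum
    intro a ha
    have h7 := hLA a ha
    obtain ⟨c, y, rfl, h3, h4⟩ := hL2 a ha
    simp only [Function.comp_apply, wtw]
    rw [List.map_append (f := wti e f lo), List.sum_append]
    have h8 : wti e f lo y = 1 + if e y ∈ lo then 1 else 0 := by simp [wti, h4]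
    have h9 : (List.map (wti e f lo) [y]).sum = 1 + if e y ∈ lo then 1 else 0 := by simp [h8]
    rw [h9]
    split_ifs with c1 c2 c2
    · omega
    · omega
    · omega
    · exact absurd ((h7.resolve_left c1).2 y (by simp)) c2
  · exfalso
    push Not at hbr
    have h1 := harc (d :: t) (by simp) (by
      refine List.IsChain.imp_of_mem_imp ?_ ht.2.1
      intro a b ha hb hab
      exact ⟨hab, hbr a ha⟩) ht.1 (hactl _ ht hmem) (hlol _ ht hmem)
    have h6 := comb hRsym hC6 hno [(d :: t).map ℓ] (by
      intro u hu
      rw [List.mem_singleton] at hu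
      subst hu
      rcases h1 with h | h
      · exact Or.inl h
      · exact Or.inr h.1) (by
      simpa using hRl _ ht hmem)
    have h7 : wtw R ((d :: t).map ℓ) ≤ 2 := by unfold wtw; split_ifs <;> omega
    rw [List.map_singleton, List.sum_singleton] at h6
    omega

end arcs

section curv
variable {D : Type} [Finite D]

lemma cycle_sum [Fintype D] {σ : Perm D} {w : D → ℕ} {c : ℕ}
    (h : ∀ d, ∃ l, Cyc σ l ∧ d ∈ l ∧ c ≤ (l.map w).sum) : c * z σ ≤ ∑ d, w d := by
  classical
  have : Fintype (Quotient (cs σ)) := Fintype.ofFinite _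
  rw [← Finset.sum_fiberwise (s := Finset.univ) (g := fun d => Quotient.mk (cs σ) d)]
  have h1 : c * z σ = ∑ _q : Quotient (cs σ), c := by
    rw [z, nc, Nat.card_eq_fintype_card]
    simp [mul_comm]
  rw [h1]
  apply Finset.sum_le_sum
  intro q _
  induction q using Quotient.inductionOn with
  | h d =>
    obtain ⟨l, hl, hd, hc⟩ := h d
    refine hc.trans ?_
    rw [← List.sum_toFinset w hl.1]
    apply Finset.sum_le_sum_of_subset
    intro x hx
    rw [List.mem_toFinset] at hx
    rw [Finset.mem_filter]
    exact ⟨Finset.mem_univ _, Quotient.sound (hl.cs hx hd)⟩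

lemma cyc_single {σ : Perm D} {d : D} (h : σ d = d) : Cyc σ [d] := by
  refine ⟨by simp, by simp, ?_⟩
  intro x hx y hy
  have h1 : d = x := by simpa using hx
  have h2 : d = y := by simpa using hy
  subst h1; subst h2; exact h

lemma cyc_pair {σ : Perm D} {d : D} (h : σ d ≠ d) (h2 : σ (σ d) = d) : Cyc σ [d, σ d] := by
  refine ⟨by simpa using h.symm, by simp, ?_⟩
  intro x hx y hy
  have h3 : σ d = x := by simpa using hx
  have h4 : d = y := by simpa using hy
  subst h3; subst h4; exact h2

variable {X : Type*} {R : Set (List (X × Bool))} {A : Set X} {ℓ : D → X × Bool} {e f : Perm D}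
  {lo : List D}

lemma MSt.comps (h : MSt R A ℓ e f lo) {o : D} (ho : e o ≠ o) :
    Nat.card {d // e d = d} + 1 ≤ nc (cm e f) := by
  classical
  rw [← Finite.card_option]
  set g : D → Option {d // e d = d} := fun d => if hd : e d = d then some ⟨d, hd⟩ else none with hg
  have hle : cm e f ≤ Setoid.ker g := by
    apply cm_le
    · intro x
      change g (e x) = g x
      by_cases hx : e x = x
      · rw [hx]
      · have h2 : ¬ e (e x) = e x := fun hh => hx (e.injective hh)
        simp only [hg, dif_neg hx, dif_neg h2]
    · intro x
      change g (f x) = g x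
      by_cases hx : e x = x
      · rw [h.base.iso x hx]
      · have h2 : ¬ e (f x) = f x := h.act_f.2 hx
        simp only [hg, dif_neg hx, dif_neg h2]
  apply Nat.card_le_card_of_surjective (Quotient.lift g (fun a b hab => hle hab))
  intro y
  cases y with
  | none => exact ⟨Quotient.mk _ o, by simp [hg, ho]⟩
  | some d => exact ⟨Quotient.mk _ d.1, by simp [hg, d.2]⟩

lemma MSt.false (h : MSt R A ℓ e f lo) (hRred : ∀ w ∈ R, WordReduced w)
    (hRsym : Symmetrized R) (hC6 : SmallCancellationC 6 R)
    (hno : ¬ ∃ Q S : List (X × Bool),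
      (∀ p ∈ S, p.1 ∈ A) ∧ Q ++ S ∈ R ∧
        ∃ L : List (List (X × Bool)),
          (∀ u ∈ L, IsPiece R u) ∧ L.length ≤ 3 ∧ L.flatten = Q) : False := by
  classical
  have : Fintype D := Fintype.ofFinite D
  have hlone : lo ≠ [] := by
    rintro rfl
    exact h.ne rfl
  obtain ⟨o, ho⟩ := List.exists_mem_of_ne_nil lo hlone
  have hoact := h.act o ho
  set n : Perm D := e * f with hn
  have nx : ∀ x, n x = e (f x) := fun x => rfl
  have nact : ∀ x, e x = x → n x = x := fun x hx => by rw [nx, h.base.iso x hx, hx]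
  have nfix : ∀ x, e x ≠ x → n x ≠ x := by
    intro x hx hh
    apply h.fe hRred hRsym hx
    rw [nx] at hh
    rw [← h.base.inv (f x), hh]
  have nbr : ∀ x, br e f (n x) ↔ br e f x := by
    intro x
    unfold br
    rw [← nx, ← nx, ← nx, ← nx, n.injective.ne_iff]
  have actn : ∀ x, e (n x) ≠ n x ↔ e x ≠ x := by
    intro x
    rw [nx, e.injective.ne_iff]
    exact h.act_f
  set wf : D → ℕ := fun d => if e d = d then 6 else if d ∈ lo then (if d = o then 6 else 0)
    else wti e f lo d with hwf
  set wn : D → ℕ := fun d => if e d = d then 6 else if br e f d then 2 else 3 with hwn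
  set we : D → ℕ := fun d => if e d = d then 2 else 1 with hwe
  have Se : 2 * z e ≤ ∑ d, we d := by
    apply cycle_sum
    intro d
    by_cases hd : e d = d
    · exact ⟨[d], cyc_single hd, by simp, by simp [hwe, hd]⟩
    · have h2 : ¬ e (e d) = e d := fun hh => hd (e.injective hh)
      exact ⟨[d, e d], cyc_pair hd (h.base.inv d), by simp, by simp only [List.map_cons, List.map_nil, List.sum_cons, List.sum_nil, hwe, if_neg hd, if_neg h2]; omega⟩
  have Sf : 6 * z f ≤ ∑ d, wf d := by
    apply cycle_sum
    intro d
    by_cases hd : e d = d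
    · exact ⟨[d], cyc_single (h.base.iso d hd), by simp, by simp [hwf, hd]⟩
    by_cases hlo : d ∈ lo
    · refine ⟨lo, h.cyc, hlo, ?_⟩
      have : wf o = 6 := by simp [hwf, hoact, ho]
      rw [← this]
      exact List.le_sum_of_mem (List.mem_map_of_mem ho)
    · obtain ⟨l, hl, hdl, hs⟩ := h.inner hRred hRsym hC6 hno hd hlo
      refine ⟨l, hl, hdl, hs.trans (le_of_eq ?_)⟩
      congr 1
      apply List.map_congr_left
      intro y hy
      have h1 : e y ≠ y := by
        have := cs_inv (σ := f) (g := fun x => e x ≠ x) (fun x => propext h.act_f) (hl.cs hy hdl)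
        simp only [eq_iff_iff] at this
        exact this.2 hd
      have h2 : y ∉ lo := fun hh => hlo ((h.cyc.mem_of_cs (hl.cs hy hdl)).1 hh)
      simp only [hwf, if_neg h1, if_neg h2]
  have Sn : 6 * z n ≤ ∑ d, wn d := by
    apply cycle_sum
    intro d
    by_cases hd : e d = d
    · exact ⟨[d], cyc_single (nact d hd), by simp, by simp [hwn, hd]⟩
    by_cases hb : br e f d
    · obtain ⟨t, ht⟩ := exists_cyc n d
      refine ⟨d :: t, ht, by simp, ?_⟩
      have hw : ∀ y ∈ d :: t, wn y = 2 := by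
        intro y hy
        have hc := ht.cs hy List.mem_cons_self
        have h1 := cs_inv (σ := n) (g := fun x => e x ≠ x) (fun x => propext (actn x)) hc
        have h2 := cs_inv (σ := n) (g := fun x => br e f x) (fun x => propext (nbr x)) hc
        simp only [eq_iff_iff] at h1 h2
        simp only [hwn, if_neg (h1.2 hd), if_pos (h2.2 hb)]
      have hlen : 3 ≤ (d :: t).length := by
        cases t with
        | nil => exact absurd (ht.2.2 d (by simp) d (by simp)) (nfix d hd)
        | cons a t =>
          cases t with
          | nil =>
            exfalso
            have h1 := ht.2.1
            rw [List.isChain_cons_cons] at h1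
            have h2 := ht.2.2 a (by simp) d (by simp)
            apply hb
            rw [← nx, ← nx, h1.1, h2]
          | cons b t => simp
      have : ((d :: t).map wn) = (d :: t).map (fun _ => 2) := List.map_congr_left hw
      rw [this]
      simp only [List.map_const', List.sum_replicate, smul_eq_mul]
      omega
    · have h2 : n (n d) = d := not_not.1 hb
      have h3 : ¬ e (n d) = n d := (actn d).2 hd
      have h4 : ¬ br e f (n d) := fun hh => hb ((nbr d).1 hh)
      exact ⟨[d, n d], cyc_pair (nfix d hd) h2, by simp, by
        simp only [List.map_cons, List.map_nil, List.sum_cons, List.sum_nil, hwn, if_neg hd, if_neg h3, if_neg hb, if_neg h4]; omega⟩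
  -- pointwise comparison
  set jt : D → ℕ := fun d => if d ∈ lo ∧ br e f d then 1 else 0 with hjt
  set jj : D → ℕ := fun d => if e d ≠ d ∧ d ∉ lo ∧ br e f d ∧ e d ∈ lo then 1 else 0 with hjj
  have hpt : ∀ d, 3 * we d + wf d + wn d + jt d
      = 6 + 12 * (if e d = d then 1 else 0) + 6 * (if d = o then 1 else 0) + jj d := by
    intro d
    by_cases hd : e d = d
    · have h1 : d ∉ lo := fun hh => h.act d hh hd
      have h2 : d ≠ o := by rintro rfl; exact h1 ho
      simp [hwe, hwf, hwn, hjt, hjj, hd, h1, h2]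
    · by_cases h1 : d ∈ lo
      · by_cases hb : br e f d <;> by_cases hdo : d = o <;>
          simp only [hwe, hwf, hwn, hjt, hjj, hd, h1, hb, hdo, ho, if_true, if_false, not_true_eq_false, ne_eq, not_false_eq_true, and_true, true_and, and_false, false_and] <;> simp_all
      · have h2 : d ≠ o := by rintro rfl; exact h1 ho
        by_cases hb : br e f d <;> by_cases h3 : e d ∈ lo <;>
          simp [hwe, hwf, hwn, hjt, hjj, wti, hd, h1, h2, hb, h3]
  have hJ : ∑ d, jj d ≤ ∑ d, jt d := by
    simp only [hjj, hjt, Finset.sum_boole, Nat.cast_id]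
    apply Finset.card_le_card_of_injOn (fun d => n⁻¹ d)
    · intro d hd
      simp only [Finset.coe_filter, Finset.mem_univ, true_and, Set.mem_setOf_eq] at hd ⊢
      have h1 : n (n⁻¹ d) = d := app_inv n d
      constructor
      · apply h.cyc.of_app_mem
        have h2 : f (n⁻¹ d) = e d := by
          rw [← h.base.inv (f (n⁻¹ d)), ← nx, h1]
        rw [h2]; exact hd.2.2.2
      · rw [← nbr, h1]; exact hd.2.2.1
    · exact n⁻¹.injective.injOn
  have htot := Finset.sum_congr (rfl : (Finset.univ : Finset D) = Finset.univ) (fun d _ => hpt d)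
  simp only [Finset.sum_add_distrib, ← Finset.mul_sum] at htot
  have hI : ∑ d, (if e d = d then 1 else 0) = Nat.card {d // e d = d} := by
    rw [Finset.sum_boole, Nat.card_eq_fintype_card, Fintype.card_subtype]; rfl
  have ho1 : ∑ d, (if d = o then 1 else 0) = 1 := by simp
  have hc6 : ∑ _d : D, 6 = 6 * Nat.card D := by
    rw [Nat.card_eq_fintype_card]; simp [mul_comm]
  rw [hI, ho1, hc6] at htot
  have hcomp := h.comps hoact
  have hpl := h.base.pl
  unfold Planar at hpl
  rw [← hn] at hpl
  omega

end curv

section join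

lemma chain_concat {D : Type} {σ τ : Perm D} {s : List D} {a : D}
    (h : (s ++ [a]).IsChain (fun x y => σ x = y)) (hh : ∀ x ∈ s, τ x = σ x) :
    (s ++ [a]).IsChain (fun x y => τ x = y) := by
  rw [List.isChain_append] at h ⊢
  refine ⟨?_, List.isChain_singleton _, ?_⟩
  · refine List.IsChain.imp_of_mem_imp ?_ h.1
    intro x y hx _ hxy
    rw [hh x hx, hxy]
  · intro x hx y hy
    rw [hh x (List.mem_of_mem_getLast? hx)]
    exact h.2.2 x hx y hy

lemma Cyc.mul_swap {D : Type} [Finite D] [DecidableEq D] {σ : Perm D} {s1 s2 : List D} {a b : D}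
    (h1 : Cyc σ (s1 ++ [a])) (h2 : Cyc σ (s2 ++ [b])) (hd : List.Disjoint (s1 ++ [a]) (s2 ++ [b])) :
    Cyc (σ * swap a b) ((s1 ++ [a]) ++ (s2 ++ [b])) := by
  have n1 : a ∉ s1 := by
    have := h1.1; rw [List.nodup_append] at this
    intro hh; exact this.2.2 a hh a (by simp) rfl
  have n2 : b ∉ s2 := by
    have := h2.1; rw [List.nodup_append] at this
    intro hh; exact this.2.2 b hh b (by simp) rfl
  have n3 : b ∉ s1 := fun hh => hd (a := b) (by simp [hh]) (by simp)
  have n4 : a ∉ s2 := fun hh => hd (a := a) (by simp) (by simp [hh])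
  refine ⟨List.Nodup.append h1.1 h2.1 hd, ?_, ?_⟩
  · rw [List.isChain_append]
    refine ⟨chain_concat h1.2.1 ?_, chain_concat h2.2.1 ?_, ?_⟩
    · intro x hx
      rw [Perm.mul_apply, swap_apply_of_ne_of_ne]
      · rintro rfl; exact n1 hx
      · rintro rfl; exact n3 hx
    · intro x hx
      rw [Perm.mul_apply, swap_apply_of_ne_of_ne]
      · rintro rfl; exact n4 hx
      · rintro rfl; exact n2 hx
    · intro x hx y hy
      have hx' : a = x := by simpa using hx
      subst hx'
      rw [Perm.mul_apply, swap_apply_left]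
      exact h2.2.2 b (by simp) y hy
  · intro x hx y hy
    have hx' : b = x := by
      rw [← List.append_assoc, List.getLast?_concat] at hx
      exact Option.some_injective _ hx
    subst hx'
    rw [Perm.mul_apply, swap_apply_right]
    apply h1.2.2 a (by simp) y
    cases s1 with
    | nil => simpa using hy
    | cons c s1 => simpa using hy

variable {D1 D2 : Type} [Finite D1] [Finite D2]

lemma z_sum (f1 : Perm D1) (f2 : Perm D2) : z f1 + z f2 ≤ z (Perm.sumCongr f1 f2) := by
  unfold z nc
  rw [← Nat.card_sum]
  apply Nat.card_le_card_of_surjective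
    (Quotient.lift (Sum.map (Quotient.mk (cs f1)) (Quotient.mk (cs f2))) ?_)
  · intro q
    cases q with
    | inl q =>
      induction q using Quotient.inductionOn with
      | h a => exact ⟨Quotient.mk _ (Sum.inl a), rfl⟩
    | inr q =>
      induction q using Quotient.inductionOn with
      | h a => exact ⟨Quotient.mk _ (Sum.inr a), rfl⟩
  · intro a b hab
    refine cs_inv ?_ hab
    intro x
    cases x with
    | inl x => exact congrArg Sum.inl (Quotient.sound (cs_app f1 x))
    | inr x => exact congrArg Sum.inr (Quotient.sound (cs_app f2 x))

lemma nc_sum (e1 f1 : Perm D1) (e2 f2 : Perm D2) :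
    nc (cm (Perm.sumCongr e1 e2) (Perm.sumCongr f1 f2)) ≤ nc (cm e1 f1) + nc (cm e2 f2) := by
  unfold nc
  rw [← Nat.card_sum]
  set S := cm (Perm.sumCongr e1 e2) (Perm.sumCongr f1 f2) with hS
  have k1 : cm e1 f1 ≤ Setoid.comap Sum.inl S := by
    apply cm_le
    · intro x; exact cm_a (Perm.sumCongr e1 e2) (Perm.sumCongr f1 f2) (Sum.inl x)
    · intro x; exact cm_b (Perm.sumCongr e1 e2) (Perm.sumCongr f1 f2) (Sum.inl x)
  have k2 : cm e2 f2 ≤ Setoid.comap Sum.inr S := by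
    apply cm_le
    · intro x; exact cm_a (Perm.sumCongr e1 e2) (Perm.sumCongr f1 f2) (Sum.inr x)
    · intro x; exact cm_b (Perm.sumCongr e1 e2) (Perm.sumCongr f1 f2) (Sum.inr x)
  apply Nat.card_le_card_of_surjective
    (Sum.elim (Quotient.lift (fun a => Quotient.mk S (Sum.inl a)) ?_)
      (Quotient.lift (fun a => Quotient.mk S (Sum.inr a)) ?_))
  · intro q
    induction q using Quotient.inductionOn with
    | h a =>
      cases a with
      | inl a => exact ⟨Sum.inl (Quotient.mk _ a), rfl⟩
      | inr a => exact ⟨Sum.inr (Quotient.mk _ a), rfl⟩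
  · intro a b hab
    exact Quotient.sound (k1 hab)
  · intro a b hab
    exact Quotient.sound (k2 hab)

lemma Cyc.map_of {E : Type} [Finite E] {σ : Perm D1} {τ : Perm E} {g : D1 → E}
    (hg : Function.Injective g) (hc : ∀ x, τ (g x) = g (σ x)) {l : List D1} (h : Cyc σ l) :
    Cyc τ (l.map g) := by
  refine ⟨h.1.map hg, ?_, ?_⟩
  · rw [List.isChain_map]
    refine List.IsChain.imp ?_ h.2.1
    intro a b hab
    rw [hc, hab]
  · intro x hx y hy
    rw [List.getLast?_map, Option.mem_map] at hx
    rw [List.head?_map, Option.mem_map] at hy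
    obtain ⟨x, hx, rfl⟩ := hx
    obtain ⟨y, hy, rfl⟩ := hy
    rw [hc, h.2.2 x hx y hy]

variable {X : Type*}

lemma join {e1 f1 : Perm D1} {e2 f2 : Perm D2} {ℓ1 : D1 → X × Bool} {ℓ2 : D2 → X × Bool}
    (h1 : Base e1 f1 ℓ1) (h2 : Base e2 f2 ℓ2) {l1 : List D1} {l2 : List D2}
    (c1 : Cyc f1 l1) (c2 : Cyc f2 l2) (n1 : l1 ≠ []) (n2 : l2 ≠ [])
    (a1 : ∀ d ∈ l1, e1 d ≠ d) (a2 : ∀ d ∈ l2, e2 d ≠ d) :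
    ∃ f : Perm (D1 ⊕ D2), Base (Perm.sumCongr e1 e2) f (Sum.elim ℓ1 ℓ2) ∧
      Cyc f (l1.map Sum.inl ++ l2.map Sum.inr) ∧
      (∀ l, Cyc f1 l → (∀ x ∈ l, x ∉ l1) → Cyc f (l.map Sum.inl)) ∧
      (∀ l, Cyc f2 l → (∀ x ∈ l, x ∉ l2) → Cyc f (l.map Sum.inr)) := by
  classical
  obtain ⟨s1, a, rfl⟩ : ∃ s a, l1 = s ++ [a] :=
    ⟨l1.dropLast, l1.getLast n1, (List.dropLast_append_getLast n1).symm⟩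
  obtain ⟨s2, b, rfl⟩ : ∃ s a, l2 = s ++ [a] :=
    ⟨l2.dropLast, l2.getLast n2, (List.dropLast_append_getLast n2).symm⟩
  set E := Perm.sumCongr e1 e2 with hE
  set F := Perm.sumCongr f1 f2 with hF
  have aa := a1 a (by simp)
  have ab := a2 b (by simp)
  have hFl : ∀ x, F (Sum.inl x) = Sum.inl (f1 x) := fun x => rfl
  have hFr : ∀ x, F (Sum.inr x) = Sum.inr (f2 x) := fun x => rfl
  have hEl : ∀ x, E (Sum.inl x) = Sum.inl (e1 x) := fun x => rfl
  have hEr : ∀ x, E (Sum.inr x) = Sum.inr (e2 x) := fun x => rfl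
  have hside : cm E F ≤ Setoid.ker (Sum.isLeft : D1 ⊕ D2 → Bool) := by
    apply cm_le
    · intro x; cases x <;> rfl
    · intro x; cases x <;> rfl
  have hnab : ¬ cm E F (Sum.inl a) (Sum.inr b) := by
    intro hh
    have : Sum.isLeft (Sum.inl a : D1 ⊕ D2) = Sum.isLeft (Sum.inr b : D1 ⊕ D2) := hside hh
    simp at this
  set f := F * swap (Sum.inl a) (Sum.inr b) with hf
  have hcsab : cs f (Sum.inl a) (Sum.inr b) := by
    apply sameCycle_swap
    intro hh
    exact hnab ((le_sup_right : cs F ≤ cm E F) hh)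
  refine ⟨f, ⟨?_, ?_, ?_, ?_⟩, ?_, ?_, ?_⟩
  · intro x
    cases x with
    | inl x => rw [hEl, hEl, h1.inv]
    | inr x => rw [hEr, hEr, h2.inv]
  · intro x hx
    cases x with
    | inl x =>
      rw [hEl] at hx
      have hx' := Sum.inl_injective hx
      rw [hf, Perm.mul_apply, swap_apply_of_ne_of_ne, hFl, h1.iso x hx']
      · intro hh; rw [Sum.inl_injective hh] at hx'; exact aa hx'
      · simp
    | inr x =>
      rw [hEr] at hx
      have hx' := Sum.inr_injective hx
      rw [hf, Perm.mul_apply, swap_apply_of_ne_of_ne, hFr, h2.iso x hx']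
      · simp
      · intro hh; rw [Sum.inr_injective hh] at hx'; exact ab hx'
  · intro x hx
    cases x with
    | inl x =>
      rw [hEl] at hx ⊢
      exact h1.lab x (fun hh => hx (congrArg _ hh))
    | inr x =>
      rw [hEr] at hx ⊢
      exact h2.lab x (fun hh => hx (congrArg _ hh))
  · have p1 := h1.pl
    have p2 := h2.pl
    unfold Planar at *
    have q1 : z e1 + z e2 ≤ z E := z_sum e1 e2
    have q2 : z f1 + z f2 ≤ z F := z_sum f1 f2
    have q3 : z (e1 * f1) + z (e2 * f2) ≤ z (E * F) := by
      rw [hE, hF, Perm.sumCongr_mul]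
      exact z_sum _ _
    have q4 : z F ≤ z f + 1 := z_mul_swap F _ _
    have q5 : z (E * F) ≤ z (E * f) + 1 := by
      rw [hf, ← mul_assoc]
      exact z_mul_swap (E * F) _ _
    have q6 := nc_sum e1 f1 e2 f2
    rw [← hE, ← hF] at q6
    have q7 : cm E F ≤ cm E f := by
      apply cm_le
      · exact cm_a _ _
      · intro x
        have r1 : cm E f (Sum.inl a) (Sum.inr b) := (le_sup_right : cs f ≤ cm E f) hcsab
        have r2 := rel_swap r1 x
        have r3 := cm_b E f (swap (Sum.inl a) (Sum.inr b) x)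
        have r4 : f (swap (Sum.inl a) (Sum.inr b) x) = F x := by
          rw [hf, Perm.mul_apply, swap_apply_self]
        rw [r4] at r3
        exact Setoid.trans' _ r3 r2
    have q8 := nc_lt q7 ((le_sup_right : cs f ≤ cm E f) hcsab) hnab
    have q9 : Nat.card (D1 ⊕ D2) = Nat.card D1 + Nat.card D2 := Nat.card_sum
    omega
  · have k1 : Cyc F ((s1 ++ [a]).map Sum.inl) := c1.map_of Sum.inl_injective hFl
    have k2 : Cyc F ((s2 ++ [b]).map Sum.inr) := c2.map_of Sum.inr_injective hFr
    rw [List.map_append, List.map_singleton] at k1 k2 ⊢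
    rw [List.map_append (f := Sum.inr), List.map_singleton]
    refine k1.mul_swap k2 ?_
    intro x hx hx'
    rw [← List.map_singleton (f := Sum.inl), ← List.map_append] at hx
    rw [← List.map_singleton (f := Sum.inr), ← List.map_append] at hx'
    obtain ⟨y, _, rfl⟩ := List.mem_map.1 hx
    obtain ⟨y', _, hy⟩ := List.mem_map.1 hx'
    simp at hy
  · intro l hl hdis
    have k1 : Cyc F (l.map Sum.inl) := hl.map_of Sum.inl_injective hFl
    apply k1.congr
    intro x hx
    obtain ⟨y, hy, rfl⟩ := List.mem_map.1 hx
    rw [hf, Perm.mul_apply, swap_apply_of_ne_of_ne]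
    · intro hh; rw [Sum.inl_injective hh] at hy; exact hdis a hy (by simp)
    · simp
  · intro l hl hdis
    have k1 : Cyc F (l.map Sum.inr) := hl.map_of Sum.inr_injective hFr
    apply k1.congr
    intro x hx
    obtain ⟨y, hy, rfl⟩ := List.mem_map.1 hx
    rw [hf, Perm.mul_apply, swap_apply_of_ne_of_ne]
    · simp
    · intro hh; rw [Sum.inr_injective hh] at hy; exact hdis b hy (by simp)

/-- Rotation of a bubble with `m + 1` edges. -/
def bubF (m : ℕ) : Perm (Fin (m + 1) × Bool) where
  toFun p := if p.2 then (p.1 + 1, true) else (p.1 - 1, false)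
  invFun p := if p.2 then (p.1 - 1, true) else (p.1 + 1, false)
  left_inv := by rintro ⟨i, _ | _⟩ <;> simp
  right_inv := by rintro ⟨i, _ | _⟩ <;> simp

def bubE (m : ℕ) : Perm (Fin (m + 1) × Bool) where
  toFun p := (p.1, !p.2)
  invFun p := (p.1, !p.2)
  left_inv := by rintro ⟨i, _ | _⟩ <;> simp
  right_inv := by rintro ⟨i, _ | _⟩ <;> simp

lemma finRange_cyc {m : ℕ} {E : Type} [Finite E] {τ : Perm E} {g : Fin (m + 1) → E}
    (hg : Function.Injective g) (hc : ∀ x, τ (g x) = g (x + 1)) :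
    Cyc τ ((List.finRange (m + 1)).map g) := by
  refine ⟨(List.nodup_finRange _).map hg, ?_, ?_⟩
  · rw [List.isChain_map, List.isChain_iff_getElem]
    intro i hi
    rw [hc]
    congr 1
    ext
    simp only [List.length_finRange] at hi
    simp only [List.getElem_finRange, Fin.val_add_one, Fin.cast_mk]
    rw [if_neg]
    intro hh
    have := congrArg Fin.val hh
    simp at this
    omega
  · intro x hx y hy
    rw [List.getLast?_map, Option.mem_map] at hx
    rw [List.head?_map, Option.mem_map] at hy
    obtain ⟨x, hx, rfl⟩ := hx
    obtain ⟨y, hy, rfl⟩ := hy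
    have hx' : x = Fin.last m := by
      rw [List.finRange_succ_last] at hx
      simpa using hx.symm
    have hy' : y = 0 := by
      rw [List.finRange_succ] at hy
      simpa using hy.symm
    rw [hc, hx', hy']
    simp

lemma nc_le_one {D : Type} [Finite D] {s : Setoid D} (o : D) (h : ∀ x, s x o) : nc s ≤ 1 := by
  unfold nc
  rw [Finite.card_le_one_iff_subsingleton]
  constructor
  intro p q
  induction p using Quotient.inductionOn with
  | h a =>
    induction q using Quotient.inductionOn with
    | h b => exact Quotient.sound (Setoid.trans' _ (h a) (Setoid.symm' _ (h b)))

lemma z_ge {D T : Type} [Finite D] {σ : Perm D} {g : D → T} (hs : Function.Surjective g)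
    (h : ∀ x, g (σ x) = g x) : Nat.card T ≤ z σ := by
  apply Nat.card_le_card_of_surjective (Quotient.lift g (fun a b hab => cs_inv h hab))
  intro t
  obtain ⟨x, rfl⟩ := hs t
  exact ⟨Quotient.mk _ x, rfl⟩

lemma bubble_planar (m : ℕ) : Planar (bubE m) (bubF m) := by
  unfold Planar
  have h1 : Nat.card (Fin (m + 1)) ≤ z (bubE m) :=
    z_ge (g := Prod.fst) (fun i => ⟨(i, true), rfl⟩) (fun x => rfl)
  have h2 : Nat.card Bool ≤ z (bubF m) :=
    z_ge (g := Prod.snd) (fun i => ⟨(0, i), rfl⟩) (by rintro ⟨i, _ | _⟩ <;> rfl)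
  have h3 : Nat.card (Fin (m + 1)) ≤ z (bubE m * bubF m) := by
    refine z_ge (g := fun p => if p.2 then p.1 else p.1 - 1) (fun i => ⟨(i, true), rfl⟩) ?_
    rintro ⟨i, _ | _⟩ <;> simp [bubE, bubF]
  have h4 : nc (cm (bubE m) (bubF m)) ≤ 1 := by
    have k1 : ∀ i : Fin (m + 1), cm (bubE m) (bubF m) (i, true) (0, true) := by
      intro i
      induction i using Fin.induction with
      | zero => exact Setoid.refl' _ _
      | succ i ih =>
        have := cm_b (bubE m) (bubF m) (i.castSucc, true)
        have h5 : bubF m (i.castSucc, true) = (i.succ, true) := by simp [bubF]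
        rw [h5] at this
        exact Setoid.trans' _ this ih
    apply nc_le_one (0, true)
    rintro ⟨i, _ | _⟩
    · exact Setoid.trans' _ (cm_a (bubE m) (bubF m) (i, true)) (k1 i)
    · exact k1 i
  have h5 : Nat.card (Fin (m + 1) × Bool) = 2 * (m + 1) := by
    simp [mul_comm]
  simp only [Nat.card_eq_fintype_card, Fintype.card_fin, Fintype.card_bool] at h1 h2 h3
  rw [h5]
  omega

lemma bubble {w : List (X × Bool)} (hw : w ≠ []) :
    ∃ (D : Type) (_ : Finite D) (e f : Perm D) (ℓ : D → X × Bool) (l l' : List D),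
      Base e f ℓ ∧ Cyc f l ∧ Cyc f l' ∧ l.map ℓ = w ∧ l'.map ℓ = wordInv w ∧
      (∀ d, e d ≠ d) ∧ (∀ d, d ∈ l ∨ d ∈ l') ∧ (∀ d ∈ l, d ∉ l') := by
  obtain ⟨m, g, rfl⟩ : ∃ (m : ℕ) (g : Fin (m + 1) → X × Bool), w = List.ofFn g := by
    cases w with
    | nil => exact absurd rfl hw
    | cons a t => exact ⟨t.length, (a :: t).get, (List.ofFn_get (a :: t)).symm⟩
  have i1 : Function.Injective (fun i : Fin (m + 1) => (i, true)) := fun a b h => by simpa using h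
  have i2 : Function.Injective (fun i : Fin (m + 1) => (i, false)) := fun a b h => by simpa using h
  refine ⟨Fin (m + 1) × Bool, inferInstance, bubE m, bubF m,
    fun p => if p.2 then g p.1 else ix (g p.1), (List.finRange (m + 1)).map (fun i => (i, true)),
    ((List.finRange (m + 1)).map (fun i => (i, false))).reverse, ⟨?_, ?_, ?_, bubble_planar m⟩,
    finRange_cyc i1 (fun x => rfl), ?_, ?_, ?_, ?_, ?_, ?_⟩
  · intro d; simp [bubE]
  · rintro ⟨i, b⟩ hd
    simp [bubE] at hd
  · rintro ⟨i, _ | _⟩ hd <;> simp [bubE]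
  · have : Cyc (bubF m)⁻¹ ((List.finRange (m + 1)).map (fun i => (i, false))) :=
      finRange_cyc i2 (fun x => rfl)
    simpa using this.inv
  · rw [List.map_map, List.ofFn_eq_map]
    rfl
  · rw [List.map_reverse, List.map_map, wordInv, List.ofFn_eq_map, List.map_map]
    rfl
  · rintro ⟨i, b⟩ hd
    simp [bubE] at hd
  · rintro ⟨i, _ | _⟩ <;> simp
  · rintro ⟨i, _ | _⟩ <;> simp

end join

section vk
variable {X : Type*} {R : Set (List (X × Bool))}

/-- `w` bounds a nonempty spherical picture over `R`. -/
def Bd (R : Set (List (X × Bool))) (w : List (X × Bool)) : Prop :=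
  ∃ (D : Type) (_ : Finite D) (e f : Perm D) (ℓ : D → X × Bool) (l : List D),
    Base e f ℓ ∧ l ≠ [] ∧ Cyc f l ∧ (∀ d ∈ l, e d ≠ d) ∧ l.map ℓ = w ∧
    ∀ d, e d ≠ d → d ∈ l ∨ ∃ l', d ∈ l' ∧ Cyc f l' ∧ l'.map ℓ ∈ R

lemma Bd.rot {u v : List (X × Bool)} (h : Bd R u) (hr : u ~r v) : Bd R v := by
  obtain ⟨D, hD, e, f, ℓ, l, hB, hne, hc, hact, rfl, hf⟩ := h
  obtain ⟨n, rfl⟩ := hr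
  have hr : l ~r l.rotate n := ⟨n, rfl⟩
  refine ⟨D, hD, e, f, ℓ, l.rotate n, hB, ?_, hc.isRotated hr, ?_, List.map_rotate _ _ _, ?_⟩
  · rwa [Ne, List.rotate_eq_nil_iff]
  · intro d hd; exact hact d (hr.mem_iff.2 hd)
  · intro d hd
    rcases hf d hd with h | h
    · exact Or.inl (hr.mem_iff.1 h)
    · exact Or.inr h

lemma Bd.append {u v : List (X × Bool)} (h1 : Bd R u) (h2 : Bd R v) : Bd R (u ++ v) := by
  obtain ⟨D1, hD1, e1, f1, ℓ1, l1, hB1, hne1, hc1, hact1, rfl, hf1⟩ := h1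
  obtain ⟨D2, hD2, e2, f2, ℓ2, l2, hB2, hne2, hc2, hact2, rfl, hf2⟩ := h2
  obtain ⟨f, hB, hc, hl, hr⟩ := join hB1 hB2 hc1 hc2 hne1 hne2 hact1 hact2
  refine ⟨D1 ⊕ D2, inferInstance, _, f, _, _, hB, ?_, hc, ?_, ?_, ?_⟩
  · simp [hne1]
  · intro d hd
    rcases List.mem_append.1 hd with hd | hd
    · obtain ⟨x, hx, rfl⟩ := List.mem_map.1 hd
      intro hh
      exact hact1 x hx (Sum.inl_injective hh)
    · obtain ⟨x, hx, rfl⟩ := List.mem_map.1 hd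
      intro hh
      exact hact2 x hx (Sum.inr_injective hh)
  · simp [Function.comp_def]
  · intro d hd
    cases d with
    | inl x =>
      by_cases hx : x ∈ l1
      · left; simp [hx]
      rcases hf1 x (fun hh => hd (congrArg Sum.inl hh)) with h | ⟨l', h3, h4, h5⟩
      · exact absurd h hx
      · right
        refine ⟨l'.map Sum.inl, List.mem_map_of_mem h3, hl l' h4 ?_, ?_⟩
        · intro y hy hy1
          exact hx ((hc1.mem_of_cs (h4.cs hy h3)).1 hy1)
        · simpa [Function.comp_def] using h5
    | inr x =>
      by_cases hx : x ∈ l2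
      · left; simp [hx]
      rcases hf2 x (fun hh => hd (congrArg Sum.inr hh)) with h | ⟨l', h3, h4, h5⟩
      · exact absurd h hx
      · right
        refine ⟨l'.map Sum.inr, List.mem_map_of_mem h3, hr l' h4 ?_, ?_⟩
        · intro y hy hy1
          exact hx ((hc2.mem_of_cs (h4.cs hy h3)).1 hy1)
        · simpa [Function.comp_def] using h5

lemma Bd.of_mem (hRne : ∀ w ∈ R, w ≠ []) (hRsym : Symmetrized R) {w : List (X × Bool)}
    (hw : w ∈ R) : Bd R w := by
  obtain ⟨D, hD, e, f, ℓ, l, l', hB, hc, hc', h1, h2, h3, h4, h5⟩ := bubble (hRne w hw)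
  refine ⟨D, hD, e, f, ℓ, l, hB, ?_, hc, fun d _ => h3 d, h1, ?_⟩
  · rintro rfl
    exact hRne w hw h1.symm
  · intro d _
    rcases h4 d with h | h
    · exact Or.inl h
    · exact Or.inr ⟨l', h, hc', h2 ▸ hRsym.2 w hw⟩

lemma Bd.pair (x : X × Bool) : Bd R [x, ix x] := by
  have hcyc : Cyc (swap true false) [true, false] := by
    refine ⟨by simp, by simp, ?_⟩
    intro a ha b hb
    have h1 : false = a := by simpa using ha
    have h2 : true = b := by simpa using hb
    subst h1; subst h2; simp
  refine ⟨Bool, inferInstance, swap true false, swap true false,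
    fun b => if b then x else ix x, [true, false], ⟨?_, ?_, ?_, ?_⟩, by simp, hcyc, ?_, by simp, ?_⟩
  · intro d; simp
  · intro d h; exact h
  · intro d _; cases d <;> simp
  · unfold Planar
    have h1 : 1 ≤ z (swap true false) := by
      have := z_ge (σ := swap true false) (g := fun _ => ()) (fun _ => ⟨true, rfl⟩) (fun x => rfl)
      simpa using this
    have h2 : 2 ≤ z (swap true false * swap true false) := by
      have := z_ge (σ := swap true false * swap true false) (g := id) (fun b => ⟨b, rfl⟩)
        (fun x => by simp)
      simpa using this
    have h3 : nc (cm (swap true false) (swap true false)) ≤ 1 := by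
      apply nc_le_one true
      intro b
      cases b
      · exact cm_a (swap true false) (swap true false) true
      · exact Setoid.refl' _ _
    have h4 : Nat.card Bool = 2 := by simp
    omega
  · intro d _; cases d <;> simp
  · intro d _; left; cases d <;> simp

lemma Bd.conj {w : List (X × Bool)} (h : Bd R w) (x : X × Bool) : Bd R (x :: w ++ [ix x]) := by
  have h1 := (Bd.pair (R := R) (ix x)).append h
  rw [ix_ix] at h1
  apply h1.rot
  have := List.isRotated_append (l := [ix x]) (l' := x :: w)
  simpa using this

lemma Bd.conj_word {w : List (X × Bool)} (h : Bd R w) (u : List (X × Bool)) :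
    Bd R (u ++ w ++ wordInv u) := by
  induction u with
  | nil => simpa [wordInv] using h
  | cons x u ih =>
    have := ih.conj x
    rw [wordInv_cons]
    simpa using this

lemma exists_Bd (hRne : ∀ w ∈ R, w ≠ []) (hRsym : Symmetrized R) {g : FreeGroup X}
    (hg : g ∈ Subgroup.normalClosure (FreeGroup.mk '' R : Set (FreeGroup X))) :
    ∃ w, (w = [] ∨ Bd R w) ∧ FreeGroup.mk w = g := by
  have hconj : ∀ r ∈ R, ∀ c : FreeGroup X, ∃ w, (w = [] ∨ Bd R w) ∧
      FreeGroup.mk w = c * FreeGroup.mk r * c⁻¹ := by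
    intro r hr c
    obtain ⟨u, rfl⟩ : ∃ u, FreeGroup.mk u = c := Quot.exists_rep c
    refine ⟨_, Or.inr ((Bd.of_mem hRne hRsym hr).conj_word u), ?_⟩
    rw [mk_append, mk_append, mk_wordInv]
  have hmul : ∀ a b : FreeGroup X, (∃ w, (w = [] ∨ Bd R w) ∧ FreeGroup.mk w = a) →
      (∃ w, (w = [] ∨ Bd R w) ∧ FreeGroup.mk w = b) →
      ∃ w, (w = [] ∨ Bd R w) ∧ FreeGroup.mk w = a * b := by
    rintro _ _ ⟨u, hu, rfl⟩ ⟨v, hv, rfl⟩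
    refine ⟨u ++ v, ?_, mk_append u v⟩
    rcases hu with rfl | hu
    · simpa using hv
    rcases hv with rfl | hv
    · right; simpa using hu
    · exact Or.inr (hu.append hv)
  unfold Subgroup.normalClosure at hg
  rw [← Subgroup.mem_toSubmonoid, Subgroup.closure_toSubmonoid] at hg
  induction hg using Submonoid.closure_induction with
  | mem x hx =>
    rcases hx with hx | hx
    · obtain ⟨y, ⟨r, hr, rfl⟩, hy⟩ := Group.mem_conjugatesOfSet_iff.1 hx
      obtain ⟨c, rfl⟩ := isConj_iff.1 hy
      exact hconj r hr c
    · obtain ⟨y, ⟨r, hr, rfl⟩, hy⟩ := Group.mem_conjugatesOfSet_iff.1 (Set.mem_inv.1 hx)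
      obtain ⟨c, hc⟩ := isConj_iff.1 hy
      obtain ⟨w, hw, hw2⟩ := hconj (wordInv r) (hRsym.2 r hr) c
      refine ⟨w, hw, ?_⟩
      rw [hw2, mk_wordInv, ← inv_inj, ← hc]
      group
  | one => exact ⟨[], Or.inl rfl, rfl⟩
  | mul a b _ _ ha hb => exact hmul a b ha hb

lemma no_word (hRne : ∀ w ∈ R, w ≠ []) (hRred : ∀ w ∈ R, WordReduced w)
    (hRsym : Symmetrized R) (hC6 : SmallCancellationC 6 R) {A : Set X}
    (hno : ¬ ∃ Q S : List (X × Bool),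
      (∀ p ∈ S, p.1 ∈ A) ∧ Q ++ S ∈ R ∧
        ∃ L : List (List (X × Bool)),
          (∀ u ∈ L, IsPiece R u) ∧ L.length ≤ 3 ∧ L.flatten = Q)
    {W : List (X × Bool)} (hW : ∀ p ∈ W, p.1 ∈ A)
    (hmem : FreeGroup.mk W ∈ Subgroup.normalClosure (FreeGroup.mk '' R : Set (FreeGroup X))) :
    FreeGroup.mk W = 1 := by
  by_contra hne
  obtain ⟨w, hw, hwW⟩ := exists_Bd hRne hRsym hmem
  rcases hw with rfl | hw
  · exact hne hwW.symm
  have hWne : W ≠ [] := by rintro rfl; exact hne rfl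
  obtain ⟨D1, hD1, e1, f1, ℓ1, lo, l1, hB1, hclo, hc1, hmlo, hml1, hact1, hor, hdis⟩ := bubble hWne
  obtain ⟨D2, hD2, e2, f2, ℓ2, l2, hB2, hne2, hc2, hact2, hml2, hf2⟩ := hw
  have hne1 : l1 ≠ [] := by
    rintro rfl
    have := congrArg List.length hml1
    rw [wordInv_length] at this
    exact hWne (List.length_eq_zero_iff.1 (by simpa using this.symm))
  obtain ⟨f, hB, hc, hl, hr⟩ := join hB1 hB2 hc1 hc2 hne1 hne2 (fun d _ => hact1 d) hact2
  have hloeq : (lo.map Sum.inl).map (Sum.elim ℓ1 ℓ2) = W := by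
    rw [← hmlo]; simp [Function.comp_def]
  have hSt : St R A (Sum.elim ℓ1 ℓ2) (Perm.sumCongr e1 e2) f (lo.map Sum.inl) := by
    refine ⟨hB, hl lo hclo hdis, ?_, ?_, ?_, ?_⟩
    · intro d hd hh
      obtain ⟨x, hx, rfl⟩ := List.mem_map.1 hd
      exact hact1 x (Sum.inl_injective hh)
    · intro d hd
      apply hW
      rw [← hloeq]
      exact List.mem_map_of_mem hd
    · rw [hloeq]; exact hne
    · have htriv : FreeGroup.mk ((l1.map Sum.inl ++ l2.map Sum.inr).map (Sum.elim ℓ1 ℓ2)) = 1 := by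
        have h1 : (l1.map Sum.inl ++ l2.map Sum.inr).map (Sum.elim ℓ1 ℓ2) = wordInv W ++ w := by
          rw [← hml1, ← hml2]; simp [Function.comp_def]
        rw [h1, mk_append, mk_wordInv, hwW, inv_mul_cancel]
      intro d hd
      cases d with
      | inl x =>
        rcases hor x with h | h
        · left; exact List.mem_map_of_mem h
        · right; exact ⟨_, by simp [h], hc, Or.inr htriv⟩
      | inr x =>
        right
        by_cases hx : x ∈ l2
        · exact ⟨_, by simp [hx], hc, Or.inr htriv⟩
        rcases hf2 x (fun hh => hd (congrArg Sum.inr hh)) with h | ⟨l', h3, h4, h5⟩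
        · exact absurd h hx
        · refine ⟨l'.map Sum.inr, List.mem_map_of_mem h3, hr l' h4 ?_, Or.inl ?_⟩
          · intro y hy hy1
            exact hx ((hc2.mem_of_cs (h4.cs hy h3)).1 hy1)
          · simpa [Function.comp_def] using h5
  obtain ⟨e0, f0, lo0, h0⟩ := exists_min hSt
  exact h0.false hRred hRsym hC6 hno

end vk

end SCF

/-- **Theorem `thm:small` (`C(6)` case).**  Let `R` be a symmetrized set of nonempty
reduced, cyclically reduced words satisfying `C(6)`, and let `A ⊆ X`.  If there do not
exist words `Q` and `S` such that `S` uses only letters of `A`, the concatenation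
`Q ++ S` lies in `R`, and `Q` is a concatenation of at most `3` pieces, then the
natural homomorphism from the free group on `A` to `G = ⟨X ∣ R⟩` is injective. -/
theorem small_cancellation_freeness {X : Type*}
    (R : Set (List (X × Bool)))
    (hRne : ∀ w ∈ R, w ≠ []) (hRred : ∀ w ∈ R, WordReduced w)
    (hRcyc : ∀ w ∈ R, WordCyclicallyReduced w)
    (hRsym : Symmetrized R)
    (hC6 : SmallCancellationC 6 R)
    (A : Set X)
    (hno : ¬ ∃ Q S : List (X × Bool),
      (∀ p ∈ S, p.1 ∈ A) ∧ Q ++ S ∈ R ∧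
        ∃ L : List (List (X × Bool)),
          (∀ u ∈ L, IsPiece R u) ∧ L.length ≤ 3 ∧ L.flatten = Q) :
    Function.Injective
      (FreeGroup.lift (fun a : A =>
        (PresentedGroup.of (a : X) :
          PresentedGroup (FreeGroup.mk '' R : Set (FreeGroup X)))) :
        FreeGroup A →* PresentedGroup (FreeGroup.mk '' R : Set (FreeGroup X))) := by
  rw [injective_iff_map_eq_one]
  intro g hg
  obtain ⟨u, rfl⟩ : ∃ u, FreeGroup.mk u = g := Quot.exists_rep g
  set v : A → X := Subtype.val with hv
  have hinj : Function.Injective (FreeGroup.map v) :=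
    FreeGroup.map_injective Subtype.val_injective
  have hmap : FreeGroup.map v (FreeGroup.mk u) = FreeGroup.mk (u.map fun p => (v p.1, p.2)) :=
    FreeGroup.map.mk
  have hcomp : (FreeGroup.lift (fun a : A =>
        (PresentedGroup.of (a : X) :
          PresentedGroup (FreeGroup.mk '' R : Set (FreeGroup X)))) :
        FreeGroup A →* PresentedGroup (FreeGroup.mk '' R : Set (FreeGroup X)))
      = (PresentedGroup.mk (FreeGroup.mk '' R)).comp (FreeGroup.map v) := by
    ext a
    simp [PresentedGroup.of, hv]
  rw [hcomp, MonoidHom.comp_apply, hmap] at hg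
  have hmem : FreeGroup.mk (u.map fun p => (v p.1, p.2)) ∈
      Subgroup.normalClosure (FreeGroup.mk '' R : Set (FreeGroup X)) :=
    (QuotientGroup.eq_one_iff _).1 hg
  have h1 := SCF.no_word hRne hRred hRsym hC6 hno (by
    intro p hp
    obtain ⟨q, _, rfl⟩ := List.mem_map.1 hp
    exact q.1.2) hmem
  apply hinj
  rw [hmap, h1, map_one]
end
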